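/- arXiv:2005.10032 — 3 statements merged into one kernel-verified Lean document; each statement's English description precedes it below -/
import Mathlib

section
/- Let p ∈ (1,∞) and n ≥ 3 be an integer, and let ν be a positive integer. If u : 𝐁_{ℓ₂ⁿ} → 𝐁_{ℓ_p^ν} is a harmonic function (each component is harmonic on the real Euclidean unit ball), then for every x ∈ 𝐁_{ℓ₂ⁿ}, |∇‖u(x)‖_p| ≤ (c_n/(1−‖x‖₂²)) · ∫_{−1}^{1} |t − ((n−2)/n)‖x‖₂| (1−t²)^{(n−3)/2} / (1 − 2t‖x‖₂ + ‖x‖₂²)^{(n−2)/2} dt, where c_n = 2Γ((n+2)/2)/(Γ(1/2)Γ((n−1)/2)). -/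
open scoped BigOperators Topology
open Filter

/-- The `p`-norm `(∑ |x j|^p)^(1/p)` on `ℝ^ν` for a real exponent `p`. -/
noncomputable def pnormR {ν : ℕ} (p : ℝ) (x : Fin ν → ℝ) : ℝ :=
  (∑ j, |x j| ^ p) ^ (1 / p)

/-- `|∇‖u(x)‖_p| = limsup_{y → x} |‖u(y)‖_p - ‖u(x)‖_p| / ‖y - x‖₂`. -/
noncomputable def gradPnormR {n ν : ℕ} (p : ℝ)
    (u : EuclideanSpace ℝ (Fin n) → (Fin ν → ℝ)) (x : EuclideanSpace ℝ (Fin n)) : ℝ :=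
  Filter.limsup (fun y => |pnormR p (u y) - pnormR p (u x)| / ‖y - x‖) (𝓝[≠] x)

/-- A real-valued function is harmonic on the Euclidean unit ball:
it is `C²` there and its Laplacian vanishes. -/
def HarmonicOnUnitBall {n : ℕ} (v : EuclideanSpace ℝ (Fin n) → ℝ) : Prop :=
  ContDiffOn ℝ 2 v (Metric.ball 0 1) ∧
  ∀ x ∈ Metric.ball (0 : EuclideanSpace ℝ (Fin n)) 1,
    ∑ i, fderiv ℝ (fun y => fderiv ℝ v y (EuclideanSpace.single i 1)) x
      (EuclideanSpace.single i 1) = 0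

open MeasureTheory

noncomputable def lapl {n : ℕ} (v : EuclideanSpace ℝ (Fin n) → ℝ) (x : EuclideanSpace ℝ (Fin n)) : ℝ :=
  ∑ i, fderiv ℝ (fun y => fderiv ℝ v y (EuclideanSpace.single i 1)) x
      (EuclideanSpace.single i 1)

lemma clm_eq_sum {n : ℕ} (L : EuclideanSpace ℝ (Fin n) →L[ℝ] ℝ) (y : EuclideanSpace ℝ (Fin n)) :
    L y = ∑ i, y i * L (EuclideanSpace.single i 1) := by
  have h := (EuclideanSpace.basisFun (Fin n) ℝ).sum_repr y
  have h2 := congrArg L h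
  rw [← h2, map_sum]
  apply Finset.sum_congr rfl
  intro i _
  rw [map_smul]
  simp

lemma flux_zero {n : ℕ} (g Ψ χ : EuclideanSpace ℝ (Fin n) → ℝ) (z : EuclideanSpace ℝ (Fin n))
    (r0 : ℝ) (hg : ContDiff ℝ 2 g)
    (hlap : ∀ y, ‖y‖ < r0 → lapl g (z + y) = 0)
    (hΨ : ContDiff ℝ 1 Ψ) (hΨc : HasCompactSupport Ψ) (hΨs : ∀ y, r0 ≤ ‖y‖ → Ψ y = 0)
    (hgrad : ∀ y w, fderiv ℝ Ψ y w = χ y * inner ℝ y w) (τ : ℝ) (hτ0 : 0 ≤ τ) (hτ : τ ≤ 1) :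
    ∫ y, fderiv ℝ g (z + τ • y) y * χ y = 0 := by
  have hdg : ContDiff ℝ 1 (fderiv ℝ g) := hg.fderiv_right (by norm_num)
  have haff : ContDiff ℝ 1 (fun y : EuclideanSpace ℝ (Fin n) => z + τ • y) := by fun_prop
  have hA : ∀ i : Fin n, ContDiff ℝ 1 (fun y => fderiv ℝ g (z + τ • y) (EuclideanSpace.single i 1)) := by
    intro i
    exact (hdg.comp haff).clm_apply contDiff_const
  have hdΨ : Continuous (fderiv ℝ Ψ) := hΨ.continuous_fderiv (by norm_num)
  have hdΨc : HasCompactSupport (fderiv ℝ Ψ) := hΨc.fderiv (𝕜 := ℝ)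
  have hint1 : ∀ i : Fin n, Integrable (fun y => fderiv ℝ g (z + τ • y) (EuclideanSpace.single i 1) *
      fderiv ℝ Ψ y (EuclideanSpace.single i 1)) := by
    intro i
    apply Continuous.integrable_of_hasCompactSupport
    · exact (hA i).continuous.mul (hdΨ.clm_apply continuous_const)
    · apply HasCompactSupport.mul_left
      exact hdΨc.comp_left (g := fun L : EuclideanSpace ℝ (Fin n) →L[ℝ] ℝ => L (EuclideanSpace.single i 1)) (by simp)
  have key : ∀ y, fderiv ℝ g (z + τ • y) y * χ y = ∑ i, fderiv ℝ g (z + τ • y) (EuclideanSpace.single i 1) *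
      fderiv ℝ Ψ y (EuclideanSpace.single i 1) := by
    intro y
    simp only [hgrad]
    rw [clm_eq_sum (fderiv ℝ g (z + τ • y)) y, Finset.sum_mul]
    apply Finset.sum_congr rfl
    intro i _
    rw [EuclideanSpace.inner_single_right]
    simp
    ring
  simp_rw [key]
  rw [integral_finsetSum _ (fun i _ => hint1 i)]
  have hibp : ∀ i : Fin n, ∫ y, fderiv ℝ g (z + τ • y) (EuclideanSpace.single i 1) *
      fderiv ℝ Ψ y (EuclideanSpace.single i 1) = - ∫ y, (τ * fderiv ℝ (fun y => fderiv ℝ g y (EuclideanSpace.single i 1)) (z + τ • y)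
      (EuclideanSpace.single i 1)) * Ψ y := by
    intro i
    have hder : ∀ y, fderiv ℝ (fun y => fderiv ℝ g (z + τ • y) (EuclideanSpace.single i 1)) y (EuclideanSpace.single i 1)
       = τ * fderiv ℝ (fun y => fderiv ℝ g y (EuclideanSpace.single i 1)) (z + τ • y)
      (EuclideanSpace.single i 1) := by
      intro y
      have h1 : HasFDerivAt (fun y => fderiv ℝ g y (EuclideanSpace.single i 1)) (fderiv ℝ (fun y => fderiv ℝ g y (EuclideanSpace.single i 1)) (z + τ • y)) (z + τ • y) := by
        apply DifferentiableAt.hasFDerivAt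
        exact ((hdg.clm_apply contDiff_const).differentiable (by norm_num)) _
      have h2 : HasFDerivAt (fun y : EuclideanSpace ℝ (Fin n) => z + τ • y) (τ • ContinuousLinearMap.id ℝ _) y :=
        ((hasFDerivAt_id y).const_smul τ).const_add z
      have h3 := (h1.comp y h2).fderiv
      simp only [Function.comp_def] at h3
      rw [h3]
      simp
    simp_rw [← hder]
    apply integral_mul_fderiv_eq_neg_fderiv_mul_of_integrable
    · apply Continuous.integrable_of_hasCompactSupport
      · exact (((hA i).continuous_fderiv (by norm_num)).clm_apply continuous_const).mul hΨ.continuous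
      · exact hΨc.mul_left
    · exact hint1 i
    · apply Continuous.integrable_of_hasCompactSupport
      · exact (hA i).continuous.mul hΨ.continuous
      · exact hΨc.mul_left
    · intro x _
      exact (hA i).differentiable (by norm_num) x
    · intro x _
      exact hΨ.differentiable (by norm_num) x
  simp_rw [hibp]
  rw [Finset.sum_neg_distrib, ← integral_finsetSum]
  · rw [neg_eq_zero]
    apply integral_eq_zero_of_ae
    apply Filter.Eventually.of_forall
    intro y
    simp only [Pi.zero_apply]
    rw [← Finset.sum_mul, ← Finset.mul_sum]
    by_cases hy : ‖y‖ < r0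
    · have : lapl g (z + τ • y) = 0 := by
        apply hlap
        rw [norm_smul, Real.norm_of_nonneg hτ0]
        nlinarith [norm_nonneg y]
      unfold lapl at this
      rw [this]; simp
    · rw [hΨs y (not_lt.mp hy)]; simp
  · intro i _
    apply Continuous.integrable_of_hasCompactSupport
    · refine (continuous_const.mul ?_).mul hΨ.continuous
      have : ContDiff ℝ 1 (fun y => fderiv ℝ g y (EuclideanSpace.single i 1)) := hdg.clm_apply contDiff_const
      exact ((this.continuous_fderiv (by norm_num)).comp haff.continuous).clm_apply continuous_const
    · exact hΨc.mul_left

lemma mean_value {n : ℕ} (g Ψ χ : EuclideanSpace ℝ (Fin n) → ℝ) (z : EuclideanSpace ℝ (Fin n))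
    (r0 : ℝ) (hg : ContDiff ℝ 2 g)
    (hlap : ∀ y, ‖y‖ < r0 → lapl g (z + y) = 0)
    (hΨ : ContDiff ℝ 1 Ψ) (hΨc : HasCompactSupport Ψ) (hΨs : ∀ y, r0 ≤ ‖y‖ → Ψ y = 0)
    (hgrad : ∀ y w, fderiv ℝ Ψ y w = χ y * inner ℝ y w)
    (hχ : Continuous χ) (hχc : HasCompactSupport χ) :
    ∫ y, g (z + y) * χ y = g z * ∫ y, χ y := by
  have hdg : Continuous (fderiv ℝ g) := hg.continuous_fderiv (by norm_num)
  have hcont : ∀ τ : ℝ, Continuous (fun y => g (z + τ • y) * χ y) := by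
    intro τ
    have := hg.continuous
    fun_prop
  have hcont' : Continuous (fun q : ℝ × EuclideanSpace ℝ (Fin n) => fderiv ℝ g (z + q.1 • q.2) q.2 * χ q.2) := by
    refine Continuous.mul ?_ (hχ.comp continuous_snd)
    exact (hdg.comp (by fun_prop)).clm_apply continuous_snd
  have hder : ∀ τ0 ∈ Set.Icc (0:ℝ) 1, HasDerivAt (fun τ : ℝ => ∫ y, g (z + τ • y) * χ y) 0 τ0 := by
    intro τ0 hτ0
    obtain ⟨C, hC⟩ := ((isCompact_closedBall τ0 1).prod hχc).exists_bound_of_continuousOn hcont'.continuousOn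
    rw [← flux_zero g Ψ χ z r0 hg hlap hΨ hΨc hΨs hgrad τ0 hτ0.1 hτ0.2]
    refine (hasDerivAt_integral_of_dominated_loc_of_deriv_le (F := fun (τ : ℝ) y => g (z + τ • y) * χ y)
      (F' := fun (τ : ℝ) y => fderiv ℝ g (z + τ • y) y * χ y) (bound := (tsupport χ).indicator (fun _ => C))
      (Metric.ball_mem_nhds τ0 one_pos) ?_ ?_ ?_ ?_ ?_ ?_).2
    · exact Filter.Eventually.of_forall (fun τ => (hcont τ).aestronglyMeasurable)
    · exact (hcont τ0).integrable_of_hasCompactSupport hχc.mul_left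
    · exact (hcont'.comp (by fun_prop : Continuous (fun y : EuclideanSpace ℝ (Fin n) => (τ0, y)))).aestronglyMeasurable
    · apply Filter.Eventually.of_forall
      intro y τ hτ
      by_cases hy : y ∈ tsupport χ
      · rw [Set.indicator_of_mem hy]
        exact hC (τ, y) ⟨Metric.ball_subset_closedBall hτ, hy⟩
      · rw [Set.indicator_of_notMem hy, image_eq_zero_of_notMem_tsupport hy]; simp
    · rw [integrable_indicator_iff (isClosed_tsupport χ).measurableSet]
      exact integrableOn_const hχc.measure_lt_top.ne
    · apply Filter.Eventually.of_forall
      intro y τ _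
      have h1 : HasFDerivAt g (fderiv ℝ g (z + τ • y)) (z + τ • y) :=
        (hg.differentiable (by norm_num) _).hasFDerivAt
      have h2 : HasDerivAt (fun τ : ℝ => z + τ • y) y τ := by
        simpa using ((hasDerivAt_id τ).smul_const y).const_add z
      exact (h1.comp_hasDerivAt τ h2).mul_const _
  have hconst := constant_of_has_deriv_right_zero (f := fun τ : ℝ => ∫ y, g (z + τ • y) * χ y) (a := 0) (b := 1)
    (fun τ hτ => (hder τ hτ).continuousAt.continuousWithinAt)
    (fun τ hτ => (hder τ ⟨hτ.1, hτ.2.le⟩).hasDerivWithinAt) 1 (by simp)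
  simp only [one_smul, zero_smul, add_zero] at hconst
  rw [hconst, integral_const_mul]

noncomputable def radPrim {n : ℕ} (h : ℝ → ℝ) (β : ℝ) (y : EuclideanSpace ℝ (Fin n)) : ℝ :=
  ∫ s in (‖y‖ ^ 2)..β, h s

lemma radPrim_hasFDerivAt {n : ℕ} (h : ℝ → ℝ) (hh : Continuous h) (β : ℝ) (y : EuclideanSpace ℝ (Fin n)) :
    HasFDerivAt (radPrim (n := n) h β) ((-2 * h (‖y‖ ^ 2)) • innerSL ℝ y) y := by
  have h1 : HasDerivAt (fun t => ∫ s in t..β, h s) (-h (‖y‖ ^ 2)) (‖y‖ ^ 2) :=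
    intervalIntegral.integral_hasDerivAt_left (hh.intervalIntegrable _ _)
      (hh.stronglyMeasurableAtFilter _ _) hh.continuousAt
  have h2 : HasFDerivAt (fun y : EuclideanSpace ℝ (Fin n) => ‖y‖ ^ 2) (2 • innerSL ℝ y) y :=
    (hasStrictFDerivAt_norm_sq y).hasFDerivAt
  have h3 := h1.comp_hasFDerivAt y h2
  have he : (-h (‖y‖ ^ 2)) • (2 • innerSL ℝ y) = (-2 * h (‖y‖ ^ 2)) • innerSL ℝ y := by
    ext w
    simp
    ring
  rw [he] at h3
  exact h3

lemma radPrim_fderiv {n : ℕ} (h : ℝ → ℝ) (hh : Continuous h) (β : ℝ) (y w : EuclideanSpace ℝ (Fin n)) :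
    fderiv ℝ (radPrim (n := n) h β) y w = (-2 * h (‖y‖ ^ 2)) * inner ℝ y w := by
  rw [(radPrim_hasFDerivAt h hh β y).fderiv]; simp

lemma radPrim_contDiff {n : ℕ} (h : ℝ → ℝ) (hh : Continuous h) (β : ℝ) :
    ContDiff ℝ 1 (radPrim (n := n) h β) := by
  rw [contDiff_one_iff_fderiv]
  refine ⟨fun y => (radPrim_hasFDerivAt h hh β y).differentiableAt, ?_⟩
  have : fderiv ℝ (radPrim (n := n) h β) = fun y => (-2 * h (‖y‖ ^ 2)) • innerSL ℝ y := by
    ext1 y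
    exact (radPrim_hasFDerivAt h hh β y).fderiv
  rw [this]
  have hc : Continuous (fun y : EuclideanSpace ℝ (Fin n) => -2 * h (‖y‖ ^ 2)) := by fun_prop
  exact hc.smul (innerSL ℝ (E := EuclideanSpace ℝ (Fin n))).continuous

lemma radPrim_zero {n : ℕ} (h : ℝ → ℝ) (β : ℝ) (hz : ∀ s, β ≤ s → h s = 0) (y : EuclideanSpace ℝ (Fin n))
    (hy : β ≤ ‖y‖ ^ 2) : radPrim h β y = 0 := by
  unfold radPrim
  apply intervalIntegral.integral_zero_ae
  apply Filter.Eventually.of_forall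
  intro s hs
  rw [Set.uIoc_of_ge hy] at hs
  exact hz s hs.1.le

lemma hcs_of_zero {n : ℕ} (f : EuclideanSpace ℝ (Fin n) → ℝ) (β : ℝ)
    (hf : ∀ y, β ≤ ‖y‖ ^ 2 → f y = 0) : HasCompactSupport f := by
  apply HasCompactSupport.intro (isCompact_closedBall (0 : EuclideanSpace ℝ (Fin n)) (Real.sqrt β))
  intro y hy
  apply hf
  simp only [Metric.mem_closedBall, dist_zero_right, not_le] at hy
  exact ((Real.sqrt_lt' (lt_of_le_of_lt (Real.sqrt_nonneg _) hy)).mp hy).le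

/-- mean value with radial weight -/
lemma mean_value_rad {n : ℕ} (g : EuclideanSpace ℝ (Fin n) → ℝ) (z : EuclideanSpace ℝ (Fin n))
    (r0 : ℝ) (hg : ContDiff ℝ 2 g)
    (hlap : ∀ y, ‖y‖ < r0 → lapl g (z + y) = 0) (h : ℝ → ℝ) (hh : Continuous h) (β : ℝ) 
    (hr0 : 0 < r0) (hβr : β ≤ r0 ^ 2)
    (hz : ∀ s, β ≤ s → h s = 0) :
    ∫ y, g (z + y) * h (‖y‖ ^ 2) = g z * ∫ y : EuclideanSpace ℝ (Fin n), h (‖y‖ ^ 2) := by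
  have hh' : Continuous (fun s => - (1/2) * h s) := by fun_prop
  have hz' : ∀ s, β ≤ s → - (1/2) * h s = 0 := by intro s hs; rw [hz s hs]; simp
  refine mean_value g (radPrim (fun s => - (1/2) * h s) β) (fun y => h (‖y‖ ^ 2)) z r0 hg hlap
    (radPrim_contDiff _ hh' β) (hcs_of_zero _ β (radPrim_zero _ β hz')) ?_ ?_ (by fun_prop)
    (hcs_of_zero _ β (fun y hy => hz _ hy))
  · intro y hy
    apply radPrim_zero _ β hz'
    nlinarith
  · intro y w
    rw [radPrim_fderiv _ hh']
    ring

lemma grad_formula_aux {n : ℕ} (g : EuclideanSpace ℝ (Fin n) → ℝ)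
    (hg : ContDiff ℝ 2 g) (r1 : ℝ) (hr1p : 0 < r1) (hlap : ∀ y, ‖y‖ < r1 → lapl g y = 0)
    (ϑ : ℝ → ℝ) (hϑ : Continuous ϑ) (β : ℝ) (hβ : β < r1 ^ 2)
    (hz : ∀ s, β ≤ s → ϑ s = 0) (ℓ : EuclideanSpace ℝ (Fin n)) :
    fderiv ℝ g 0 ℓ * ∫ y, radPrim (n := n) (fun s => n / 2 * ϑ s) β y =
      ∫ y, ϑ (‖y‖ ^ 2) * (n * inner ℝ y ℓ) * g y := by
  have hh' : Continuous (fun s => (n : ℝ) / 2 * ϑ s) := by fun_prop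
  have hz' : ∀ s, β ≤ s → (n : ℝ) / 2 * ϑ s = 0 := by intro s hs; rw [hz s hs]; simp
  set χ := radPrim (n := n) (fun s => n / 2 * ϑ s) β with hχdef
  have hχ1 : ContDiff ℝ 1 χ := radPrim_contDiff _ hh' β
  have hχc : HasCompactSupport χ := hcs_of_zero _ β (radPrim_zero _ β hz')
  obtain ⟨r0, hr0, hr1, hβr⟩ : ∃ r0 : ℝ, 0 < r0 ∧ r0 < r1 ∧ β ≤ r0 ^ 2 := by
    refine ⟨Real.sqrt (max β (r1 ^ 2 / 4)), ?_, ?_, ?_⟩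
    · apply Real.sqrt_pos.mpr; apply lt_max_of_lt_right; positivity
    · rw [Real.sqrt_lt' hr1p]
      apply max_lt hβ
      nlinarith
    · rw [Real.sq_sqrt]
      · exact le_max_left _ _
      · apply le_max_of_le_right; positivity
  have hmv : ∀ z, ‖z‖ < r1 - r0 → ∫ y, g (z + y) * χ y = g z * ∫ y, χ y := by
    intro z hzn
    let θ : ℝ → ℝ := fun t => ∫ s in t..β, n / 2 * ϑ s
    have hθ : Continuous θ := by
      have h1 : ∀ t, θ t = - ∫ s in β..t, n / 2 * ϑ s := fun t => intervalIntegral.integral_symm _ _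
      have : θ = fun t => - ∫ s in β..t, n / 2 * ϑ s := funext h1
      rw [this]
      exact (intervalIntegral.continuous_primitive (fun a b => hh'.intervalIntegrable a b) β).neg
    refine mean_value_rad g z r0 hg ?_ θ hθ β hr0 hβr ?_
    · intro y hy
      apply hlap
      linarith [norm_add_le z y]
    · intro t ht
      apply intervalIntegral.integral_zero_ae
      apply Filter.Eventually.of_forall
      intro s hs
      rw [Set.uIoc_of_ge ht] at hs
      exact hz' s hs.1.le
  have hχneg : ∀ y, χ (-y) = χ y := by intro y; simp [hχdef, radPrim]
  have hconv : ∀ z, (MeasureTheory.convolution χ g (ContinuousLinearMap.lsmul ℝ ℝ) volume) z = ∫ y, g (z + y) * χ y := by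
    intro z
    rw [MeasureTheory.convolution_def]
    rw [← integral_neg_eq_self]
    apply integral_congr_ae
    apply Filter.Eventually.of_forall
    intro y
    simp [hχneg, mul_comm]
  have hd := hχc.hasFDerivAt_convolution_left (ContinuousLinearMap.lsmul ℝ ℝ) hχ1
    (hg.continuous.locallyIntegrable (μ := volume)) 0
  have hd2 : HasFDerivAt (MeasureTheory.convolution χ g (ContinuousLinearMap.lsmul ℝ ℝ) volume)
      ((∫ y, χ y) • fderiv ℝ g 0) 0 := by
    have h1 : HasFDerivAt (fun z => g z * ∫ y, χ y) ((∫ y, χ y) • fderiv ℝ g 0) 0 :=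
      (hg.differentiable (by norm_num) 0).hasFDerivAt.mul_const _
    refine h1.congr_of_eventuallyEq ?_
    filter_upwards [Metric.ball_mem_nhds (0 : EuclideanSpace ℝ (Fin n)) (sub_pos.mpr hr1)] with z hz
    rw [hconv, hmv z (by simpa using hz)]
  have hu := hd.unique hd2
  have hu2 := congrArg (fun L => L ℓ) hu
  simp only [_root_.smul_apply, smul_eq_mul] at hu2
  rw [mul_comm, ← hu2, MeasureTheory.convolution_def, ContinuousLinearMap.integral_apply]
  · rw [← integral_neg_eq_self]
    apply integral_congr_ae
    apply Filter.Eventually.of_forall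
    intro y
    simp [hχdef, radPrim_fderiv _ hh']
    left
    ring
  · apply Continuous.integrable_of_hasCompactSupport
    · have h1 : Continuous (fderiv ℝ χ) := hχ1.continuous_fderiv (by norm_num)
      have h2 := hg.continuous
      fun_prop
    · have h3 := hχc.fderiv (𝕜 := ℝ)
      refine h3.mono ?_
      intro y hy hy0
      apply hy
      beta_reduce
      rw [hy0]
      simp

lemma fderiv_sq_sum {n : ℕ} (y : EuclideanSpace ℝ (Fin n)) :
    ∑ i, (inner ℝ y (EuclideanSpace.single i (1:ℝ))) * y i = ‖y‖ ^ 2 := by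
  rw [EuclideanSpace.real_norm_sq_eq]
  apply Finset.sum_congr rfl
  intro i _
  rw [EuclideanSpace.inner_single_right]
  simp
  ring

lemma grad_formula {n : ℕ} (hn : 0 < n) (g : EuclideanSpace ℝ (Fin n) → ℝ)
    (hg : ContDiff ℝ 2 g) (r1 : ℝ) (hr1p : 0 < r1) (hlap : ∀ y, ‖y‖ < r1 → lapl g y = 0)
    (ϑ : ℝ → ℝ) (hϑ : Continuous ϑ) (β : ℝ) (hβ : β < r1 ^ 2)
    (hz : ∀ s, β ≤ s → ϑ s = 0) (ℓ : EuclideanSpace ℝ (Fin n)) (c : ℝ) :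
    (fderiv ℝ g 0 ℓ - c * g 0) * (∫ y : EuclideanSpace ℝ (Fin n), ϑ (‖y‖ ^ 2) * ‖y‖ ^ 2) =
      ∫ y, ϑ (‖y‖ ^ 2) * (n * inner ℝ y ℓ - c * ‖y‖ ^ 2) * g y := by
  have hcs : HasCompactSupport (fun y : EuclideanSpace ℝ (Fin n) => ϑ (‖y‖ ^ 2)) :=
    hcs_of_zero _ β (fun y hy => hz _ hy)
  have hn' : (n : ℝ) ≠ 0 := by positivity
  have hmass : ∫ y, radPrim (n := n) (fun s => n / 2 * ϑ s) β y = 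
      ∫ y : EuclideanSpace ℝ (Fin n), ϑ (‖y‖ ^ 2) * ‖y‖ ^ 2 := by
    have h1 : ∀ i : Fin n, ∫ y, radPrim (n := n) (fun s => n / 2 * ϑ s) β y =
        ∫ y : EuclideanSpace ℝ (Fin n), ϑ (‖y‖ ^ 2) * (n * inner ℝ y (EuclideanSpace.single i 1)) * y i := by
      intro i
      have hL : ∀ y, fderiv ℝ (fun y : EuclideanSpace ℝ (Fin n) => y i) y = EuclideanSpace.proj i := by
        intro y
        exact (EuclideanSpace.proj (𝕜 := ℝ) i : EuclideanSpace ℝ (Fin n) →L[ℝ] ℝ).fderiv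
      have := grad_formula_aux (fun y : EuclideanSpace ℝ (Fin n) => y i) (by fun_prop) r1 hr1p (by
        intro y _
        unfold lapl
        simp_rw [hL]
        simp) ϑ hϑ β hβ hz (EuclideanSpace.single i 1)
      rw [← this, hL]
      simp
    have h2 : (n : ℝ) * ∫ y, radPrim (n := n) (fun s => n / 2 * ϑ s) β y = 
       (n : ℝ) * ∫ y : EuclideanSpace ℝ (Fin n), ϑ (‖y‖ ^ 2) * ‖y‖ ^ 2 := by
      calc (n : ℝ) * ∫ y, radPrim (n := n) (fun s => n / 2 * ϑ s) β y 
          = ∑ i : Fin n, ∫ y, radPrim (n := n) (fun s => n / 2 * ϑ s) β y := by simp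
        _ = ∑ i : Fin n, ∫ y : EuclideanSpace ℝ (Fin n), ϑ (‖y‖ ^ 2) * (n * inner ℝ y (EuclideanSpace.single i 1)) * y i :=
            Finset.sum_congr rfl (fun i _ => h1 i)
        _ = ∫ y : EuclideanSpace ℝ (Fin n), ∑ i : Fin n, ϑ (‖y‖ ^ 2) * (n * inner ℝ y (EuclideanSpace.single i 1)) * y i := by
            rw [integral_finsetSum]
            intro i _
            apply Continuous.integrable_of_hasCompactSupport
            · fun_prop
            · exact hcs.mul_right.mul_right
        _ = _ := by
            rw [← integral_const_mul]
            congr 1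
            ext1 y
            rw [← fderiv_sq_sum y, Finset.mul_sum, Finset.mul_sum]
            apply Finset.sum_congr rfl
            intro i _
            ring
    exact mul_left_cancel₀ hn' h2
  have hA := grad_formula_aux g hg r1 hr1p hlap ϑ hϑ β hβ hz ℓ
  rw [hmass] at hA
  have hB := mean_value_rad g 0 r1 hg (by simpa using hlap) (fun s => ϑ s * s) (by fun_prop) β hr1p hβ.le
    (by intro s hs; simp [hz s hs])
  simp only [zero_add] at hB
  have hgc := hg.continuous
  rw [sub_mul, hA, mul_assoc, ← hB, ← integral_const_mul, ← integral_sub]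
  · congr 1
    ext1 y
    ring
  · apply Continuous.integrable_of_hasCompactSupport
    · fun_prop
    · exact hcs.mul_right.mul_right
  · apply Continuous.integrable_of_hasCompactSupport
    · fun_prop
    · exact (hcs.mul_right.mul_left).mul_left

lemma grad_formula_local {n : ℕ} (hn : 0 < n) (g : EuclideanSpace ℝ (Fin n) → ℝ)
    (hg : ContDiffOn ℝ 2 g (Metric.ball 0 1)) (hlap : ∀ y, ‖y‖ < 1 → lapl g y = 0)
    (ϑ : ℝ → ℝ) (hϑ : Continuous ϑ) (β : ℝ) (hβ : β < 1)
    (hz : ∀ s, β ≤ s → ϑ s = 0) (ℓ : EuclideanSpace ℝ (Fin n)) (c : ℝ) :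
    (fderiv ℝ g 0 ℓ - c * g 0) * (∫ y : EuclideanSpace ℝ (Fin n), ϑ (‖y‖ ^ 2) * ‖y‖ ^ 2) =
      ∫ y, ϑ (‖y‖ ^ 2) * (n * inner ℝ y ℓ - c * ‖y‖ ^ 2) * g y := by
  obtain ⟨r1, hr1p, hr1, hβr⟩ : ∃ r1 : ℝ, 0 < r1 ∧ r1 < 1 ∧ β < r1 ^ 2 := by
    refine ⟨Real.sqrt (max ((β + 1) / 2) (1 / 4)), ?_, ?_, ?_⟩
    · apply Real.sqrt_pos.mpr; apply lt_max_of_lt_right; norm_num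
    · rw [Real.sqrt_lt' one_pos]
      apply max_lt <;> linarith
    · rw [Real.sq_sqrt]
      · apply lt_max_of_lt_left; linarith
      · apply le_max_of_le_right; norm_num
  let φ : ContDiffBump (0 : EuclideanSpace ℝ (Fin n)) := ⟨r1, (r1 + 1) / 2, hr1p, by linarith⟩
  let G : EuclideanSpace ℝ (Fin n) → ℝ := fun y => φ y * g y
  have hG : ContDiff ℝ 2 G := by
    rw [contDiff_iff_contDiffAt]
    intro y
    by_cases hy : y ∈ Metric.ball (0 : EuclideanSpace ℝ (Fin n)) 1
    · exact φ.contDiff.contDiffAt.mul (hg.contDiffAt (Metric.isOpen_ball.mem_nhds hy))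
    · have : G =ᶠ[𝓝 y] fun _ => 0 := by
        have hy2 : y ∈ (Metric.closedBall (0 : EuclideanSpace ℝ (Fin n)) ((r1 + 1) / 2))ᶜ := by
          simp only [Metric.mem_ball, dist_zero_right, not_lt] at hy
          simp only [Set.mem_compl_iff, Metric.mem_closedBall, dist_zero_right, not_le]
          linarith
        filter_upwards [Metric.isClosed_closedBall.isOpen_compl.mem_nhds hy2] with w hw
        have : φ w = 0 := by
          apply φ.zero_of_le_dist
          simp only [Set.mem_compl_iff, Metric.mem_closedBall, not_le] at hw
          exact hw.le
        simp [G, this]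
      exact contDiffAt_const.congr_of_eventuallyEq this
  have hGg : ∀ y, ‖y‖ < r1 → G =ᶠ[𝓝 y] g := by
    intro y hy
    have : y ∈ Metric.ball (0 : EuclideanSpace ℝ (Fin n)) r1 := by simpa using hy
    filter_upwards [Metric.isOpen_ball.mem_nhds this] with w hw
    have : φ w = 1 := φ.one_of_mem_closedBall (Metric.ball_subset_closedBall hw)
    simp [G, this]
  have hGlap : ∀ y, ‖y‖ < r1 → lapl G y = 0 := by
    intro y hy
    rw [← hlap y (by linarith)]
    unfold lapl
    apply Finset.sum_congr rfl
    intro i _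
    have h1 : fderiv ℝ G =ᶠ[𝓝 y] fderiv ℝ g := (hGg y hy).fderiv
    have h2 : (fun w => fderiv ℝ G w (EuclideanSpace.single i 1)) =ᶠ[𝓝 y]
        (fun w => fderiv ℝ g w (EuclideanSpace.single i 1)) := by
      filter_upwards [h1] with w hw
      rw [hw]
    rw [h2.fderiv_eq]
  have h0 := hGg 0 (by simpa using hr1p)
  have key := grad_formula hn G hG r1 hr1p hGlap ϑ hϑ β hβr hz ℓ c
  rw [h0.fderiv_eq, h0.eq_of_nhds] at key
  rw [key]
  congr 1
  ext1 y
  by_cases hy : ‖y‖ < r1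
  · rw [(hGg y hy).eq_of_nhds]
  · rw [hz (‖y‖ ^ 2) (by nlinarith)]; simp

section kelvin
variable {n : ℕ}

noncomputable def kinv (c : EuclideanSpace ℝ (Fin n)) (R : ℝ) (y : EuclideanSpace ℝ (Fin n)) :
    EuclideanSpace ℝ (Fin n) := c + (R * (‖y - c‖ ^ 2)⁻¹) • (y - c)

noncomputable def kel (c : EuclideanSpace ℝ (Fin n)) (R K a : ℝ) (v : EuclideanSpace ℝ (Fin n) → ℝ)
    (y : EuclideanSpace ℝ (Fin n)) : ℝ := K * (‖y - c‖ ^ 2) ^ a * v (kinv c R y)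

lemma q_hasFDerivAt (c y : EuclideanSpace ℝ (Fin n)) :
    HasFDerivAt (fun y : EuclideanSpace ℝ (Fin n) => ‖y - c‖ ^ 2) (2 • innerSL ℝ (y - c)) y := by
  have h2 : HasFDerivAt (fun y : EuclideanSpace ℝ (Fin n) => ‖y‖ ^ 2) (2 • innerSL ℝ (y - c)) (y - c) :=
    (hasStrictFDerivAt_norm_sq (y - c)).hasFDerivAt
  have := h2.comp y ((hasFDerivAt_id y).sub_const c)
  exact this

lemma kinv_line (c y e : EuclideanSpace ℝ (Fin n)) (R : ℝ) (hy : y ≠ c) :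
    HasDerivAt (fun t : ℝ => kinv c R (y + t • e))
      ((R * (‖y - c‖ ^ 2)⁻¹) • e - (2 * R * inner ℝ (y - c) e * ((‖y - c‖ ^ 2) ^ 2)⁻¹) • (y - c)) 0 := by
  have hq0 : ‖y - c‖ ^ 2 ≠ 0 := by
    have : y - c ≠ 0 := sub_ne_zero.mpr hy
    positivity
  have hl : HasDerivAt (fun t : ℝ => y + t • e) e 0 := by
    simpa using ((hasDerivAt_id (0:ℝ)).smul_const e).const_add y
  have hl2 : HasDerivAt (fun t : ℝ => y + t • e - c) e 0 := hl.sub_const c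
  have hq : HasDerivAt (fun t : ℝ => ‖y + t • e - c‖ ^ 2) (2 * inner ℝ (y - c) e) 0 := by
    have h1 : HasFDerivAt (fun y : EuclideanSpace ℝ (Fin n) => ‖y - c‖ ^ 2) (2 • innerSL ℝ (y - c)) (y + (0:ℝ) • e) := by
      simpa using q_hasFDerivAt c y
    have := h1.comp_hasDerivAt (0:ℝ) hl
    refine HasDerivAt.congr_deriv this ?_
    simp [inner_sub_left]
  have hq' : HasDerivAt (fun t : ℝ => (‖y + t • e - c‖ ^ 2)⁻¹) (-(2 * inner ℝ (y - c) e) / (‖y - c‖ ^ 2) ^ 2) 0 := by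
    have := hq.fun_inv (by simpa using hq0)
    simpa using this
  have := ((hq'.const_mul R).smul hl2).const_add c
  simp only [zero_smul, add_zero] at this
  unfold kinv
  refine HasDerivAt.congr_deriv this ?_
  have h5 : R * (-(2 * inner ℝ (y - c) e) / (‖y - c‖ ^ 2) ^ 2) =
      -(2 * R * inner ℝ (y - c) e * ((‖y - c‖ ^ 2) ^ 2)⁻¹) := by
    rw [div_eq_mul_inv]; ring
  rw [h5]
  module

lemma kel_differentiableAt (c y : EuclideanSpace ℝ (Fin n)) (R : ℝ) (hy : y ≠ c) (m : WithTop ℕ∞) :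
    ContDiffAt ℝ m (kinv c R) y := by
  have hq0 : ‖y - c‖ ^ 2 ≠ 0 := by
    have : y - c ≠ 0 := sub_ne_zero.mpr hy
    positivity
  unfold kinv
  have h1 : ContDiffAt ℝ m (fun y : EuclideanSpace ℝ (Fin n) => ‖y - c‖ ^ 2) y :=
    (contDiffAt_id.sub contDiffAt_const).norm_sq ℝ
  have h2 : ContDiffAt ℝ m (fun y : EuclideanSpace ℝ (Fin n) => (‖y - c‖ ^ 2)⁻¹) y := h1.inv hq0
  exact contDiffAt_const.add ((contDiffAt_const.mul h2).smul (contDiffAt_id.sub contDiffAt_const))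

lemma kel_contDiffAt (c y : EuclideanSpace ℝ (Fin n)) (R K a : ℝ) (hy : y ≠ c) (m : WithTop ℕ∞)
    (v : EuclideanSpace ℝ (Fin n) → ℝ) (hv : ContDiffAt ℝ m v (kinv c R y)) :
    ContDiffAt ℝ m (kel c R K a v) y := by
  have hq0 : ‖y - c‖ ^ 2 ≠ 0 := by
    have : y - c ≠ 0 := sub_ne_zero.mpr hy
    positivity
  have h1 : ContDiffAt ℝ m (fun y : EuclideanSpace ℝ (Fin n) => ‖y - c‖ ^ 2) y :=
    (contDiffAt_id.sub contDiffAt_const).norm_sq ℝ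
  have h2 : ContDiffAt ℝ m (fun y : EuclideanSpace ℝ (Fin n) => (‖y - c‖ ^ 2) ^ a) y :=
    h1.rpow_const_of_ne hq0
  exact (contDiffAt_const.mul h2).mul (hv.comp y (kel_differentiableAt c y R hy m))

lemma fderiv_line (f : EuclideanSpace ℝ (Fin n) → ℝ) (y e : EuclideanSpace ℝ (Fin n)) (d : ℝ)
    (hf : DifferentiableAt ℝ f y) (hd : HasDerivAt (fun t : ℝ => f (y + t • e)) d 0) :
    fderiv ℝ f y e = d := by
  have hl : HasDerivAt (fun t : ℝ => y + t • e) e 0 := by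
    simpa using ((hasDerivAt_id (0:ℝ)).smul_const e).const_add y
  have h1 : HasFDerivAt f (fderiv ℝ f y) (y + (0:ℝ) • e) := by simpa using hf.hasFDerivAt
  exact (h1.comp_hasDerivAt (0:ℝ) hl).unique hd

lemma q_line (c y e : EuclideanSpace ℝ (Fin n)) :
    HasDerivAt (fun t : ℝ => ‖y + t • e - c‖ ^ 2) (2 * inner ℝ (y - c) e) 0 := by
  have hl : HasDerivAt (fun t : ℝ => y + t • e) e 0 := by
    simpa using ((hasDerivAt_id (0:ℝ)).smul_const e).const_add y
  have h1 : HasFDerivAt (fun y : EuclideanSpace ℝ (Fin n) => ‖y - c‖ ^ 2) (2 • innerSL ℝ (y - c)) (y + (0:ℝ) • e) := by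
    simpa using q_hasFDerivAt c y
  have := h1.comp_hasDerivAt (0:ℝ) hl
  refine HasDerivAt.congr_deriv this ?_
  simp [inner_sub_left]

lemma qpow_line (c y e : EuclideanSpace ℝ (Fin n)) (b : ℝ) (hy : y ≠ c) :
    HasDerivAt (fun t : ℝ => (‖y + t • e - c‖ ^ 2) ^ b)
      (2 * inner ℝ (y - c) e * b * (‖y - c‖ ^ 2) ^ (b - 1)) 0 := by
  have hq0 : ‖y - c‖ ^ 2 ≠ 0 := by
    have : y - c ≠ 0 := sub_ne_zero.mpr hy
    positivity
  have := (q_line c y e).rpow_const (p := b) (by left; simpa using hq0)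
  simpa using this

/-- First derivative of the Kelvin transform. -/
noncomputable def kelD (c : EuclideanSpace ℝ (Fin n)) (R K a : ℝ) (v : EuclideanSpace ℝ (Fin n) → ℝ)
    (e y : EuclideanSpace ℝ (Fin n)) : ℝ :=
  K * ((‖y - c‖ ^ 2) ^ (a - 1) * (2 * a * inner ℝ (y - c) e * v (kinv c R y) + R * fderiv ℝ v (kinv c R y) e)
    - 2 * R * (‖y - c‖ ^ 2) ^ (a - 2) * (inner ℝ (y - c) e * fderiv ℝ v (kinv c R y) (y - c)))

lemma kel_fderiv (c y e : EuclideanSpace ℝ (Fin n)) (R K a : ℝ) (hy : y ≠ c)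
    (v : EuclideanSpace ℝ (Fin n) → ℝ) (hv : ContDiffAt ℝ 1 v (kinv c R y)) :
    fderiv ℝ (kel c R K a v) y e = kelD c R K a v e y := by
  have hq0 : 0 < ‖y - c‖ ^ 2 := by
    have : y - c ≠ 0 := sub_ne_zero.mpr hy
    positivity
  apply fderiv_line
  · exact (kel_contDiffAt c y R K a hy 1 v hv).differentiableAt (by norm_num)
  · have h1 := qpow_line c y e a hy
    have hvd : HasFDerivAt v (fderiv ℝ v (kinv c R y)) (kinv c R (y + (0:ℝ) • e)) := by
      simpa using (hv.differentiableAt (by norm_num)).hasFDerivAt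
    have h2 := hvd.comp_hasDerivAt (0:ℝ) (kinv_line c y e R hy)
    have h3 := (h1.const_mul K).mul h2
    simp only [Function.comp_def, zero_smul, add_zero] at h3
    unfold kel
    refine HasDerivAt.congr_deriv h3 ?_
    unfold kelD
    rw [Real.rpow_sub hq0, Real.rpow_sub hq0, Real.rpow_one, Real.rpow_ofNat]
    simp only [map_sub, map_smul, smul_eq_mul]
    field_simp
    ring

/-- Second derivative of the Kelvin transform. -/
noncomputable def kelDD (c : EuclideanSpace ℝ (Fin n)) (R K a : ℝ) (v : EuclideanSpace ℝ (Fin n) → ℝ)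
    (e y : EuclideanSpace ℝ (Fin n)) : ℝ :=
      let s := inner ℝ (y - c) e
      let q := ‖y - c‖ ^ 2
      let V := v (kinv c R y)
      let p := fderiv ℝ v (kinv c R y)
      let B := fderiv ℝ (fderiv ℝ v) (kinv c R y)
      let Q := q ^ a
      K * Q * R ^ 2 * (q⁻¹) ^ 2 * B e e
      + K * Q * (q⁻¹) * 2 * a * V * inner ℝ e e
      - K * Q * 2 * R * (q⁻¹) ^ 2 * (p (y - c)) * inner ℝ e e
      + (K * Q * 4 * a * (a - 1) * (q⁻¹) ^ 2 * V - K * Q * 4 * a * R * (q⁻¹) ^ 3 * p (y - c)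
         - 4 * (a - 2) * K * Q * R * (q⁻¹) ^ 3 * p (y - c)
         + 4 * K * Q * R ^ 2 * (q⁻¹) ^ 4 * B (y - c) (y - c)) * (s * s)
      + (K * Q * (q⁻¹) ^ 2 * R * (2 * (a - 1) + 2 * a - 2)) * (s * p e)
      - (2 * K * Q * R ^ 2 * (q⁻¹) ^ 3) * (s * B (y - c) e)
      - (2 * K * Q * R ^ 2 * (q⁻¹) ^ 3) * (s * B e (y - c))

lemma kelD_line (c y e : EuclideanSpace ℝ (Fin n)) (R K a : ℝ) (hy : y ≠ c)
    (v : EuclideanSpace ℝ (Fin n) → ℝ) (hv : ContDiffAt ℝ 2 v (kinv c R y)) :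
    HasDerivAt (fun t : ℝ => kelD c R K a v e (y + t • e))
      (kelDD c R K a v e y) 0 := by
  have hq0 : 0 < ‖y - c‖ ^ 2 := by
    have : y - c ≠ 0 := sub_ne_zero.mpr hy
    positivity
  have hl : HasDerivAt (fun t : ℝ => y + t • e) e 0 := by
    simpa using ((hasDerivAt_id (0:ℝ)).smul_const e).const_add y
  have hl2 : HasDerivAt (fun t : ℝ => y + t • e - c) e 0 := hl.sub_const c
  have hs : HasDerivAt (fun t : ℝ => inner ℝ (y + t • e - c) e) (inner ℝ e e) 0 := by
    have := hl2.inner ℝ (hasDerivAt_const (0:ℝ) e)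
    simpa using this
  have hI := kinv_line c y e R hy
  have hvd : HasFDerivAt v (fderiv ℝ v (kinv c R y)) (kinv c R (y + (0:ℝ) • e)) := by
    simpa using (hv.differentiableAt (by norm_num)).hasFDerivAt
  have hvI := hvd.comp_hasDerivAt (0:ℝ) hI
  have hpd : HasFDerivAt (fderiv ℝ v) (fderiv ℝ (fderiv ℝ v) (kinv c R y)) (kinv c R (y + (0:ℝ) • e)) := by
    have := (hv.fderiv_right (m := 1) (by norm_num)).differentiableAt (by norm_num)
    simpa using this.hasFDerivAt
  have hpI := hpd.comp_hasDerivAt (0:ℝ) hI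
  have hpe := hpI.clm_apply (hasDerivAt_const (0:ℝ) e)
  have hpP := hpI.clm_apply hl2
  have h1 := qpow_line c y e (a - 1) hy
  have h2 := qpow_line c y e (a - 2) hy
  have hA := h1.mul (((hs.const_mul (2 * a)).mul hvI).add (hpe.const_mul R))
  have hB := (h2.const_mul (2 * R)).mul (hs.mul hpP)
  have hF := (hA.sub hB).const_mul K
  simp only [Function.comp_def, zero_smul, add_zero, Pi.mul_apply, Pi.add_apply] at hF
  unfold kelD kelDD
  refine HasDerivAt.congr_deriv hF ?_
  have e1 : (‖y - c‖ ^ 2) ^ (a - 1) = (‖y - c‖ ^ 2) ^ a * (‖y - c‖ ^ 2)⁻¹ := by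
    rw [Real.rpow_sub hq0, Real.rpow_one]; rfl
  have e2 : (‖y - c‖ ^ 2) ^ (a - 2) = (‖y - c‖ ^ 2) ^ a * ((‖y - c‖ ^ 2)⁻¹) ^ 2 := by
    rw [Real.rpow_sub hq0, Real.rpow_ofNat, inv_pow]; rfl
  have e11 : (‖y - c‖ ^ 2) ^ (a - 1 - 1) = (‖y - c‖ ^ 2) ^ a * ((‖y - c‖ ^ 2)⁻¹) ^ 2 := by
    rw [← e2]; congr 1; ring
  have e21 : (‖y - c‖ ^ 2) ^ (a - 2 - 1) = (‖y - c‖ ^ 2) ^ a * ((‖y - c‖ ^ 2)⁻¹) ^ 3 := by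
    have : a - 2 - 1 = a - 3 := by ring
    rw [this, Real.rpow_sub hq0, Real.rpow_ofNat, inv_pow]; rfl
  rw [e1, e2, e11, e21]
  generalize y - c = P
  rw [← inv_pow]
  generalize (‖P‖ ^ 2)⁻¹ = j
  simp only [map_sub, map_smul, smul_eq_mul, map_zero, add_zero,
    _root_.sub_apply, _root_.smul_apply]
  ring

end kelvin

section kelvin
variable {n : ℕ}

lemma kel_lapl (c y : EuclideanSpace ℝ (Fin n)) (R K : ℝ) (v : EuclideanSpace ℝ (Fin n) → ℝ)
    (W : Set (EuclideanSpace ℝ (Fin n))) (hW : IsOpen W) (hyW : y ∈ W)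
    (hWc : ∀ w ∈ W, w ≠ c) (hWv : ∀ w ∈ W, ContDiffAt ℝ 2 v (kinv c R w))
    (hlap : lapl v (kinv c R y) = 0) :
    lapl (kel c R K ((2 - (n : ℝ)) / 2) v) y = 0 := by
  set a : ℝ := (2 - (n : ℝ)) / 2 with ha
  have hna : (n : ℝ) = 2 - 2 * a := by rw [ha]; ring
  have hy := hWc y hyW
  have hv := hWv y hyW
  have hq0 : 0 < ‖y - c‖ ^ 2 := by
    have : y - c ≠ 0 := sub_ne_zero.mpr hy
    positivity
  have h1 : ∀ i : Fin n, fderiv ℝ (fun w => fderiv ℝ (kel c R K a v) w (EuclideanSpace.single i 1)) y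
      (EuclideanSpace.single i 1) = kelDD c R K a v (EuclideanSpace.single i 1) y := by
    intro i
    apply fderiv_line
    · have := (kel_contDiffAt c y R K a hy 2 v hv).fderiv_right (m := 1) (by norm_num)
      exact (this.differentiableAt (by norm_num)).clm_apply (differentiableAt_const _)
    · refine (kelD_line c y (EuclideanSpace.single i 1) R K a hy v hv).congr_of_eventuallyEq ?_
      have hc : Continuous (fun t : ℝ => y + t • (EuclideanSpace.single i (1:ℝ) : EuclideanSpace ℝ (Fin n))) := by fun_prop
      have : ∀ᶠ t : ℝ in 𝓝 0, y + t • (EuclideanSpace.single i (1:ℝ) : EuclideanSpace ℝ (Fin n)) ∈ W := by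
        apply hc.continuousAt.eventually_mem
        apply hW.mem_nhds
        simpa using hyW
      filter_upwards [this] with t ht
      exact kel_fderiv c _ _ R K a (hWc _ ht) v ((hWv _ ht).of_le (by norm_num))
  unfold lapl at hlap ⊢
  simp_rw [h1]
  unfold kelDD
  have h2 : ∀ i : Fin n, fderiv ℝ (fun w => fderiv ℝ v w (EuclideanSpace.single i 1)) (kinv c R y)
      (EuclideanSpace.single i 1) = fderiv ℝ (fderiv ℝ v) (kinv c R y) (EuclideanSpace.single i 1) (EuclideanSpace.single i 1) := by
    intro i
    have := (hv.fderiv_right (m := 1) (by norm_num)).differentiableAt (by norm_num)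
    have h3 := this.hasFDerivAt.clm_apply (hasFDerivAt_const (EuclideanSpace.single i (1:ℝ)) (kinv c R y))
    rw [h3.fderiv]
    simp
  simp_rw [h2] at hlap
  set P := y - c with hP
  set p := fderiv ℝ v (kinv c R y) with hp
  set B := fderiv ℝ (fderiv ℝ v) (kinv c R y) with hB
  have hin : ∀ i : Fin n, inner ℝ P (EuclideanSpace.single i (1:ℝ)) = P i := by
    intro i; rw [EuclideanSpace.inner_single_right]; simp
  have hin1 : ∀ i : Fin n, inner ℝ (EuclideanSpace.single i (1:ℝ)) (EuclideanSpace.single i (1:ℝ)) = (1:ℝ) := by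
    intro i; simp
  have s1 : ∑ i, P i * P i = ‖P‖ ^ 2 := by
    rw [EuclideanSpace.real_norm_sq_eq]
    apply Finset.sum_congr rfl; intro i _; ring
  have s2 : ∑ i, P i * p (EuclideanSpace.single i 1) = p P := (clm_eq_sum p P).symm
  have s3 : ∑ i, P i * B P (EuclideanSpace.single i 1) = B P P := (clm_eq_sum (B P) P).symm
  have s4 : ∑ i, P i * B (EuclideanSpace.single i 1) P = B P P := by
    have := clm_eq_sum (B.flip P) P
    simpa using this.symm
  simp only [hin, hin1, mul_one]
  simp only [Finset.sum_add_distrib, Finset.sum_sub_distrib, ← Finset.mul_sum, hlap, s1, s2, s3, s4,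
    Finset.sum_const, Finset.card_univ, Fintype.card_fin, nsmul_eq_mul]
  rw [hna]
  have : ‖P‖ ≠ 0 := norm_ne_zero_iff.mpr (sub_ne_zero.mpr hy)
  field_simp
  ring

lemma kinv_norm (c y : EuclideanSpace ℝ (Fin n)) (hy : y ≠ c) :
    1 - ‖kinv c (‖c‖ ^ 2 - 1) y‖ ^ 2 = (‖c‖ ^ 2 - 1) * (1 - ‖y‖ ^ 2) / ‖y - c‖ ^ 2 := by
  have hq0 : 0 < ‖y - c‖ ^ 2 := by
    have : y - c ≠ 0 := sub_ne_zero.mpr hy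
    positivity
  unfold kinv
  rw [norm_add_sq_real, norm_smul, inner_smul_right, mul_pow, Real.norm_eq_abs, sq_abs]
  have h1 : inner ℝ c (y - c) = (‖y‖ ^ 2 - ‖c‖ ^ 2 - ‖y - c‖ ^ 2) / 2 := by
    have := norm_add_sq_real c (y - c)
    rw [add_sub_cancel] at this
    linarith
  rw [h1]
  have h6 : ‖y - c‖ ≠ 0 := norm_ne_zero_iff.mpr (sub_ne_zero.mpr hy)
  field_simp
  ring

/-- Kelvin transform centred so that the origin goes to `x`. -/
lemma kelvin_exists (x : EuclideanSpace ℝ (Fin n)) (hx0 : x ≠ 0) (hx : ‖x‖ < 1)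
    (v : EuclideanSpace ℝ (Fin n) → ℝ) (hv : ContDiffOn ℝ 2 v (Metric.ball 0 1))
    (hlap : ∀ y, ‖y‖ < 1 → lapl v y = 0) (hb : ∀ y, ‖y‖ < 1 → |v y| ≤ 1) :
    ∃ g : EuclideanSpace ℝ (Fin n) → ℝ, ContDiffOn ℝ 2 g (Metric.ball 0 1) ∧
      (∀ y, ‖y‖ < 1 → lapl g y = 0) ∧
      (∀ y, ‖y‖ < 1 → |g y| ≤ (1 - 2 * inner ℝ x y + ‖x‖ ^ 2 * ‖y‖ ^ 2) ^ ((2 - (n:ℝ)) / 2)) ∧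
      (∀ ℓ, (1 - ‖x‖ ^ 2) * fderiv ℝ v x (ℓ - (2 * inner ℝ x ℓ * (‖x‖ ^ 2)⁻¹) • x) =
        fderiv ℝ g 0 ℓ - (((n:ℝ) - 2) * inner ℝ x ℓ) * g 0) := by
  have hρ : 0 < ‖x‖ := norm_pos_iff.mpr hx0
  set c := ((‖x‖ ^ 2)⁻¹) • x with hc
  have hcn : ‖c‖ ^ 2 = (‖x‖ ^ 2)⁻¹ := by
    rw [hc, norm_smul, mul_pow, Real.norm_eq_abs, sq_abs]
    field_simp
  set R := ‖c‖ ^ 2 - 1 with hR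
  set a := (2 - (n:ℝ)) / 2 with ha
  set K := (‖x‖ ^ 2) ^ a with hK
  have hcn1 : 1 < ‖c‖ ^ 2 := by
    rw [hcn]
    apply (one_lt_inv₀ (by positivity)).mpr
    nlinarith
  have hRp : 0 < R := by rw [hR]; linarith
  have hne : ∀ y : EuclideanSpace ℝ (Fin n), ‖y‖ < 1 → y ≠ c := by
    intro y hy h
    rw [← h] at hcn1
    nlinarith [norm_nonneg y]
  have hmap : ∀ y : EuclideanSpace ℝ (Fin n), ‖y‖ < 1 → ‖kinv c R y‖ < 1 := by
    intro y hy
    have hq0 : 0 < ‖y - c‖ ^ 2 := by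
      have : y - c ≠ 0 := sub_ne_zero.mpr (hne y hy)
      positivity
    have h1 := kinv_norm c y (hne y hy)
    have h2 : 0 < (‖c‖ ^ 2 - 1) * (1 - ‖y‖ ^ 2) / ‖y - c‖ ^ 2 := by
      apply div_pos (mul_pos hRp _) hq0
      nlinarith [norm_nonneg y]
    rw [← h1] at h2
    nlinarith [norm_nonneg (kinv c R y)]
  have hk0 : kinv c R 0 = x := by
    unfold kinv
    rw [zero_sub, norm_neg, hR, hcn, hc]
    rw [smul_neg, smul_smul, ← sub_eq_add_neg, ← sub_smul]
    have : (‖x‖ ^ 2)⁻¹ - ((‖x‖ ^ 2)⁻¹ - 1) * ((‖x‖ ^ 2)⁻¹)⁻¹ * (‖x‖ ^ 2)⁻¹ = 1 := by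
      field_simp
      ring
    rw [this, one_smul]
  have hvat : ∀ y : EuclideanSpace ℝ (Fin n), ‖y‖ < 1 → ContDiffAt ℝ 2 v (kinv c R y) := by
    intro y hy
    apply hv.contDiffAt (Metric.isOpen_ball.mem_nhds _)
    simpa using hmap y hy
  have hg0 : kel c R K a v 0 = v x := by
    unfold kel
    rw [hk0, zero_sub, norm_neg, hcn, hK, ← Real.mul_rpow (by positivity) (by positivity)]
    rw [mul_inv_cancel₀ (by positivity), Real.one_rpow, one_mul]
  refine ⟨kel c R K a v, ?_, ?_, ?_, ?_⟩
  · intro y hy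
    have hy' : ‖y‖ < 1 := by simpa using hy
    exact (kel_contDiffAt c y R K a (hne y hy') 2 v (hvat y hy')).contDiffWithinAt
  · intro y hy
    apply kel_lapl c y R K v (Metric.ball 0 1) Metric.isOpen_ball (by simpa using hy)
    · intro w hw; exact hne w (by simpa using hw)
    · intro w hw; exact hvat w (by simpa using hw)
    · exact hlap _ (hmap y hy)
  · intro y hy
    unfold kel
    rw [abs_mul, hK, ← Real.mul_rpow (by positivity) (by positivity)]
    have h1 : ‖x‖ ^ 2 * ‖y - c‖ ^ 2 = 1 - 2 * inner ℝ x y + ‖x‖ ^ 2 * ‖y‖ ^ 2 := by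
      rw [norm_sub_sq_real, hcn, hc, inner_smul_right, real_inner_comm]
      field_simp
      ring
    rw [← h1]
    have h2 : 0 ≤ (‖x‖ ^ 2 * ‖y - c‖ ^ 2) ^ a := by positivity
    rw [abs_of_nonneg h2]
    have := hb _ (hmap y hy)
    nlinarith
  · intro ℓ
    have h00 : ‖(0 : EuclideanSpace ℝ (Fin n))‖ < 1 := by simp
    rw [kel_fderiv c 0 ℓ R K a (hne 0 h00) v ((hvat 0 h00).of_le (by norm_num)), hg0]
    unfold kelD
    rw [hk0, zero_sub, norm_neg, hcn, inner_neg_left, hK, hR, hcn]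
    have hinv : 0 < (‖x‖ ^ 2)⁻¹ := by positivity
    rw [Real.rpow_sub hinv, Real.rpow_sub hinv, Real.rpow_one, Real.rpow_ofNat, Real.inv_rpow (by positivity)]
    have hKp : (‖x‖ ^ 2) ^ a ≠ 0 := by positivity
    rw [hc, inner_smul_left]
    simp only [map_sub, map_smul, map_neg, smul_eq_mul]
    have hna : (n : ℝ) = 2 - 2 * a := by rw [ha]; ring
    rw [hna]
    simp
    field_simp
    ring

end kelvin

lemma circle_real (b R s s' : ℝ) (hs : s ^ 2 + s' ^ 2 = 1) :
    ∫ φ in (-Real.pi)..Real.pi, |b * s + R * (s * Real.cos φ + s' * Real.sin φ)| ≤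
      ∫ φ in (-Real.pi)..Real.pi, |b + R * Real.cos φ| := by
  obtain ⟨α, hα1, hα2⟩ : ∃ α : ℝ, Real.cos α = s ∧ Real.sin α = s' := by
    have h1 : ‖(⟨s, s'⟩ : ℂ)‖ = 1 := by
      rw [Complex.norm_def, Complex.normSq_mk]
      rw [Real.sqrt_eq_one]; linarith
    refine ⟨Complex.arg ⟨s, s'⟩, ?_, ?_⟩
    · rw [Complex.cos_arg (by intro h; rw [h] at h1; simp at h1), h1]; simp
    · rw [Complex.sin_arg, h1]; simp
  have hper : ∀ (d t : ℝ), ∫ φ in (-Real.pi)..Real.pi, |d + R * Real.cos (φ - t)| =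
      ∫ φ in (-Real.pi)..Real.pi, |d + R * Real.cos φ| := by
    intro d t
    have hp : Function.Periodic (fun φ => |d + R * Real.cos φ|) (2 * Real.pi) := by
      intro φ; simp only [Real.cos_add_two_pi]
    rw [intervalIntegral.integral_comp_sub_right (fun φ => |d + R * Real.cos φ|) t]
    have := hp.intervalIntegral_add_eq (-Real.pi - t) (-Real.pi)
    rw [show -Real.pi - t + 2 * Real.pi = Real.pi - t by ring, show -Real.pi + 2 * Real.pi = Real.pi by ring] at this
    exact this
  have h1 : ∀ φ, s * Real.cos φ + s' * Real.sin φ = Real.cos (φ - α) := by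
    intro φ; rw [Real.cos_sub, hα1, hα2]; ring
  simp_rw [h1]
  rw [hper]
  have hneg : ∫ φ in (-Real.pi)..Real.pi, |-b + R * Real.cos φ| = ∫ φ in (-Real.pi)..Real.pi, |b + R * Real.cos φ| := by
    rw [← hper (-b) Real.pi]
    congr 1
    ext1 φ
    rw [Real.cos_sub_pi, ← abs_neg]
    congr 1; ring
  have hs1 : s ≤ 1 := by nlinarith [sq_nonneg s']
  have hs2 : -1 ≤ s := by nlinarith [sq_nonneg s']
  have hc : ∀ d : ℝ, IntervalIntegrable (fun φ => |d + R * Real.cos φ|) volume (-Real.pi) Real.pi := by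
    intro d
    apply Continuous.intervalIntegrable
    fun_prop
  calc ∫ φ in (-Real.pi)..Real.pi, |b * s + R * Real.cos φ| 
      ≤ ∫ φ in (-Real.pi)..Real.pi, ((1 + s) / 2 * |b + R * Real.cos φ| + (1 - s) / 2 * |-b + R * Real.cos φ|) := by
        apply intervalIntegral.integral_mono_on (by linarith [Real.pi_pos]) (hc _)
        · exact ((hc b).const_mul _).add ((hc (-b)).const_mul _)
        · intro φ _
          have : b * s + R * Real.cos φ = (1 + s) / 2 * (b + R * Real.cos φ) + (1 - s) / 2 * (-b + R * Real.cos φ) := by ring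
          rw [this]
          refine (abs_add_le _ _).trans ?_
          rw [abs_mul, abs_mul, abs_of_nonneg (by linarith : 0 ≤ (1 + s) / 2), abs_of_nonneg (by linarith : 0 ≤ (1 - s) / 2)]
    _ = _ := by
        rw [intervalIntegral.integral_add ((hc b).const_mul _) ((hc (-b)).const_mul _)]
        rw [intervalIntegral.integral_const_mul, intervalIntegral.integral_const_mul, hneg]
        ring

lemma circle_lint (b R s s' : ℝ) (hs : s ^ 2 + s' ^ 2 = 1) :
    ∫⁻ φ in Set.Ioo (-Real.pi) Real.pi, ENNReal.ofReal |b * s + R * (s * Real.cos φ + s' * Real.sin φ)| ≤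
      ∫⁻ φ in Set.Ioo (-Real.pi) Real.pi, ENNReal.ofReal |b + R * Real.cos φ| := by
  have hle : -Real.pi ≤ Real.pi := by linarith [Real.pi_pos]
  have hconv : ∀ f : ℝ → ℝ, Continuous f → (∀ φ, 0 ≤ f φ) → 
      ∫⁻ φ in Set.Ioo (-Real.pi) Real.pi, ENNReal.ofReal (f φ) = ENNReal.ofReal (∫ φ in (-Real.pi)..Real.pi, f φ) := by
    intro f hf hf0
    rw [intervalIntegral.integral_of_le hle, ofReal_integral_eq_lintegral_ofReal]
    · rw [restrict_Ioo_eq_restrict_Ioc]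
    · exact (hf.intervalIntegrable _ _).1
    · exact Eventually.of_forall hf0
  rw [hconv _ (by fun_prop) (fun φ => abs_nonneg _), hconv _ (by fun_prop) (fun φ => abs_nonneg _)]
  exact ENNReal.ofReal_le_ofReal (circle_real b R s s' hs)

/-- Coordinates on the disc adapted to the pencil of circles. -/
noncomputable def dR (ρ W : ℝ) : ℝ := Real.sqrt ((1 - W) * (1 - ρ ^ 2 * W))

noncomputable def dPhi (ρ : ℝ) (p : ℝ × ℝ) : ℝ × ℝ :=
  (ρ * p.1 + dR ρ p.1 * Real.cos p.2, dR ρ p.1 * Real.sin p.2)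

noncomputable def dPhi' (ρ : ℝ) (p : ℝ × ℝ) : ℝ × ℝ →L[ℝ] ℝ × ℝ :=
  (Matrix.toLin (.finTwoProd ℝ) (.finTwoProd ℝ)
    !![ρ + ((-(1 + ρ ^ 2 - 2 * ρ ^ 2 * p.1)) / (2 * dR ρ p.1)) * Real.cos p.2, -(dR ρ p.1 * Real.sin p.2);
      ((-(1 + ρ ^ 2 - 2 * ρ ^ 2 * p.1)) / (2 * dR ρ p.1)) * Real.sin p.2, dR ρ p.1 * Real.cos p.2]).toContinuousLinearMap

lemma dR_arg_pos (ρ W : ℝ) (hρ : 0 ≤ ρ) (hρ1 : ρ < 1) (hW : W ∈ Set.Ioo (0:ℝ) 1) :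
    0 < (1 - W) * (1 - ρ ^ 2 * W) := by
  obtain ⟨h0, h1⟩ := hW
  have h2 : ρ ^ 2 < 1 := by nlinarith
  apply mul_pos (by linarith)
  nlinarith

lemma dR_hasDerivAt (ρ W : ℝ) (hρ : 0 ≤ ρ) (hρ1 : ρ < 1) (hW : W ∈ Set.Ioo (0:ℝ) 1) :
    HasDerivAt (dR ρ) ((-(1 + ρ ^ 2 - 2 * ρ ^ 2 * W)) / (2 * dR ρ W)) W := by
  have hp := dR_arg_pos ρ W hρ hρ1 hW
  have h1 : HasDerivAt (fun W : ℝ => (1 - W) * (1 - ρ ^ 2 * W)) (-(1 + ρ ^ 2 - 2 * ρ ^ 2 * W)) W := by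
    have a1 : HasDerivAt (fun W : ℝ => 1 - W) (-1) W := by simpa using (hasDerivAt_id W).const_sub 1
    have a2 : HasDerivAt (fun W : ℝ => 1 - ρ ^ 2 * W) (-(ρ ^ 2)) W := by
      simpa using ((hasDerivAt_id W).const_mul (ρ ^ 2)).const_sub 1
    refine (a1.mul a2).congr_deriv ?_
    ring
  exact h1.sqrt hp.ne'

lemma dPhi_hasFDerivAt (ρ : ℝ) (hρ : 0 ≤ ρ) (hρ1 : ρ < 1) (p : ℝ × ℝ) (hp : p.1 ∈ Set.Ioo (0:ℝ) 1) :
    HasFDerivAt (dPhi ρ) (dPhi' ρ p) p := by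
  unfold dPhi'
  rw [Matrix.toLin_finTwoProd_toContinuousLinearMap]
  have hf : HasFDerivAt (fun p : ℝ × ℝ => p.1) (ContinuousLinearMap.fst ℝ ℝ ℝ) p := hasFDerivAt_fst
  have hR := HasDerivAt.comp_hasFDerivAt (h₂ := dR ρ) p (dR_hasDerivAt ρ p.1 hρ hρ1 hp) hf
  have hg : HasFDerivAt (fun p : ℝ × ℝ => p.2) (ContinuousLinearMap.snd ℝ ℝ ℝ) p := hasFDerivAt_snd
  have hc := HasDerivAt.comp_hasFDerivAt (h₂ := Real.cos) p (Real.hasDerivAt_cos p.2) hg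
  have hs := HasDerivAt.comp_hasFDerivAt (h₂ := Real.sin) p (Real.hasDerivAt_sin p.2) hg
  have h1 := hf.const_mul ρ
  refine ((h1.add (hR.mul hc)).prodMk (hR.mul hs)).congr_fderiv ?_
  ext <;> simp <;> ring

lemma dPhi'_det (ρ : ℝ) (hρ : 0 ≤ ρ) (hρ1 : ρ < 1) (p : ℝ × ℝ) (hp : p.1 ∈ Set.Ioo (0:ℝ) 1) :
    (dPhi' ρ p).det = -((1 + ρ ^ 2 - 2 * ρ * (dPhi ρ p).1) / 2) := by
  have hR : 0 < dR ρ p.1 := Real.sqrt_pos.mpr (dR_arg_pos ρ p.1 hρ hρ1 hp)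
  unfold dPhi' dPhi
  simp only [LinearMap.det_toContinuousLinearMap, LinearMap.det_toLin,
    Matrix.det_fin_two_of]
  have := Real.sin_sq_add_cos_sq p.2
  have h2 : Real.sin p.2 ^ 2 = 1 - Real.cos p.2 ^ 2 := by linarith
  field_simp
  ring_nf
  rw [h2]
  ring

lemma dPhi_q_pos (ρ : ℝ) (hρ : 0 ≤ ρ) (hρ1 : ρ < 1) (p : ℝ × ℝ) (hp : p.1 ∈ Set.Ioo (0:ℝ) 1) :
    0 < 1 + ρ ^ 2 - 2 * ρ * (dPhi ρ p).1 := by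
  have hp0 := dR_arg_pos ρ p.1 hρ hρ1 hp
  have hR : 0 < dR ρ p.1 := Real.sqrt_pos.mpr hp0
  have hR2 : dR ρ p.1 ^ 2 = (1 - p.1) * (1 - ρ ^ 2 * p.1) := Real.sq_sqrt hp0.le
  obtain ⟨h0, h1⟩ := hp
  have hρ2 : ρ ^ 2 < 1 := by nlinarith
  unfold dPhi
  simp only
  have hA : 0 < 1 + ρ ^ 2 - 2 * ρ ^ 2 * p.1 := by nlinarith [sq_nonneg ρ]
  have h3 : 2 * ρ * dR ρ p.1 < 1 + ρ ^ 2 - 2 * ρ ^ 2 * p.1 := by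
    apply lt_of_pow_lt_pow_left₀ 2 hA.le
    have : (1 + ρ ^ 2 - 2 * ρ ^ 2 * p.1) ^ 2 - (2 * ρ * dR ρ p.1) ^ 2 = (1 - ρ ^ 2) ^ 2 := by
      rw [mul_pow, hR2]; ring
    have : 0 < (1 - ρ ^ 2) ^ 2 := by apply pow_pos; linarith
    linarith
  have h4 : ρ * dR ρ p.1 * Real.cos p.2 ≤ ρ * dR ρ p.1 := by
    have := Real.cos_le_one p.2
    have : 0 ≤ ρ * dR ρ p.1 := by positivity
    nlinarith
  nlinarith

lemma dPhi_norm (ρ : ℝ) (hρ : 0 ≤ ρ) (hρ1 : ρ < 1) (p : ℝ × ℝ) (hp : p.1 ∈ Set.Ioo (0:ℝ) 1) :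
    1 - ((dPhi ρ p).1 ^ 2 + (dPhi ρ p).2 ^ 2) = p.1 * (1 + ρ ^ 2 - 2 * ρ * (dPhi ρ p).1) := by
  have hp0 := dR_arg_pos ρ p.1 hρ hρ1 hp
  have hR2 : dR ρ p.1 ^ 2 = (1 - p.1) * (1 - ρ ^ 2 * p.1) := Real.sq_sqrt hp0.le
  have := Real.sin_sq_add_cos_sq p.2
  have h2 : Real.sin p.2 ^ 2 = 1 - Real.cos p.2 ^ 2 := by linarith
  unfold dPhi
  simp only
  rw [mul_pow _ (Real.sin p.2), h2]
  ring_nf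
  rw [hR2]
  ring

def dS : Set (ℝ × ℝ) := Set.Ioo (0:ℝ) 1 ×ˢ Set.Ioo (-Real.pi) Real.pi

lemma dPhi_injOn (ρ : ℝ) (hρ : 0 ≤ ρ) (hρ1 : ρ < 1) : Set.InjOn (dPhi ρ) dS := by
  intro p hp p' hp' h
  have hq := dPhi_q_pos ρ hρ hρ1 p hp.1
  have h1 := dPhi_norm ρ hρ hρ1 p hp.1
  have h2 := dPhi_norm ρ hρ hρ1 p' hp'.1
  rw [← h] at h2
  have hW : p.1 = p'.1 := by
    rw [h1] at h2
    exact mul_right_cancel₀ hq.ne' h2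
  have hR : 0 < dR ρ p.1 := Real.sqrt_pos.mpr (dR_arg_pos ρ p.1 hρ hρ1 hp.1)
  unfold dPhi at h
  rw [← hW] at h
  simp only [Prod.mk.injEq] at h
  have hc : Real.cos p.2 = Real.cos p'.2 := by
    have := h.1
    exact mul_left_cancel₀ hR.ne' (by linarith)
  have hs : Real.sin p.2 = Real.sin p'.2 := mul_left_cancel₀ hR.ne' h.2
  have hang : (p.2 : Real.Angle) = (p'.2 : Real.Angle) := Real.Angle.cos_sin_inj hc hs
  have hφ : p.2 = p'.2 := by
    have e1 := (Real.Angle.toReal_coe_eq_self_iff (θ := p.2)).mpr ⟨hp.2.1, hp.2.2.le⟩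
    have e2 := (Real.Angle.toReal_coe_eq_self_iff (θ := p'.2)).mpr ⟨hp'.2.1, hp'.2.2.le⟩
    rw [← e1, ← e2, hang]
  exact Prod.ext hW hφ

lemma dPhi_image_sub (ρ : ℝ) (hρ : 0 ≤ ρ) (hρ1 : ρ < 1) :
    dPhi ρ '' dS ⊆ {z : ℝ × ℝ | z.1 ^ 2 + z.2 ^ 2 < 1} := by
  rintro _ ⟨p, hp, rfl⟩
  have hq := dPhi_q_pos ρ hρ hρ1 p hp.1
  have h1 := dPhi_norm ρ hρ hρ1 p hp.1
  have := mul_pos hp.1.1 hq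
  simp only [Set.mem_ofPred_eq]
  linarith

lemma dPhi_image_sup (ρ : ℝ) (hρ : 0 ≤ ρ) (hρ1 : ρ < 1) (z : ℝ × ℝ) (hz : z.1 ^ 2 + z.2 ^ 2 < 1)
    (hz2 : z.2 ≠ 0) : z ∈ dPhi ρ '' dS := by
  have hz1 : z.1 < 1 := by nlinarith [sq_nonneg z.2]
  have hq : 0 < 1 + ρ ^ 2 - 2 * ρ * z.1 := by nlinarith [sq_nonneg (1 - ρ)]
  obtain ⟨W, hWdef⟩ : ∃ W, W = (1 - (z.1 ^ 2 + z.2 ^ 2)) / (1 + ρ ^ 2 - 2 * ρ * z.1) := ⟨_, rfl⟩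
  have hWq : W * (1 + ρ ^ 2 - 2 * ρ * z.1) = 1 - (z.1 ^ 2 + z.2 ^ 2) := by
    rw [hWdef]; exact div_mul_cancel₀ _ hq.ne'
  have hz22 : 0 < z.2 ^ 2 := by positivity
  have hW : W ∈ Set.Ioo (0:ℝ) 1 := by
    constructor
    · rw [hWdef]; apply div_pos (by linarith) hq
    · rw [hWdef, div_lt_one hq]; nlinarith [sq_nonneg (z.1 - ρ)]
  have hp0 := dR_arg_pos ρ W hρ hρ1 hW
  have hR : 0 < dR ρ W := Real.sqrt_pos.mpr hp0
  have hR2 : dR ρ W ^ 2 = (1 - W) * (1 - ρ ^ 2 * W) := Real.sq_sqrt hp0.le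
  have hcirc : (z.1 - ρ * W) ^ 2 + z.2 ^ 2 = dR ρ W ^ 2 := by
    rw [hR2]; linear_combination hWq
  let ζ : ℂ := ⟨z.1 - ρ * W, z.2⟩
  have hζn : ‖ζ‖ = dR ρ W := by
    rw [Complex.norm_def, Complex.normSq_mk]
    rw [← sq, ← sq, hcirc, Real.sqrt_sq hR.le]
  have hζ0 : ζ ≠ 0 := by intro h; rw [h, norm_zero] at hζn; linarith
  refine ⟨(W, Complex.arg ζ), ⟨hW, ?_⟩, ?_⟩
  · refine ⟨Complex.neg_pi_lt_arg ζ, lt_of_le_of_ne (Complex.arg_le_pi ζ) ?_⟩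
    intro h
    rw [Complex.arg_eq_pi_iff] at h
    exact hz2 h.2
  · unfold dPhi
    simp only
    rw [Complex.cos_arg hζ0, Complex.sin_arg, hζn]
    have e1 : ζ.re = z.1 - ρ * W := rfl
    have e2 : ζ.im = z.2 := rfl
    rw [e1, e2]
    ext
    · simp only; field_simp; ring
    · simp only; field_simp

lemma disc_cov (ρ : ℝ) (hρ : 0 ≤ ρ) (hρ1 : ρ < 1) (f : ℝ × ℝ → ENNReal) :
    ∫⁻ z in {z : ℝ × ℝ | z.1 ^ 2 + z.2 ^ 2 < 1}, f z =
      ∫⁻ p in dS, ENNReal.ofReal ((1 + ρ ^ 2 - 2 * ρ * (dPhi ρ p).1) / 2) * f (dPhi ρ p) := by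
  have hae : ({z : ℝ × ℝ | z.1 ^ 2 + z.2 ^ 2 < 1} : Set (ℝ × ℝ)) =ᵐ[volume] (dPhi ρ '' dS) := by
    have hnull : (volume : Measure (ℝ × ℝ)) {z : ℝ × ℝ | z.2 = 0} = 0 := by
      have : {z : ℝ × ℝ | z.2 = 0} = (Set.univ : Set ℝ) ×ˢ ({0} : Set ℝ) := by ext; simp
      rw [this, Measure.volume_eq_prod, Measure.prod_prod]; simp
    have hae0 : ∀ᵐ z : ℝ × ℝ, z.2 ≠ 0 := by
      rw [ae_iff]; simpa using hnull
    filter_upwards [hae0] with z hz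
    apply propext
    constructor
    · intro h; exact dPhi_image_sup ρ hρ hρ1 z h hz
    · intro h; exact dPhi_image_sub ρ hρ hρ1 h
  have hmS : MeasurableSet dS := measurableSet_Ioo.prod measurableSet_Ioo
  rw [setLIntegral_congr hae, lintegral_image_eq_lintegral_abs_det_fderiv_mul volume hmS
    (fun p hp => (dPhi_hasFDerivAt ρ hρ hρ1 p hp.1).hasFDerivWithinAt) (dPhi_injOn ρ hρ hρ1)]
  apply setLIntegral_congr_fun hmS
  intro p hp
  simp only
  rw [dPhi'_det ρ hρ hρ1 p hp.1, abs_neg, abs_of_pos (half_pos (dPhi_q_pos ρ hρ hρ1 p hp.1))]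

noncomputable def discI (N κ ρ s s' : ℝ) : ENNReal :=
  ∫⁻ z in {z : ℝ × ℝ | z.1 ^ 2 + z.2 ^ 2 < 1}, ENNReal.ofReal
    (|s * z.1 + s' * z.2 - κ * ρ * s| * (1 - (z.1 ^ 2 + z.2 ^ 2)) ^ ((N - 4) / 2) *
      (1 + ρ ^ 2 - 2 * ρ * z.1) ^ ((2 - N) / 2))

lemma discI_eq (N κ ρ s s' : ℝ) (hρ : 0 ≤ ρ) (hρ1 : ρ < 1) :
    discI N κ ρ s s' = ∫⁻ W in Set.Ioo (0:ℝ) 1, ENNReal.ofReal (W ^ ((N - 4) / 2) / 2) *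
      ∫⁻ φ in Set.Ioo (-Real.pi) Real.pi, ENNReal.ofReal
        |(ρ * (W - κ)) * s + dR ρ W * (s * Real.cos φ + s' * Real.sin φ)| := by
  have hmS : MeasurableSet dS := measurableSet_Ioo.prod measurableSet_Ioo
  unfold discI
  rw [disc_cov ρ hρ hρ1]
  have h1 : ∫⁻ p in dS, ENNReal.ofReal ((1 + ρ ^ 2 - 2 * ρ * (dPhi ρ p).1) / 2) * ENNReal.ofReal
    (|s * (dPhi ρ p).1 + s' * (dPhi ρ p).2 - κ * ρ * s| * (1 - ((dPhi ρ p).1 ^ 2 + (dPhi ρ p).2 ^ 2)) ^ ((N - 4) / 2) *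
      (1 + ρ ^ 2 - 2 * ρ * (dPhi ρ p).1) ^ ((2 - N) / 2)) = 
      ∫⁻ p in dS, ENNReal.ofReal (p.1 ^ ((N - 4) / 2) / 2) * ENNReal.ofReal 
        |(ρ * (p.1 - κ)) * s + dR ρ p.1 * (s * Real.cos p.2 + s' * Real.sin p.2)| := by
    apply setLIntegral_congr_fun hmS
    intro p hp
    simp only
    have hq := dPhi_q_pos ρ hρ hρ1 p hp.1
    have hW : 0 < p.1 := hp.1.1
    rw [dPhi_norm ρ hρ hρ1 p hp.1]
    have h2 : s * (dPhi ρ p).1 + s' * (dPhi ρ p).2 - κ * ρ * s = 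
      (ρ * (p.1 - κ)) * s + dR ρ p.1 * (s * Real.cos p.2 + s' * Real.sin p.2) := by
      unfold dPhi; simp only; ring
    rw [h2]
    rw [← ENNReal.ofReal_mul (by positivity), ← ENNReal.ofReal_mul (by positivity)]
    congr 1
    rw [Real.mul_rpow hW.le hq.le]
    generalize 1 + ρ ^ 2 - 2 * ρ * (dPhi ρ p).1 = q at hq
    have h3 : q ^ ((N - 4) / 2) * q ^ ((2 - N) / 2) * q = 1 := by
      rw [← Real.rpow_add hq]
      nth_rewrite 2 [← Real.rpow_one q]
      rw [← Real.rpow_add hq]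
      have : (N - 4) / 2 + (2 - N) / 2 + 1 = 0 := by ring
      rw [this, Real.rpow_zero]
    linear_combination (|(ρ * (p.1 - κ)) * s + dR ρ p.1 * (s * Real.cos p.2 + s' * Real.sin p.2)| * p.1 ^ ((N - 4) / 2) / 2) * h3
  rw [h1]
  have hdR : Measurable (dR ρ) := by unfold dR; fun_prop
  unfold dS
  rw [Measure.volume_eq_prod, setLIntegral_prod]
  · apply setLIntegral_congr_fun measurableSet_Ioo
    intro W hW
    simp only
    rw [lintegral_const_mul]
    fun_prop
  · apply Measurable.aemeasurable
    fun_prop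

lemma discI_le (N κ ρ s s' : ℝ) (hρ : 0 ≤ ρ) (hρ1 : ρ < 1) (hs : s ^ 2 + s' ^ 2 = 1) :
    discI N κ ρ s s' ≤ discI N κ ρ 1 0 := by
  rw [discI_eq N κ ρ s s' hρ hρ1, discI_eq N κ ρ 1 0 hρ hρ1]
  apply lintegral_mono
  intro W
  simp only
  refine mul_le_mul' le_rfl ?_
  simpa using circle_lint (ρ * (W - κ)) (dR ρ W) s s' hs

lemma lintegral_norm_polar {k : ℕ} (hk : 0 < k) (f : ℝ → ENNReal) (hf : Measurable f) :
    ∫⁻ w : EuclideanSpace ℝ (Fin k), f ‖w‖ =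
      ((k : ENNReal) * volume (Metric.ball (0 : EuclideanSpace ℝ (Fin k)) 1)) *
        ∫⁻ r in Set.Ioi (0:ℝ), ENNReal.ofReal (r ^ (k - 1)) * f r := by
  have : Nontrivial (EuclideanSpace ℝ (Fin k)) := by
    have : Nonempty (Fin k) := ⟨⟨0, hk⟩⟩
    infer_instance
  let μ : Measure (EuclideanSpace ℝ (Fin k)) := volume
  have hdim : Module.finrank ℝ (EuclideanSpace ℝ (Fin k)) = k := by simp
  calc ∫⁻ w, f ‖w‖ ∂μ = ∫⁻ w : ({(0 : EuclideanSpace ℝ (Fin k))}ᶜ : Set _), f ‖w.1‖ ∂(μ.comap (↑)) := by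
        rw [lintegral_subtype_comap (measurableSet_singleton _).compl (fun x => f ‖x‖),
          restrict_compl_singleton]
    _ = ∫⁻ x, f x.2 ∂μ.toSphere.prod (.volumeIoiPow (Module.finrank ℝ (EuclideanSpace ℝ (Fin k)) - 1)) := by
        simpa using μ.measurePreserving_homeomorphUnitSphereProd.lintegral_comp_emb
          (Homeomorph.measurableEmbedding _) (f ∘ Subtype.val ∘ Prod.snd)
    _ = μ.toSphere Set.univ * ∫⁻ x : Set.Ioi (0:ℝ), f x ∂.volumeIoiPow (Module.finrank ℝ (EuclideanSpace ℝ (Fin k)) - 1) := by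
        rw [lintegral_prod]
        · simp [lintegral_const, mul_comm]
        · apply Measurable.aemeasurable
          fun_prop
    _ = _ := by
        rw [Measure.toSphere_apply_univ, Measure.volumeIoiPow, hdim]
        rw [lintegral_withDensity_eq_lintegral_mul _ (by fun_prop) (by fun_prop)]
        congr 1
        exact lintegral_subtype_comap measurableSet_Ioi (fun a => ENNReal.ofReal (a ^ (k - 1)) * f a)

lemma radial_subst {k : ℕ} (hk : 0 < k) (a : ℝ) (ha : 0 ≤ a) (H : ℝ → ENNReal) :
    ∫⁻ r in Set.Ioi (0:ℝ), ENNReal.ofReal (r ^ (k - 1)) * H (a + r ^ 2) =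
      ∫⁻ τ in Set.Ioi (Real.sqrt a), ENNReal.ofReal (τ * (τ ^ 2 - a) ^ (((k:ℝ) - 2) / 2)) * H (τ ^ 2) := by
  have hsa := Real.sqrt_nonneg a
  have hpos : ∀ τ ∈ Set.Ioi (Real.sqrt a), 0 < τ ∧ 0 < τ ^ 2 - a := by
    intro τ hτ
    have hτ' : Real.sqrt a < τ := hτ
    have h0 : 0 < τ := lt_of_le_of_lt hsa hτ'
    refine ⟨h0, ?_⟩
    have := (Real.sqrt_lt' h0).mp hτ'
    linarith
  have himg : (fun τ : ℝ => Real.sqrt (τ ^ 2 - a)) '' Set.Ioi (Real.sqrt a) = Set.Ioi 0 := by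
    ext r
    constructor
    · rintro ⟨τ, hτ, rfl⟩
      exact Real.sqrt_pos.mpr (hpos τ hτ).2
    · intro hr
      have hr' : 0 < r := hr
      refine ⟨Real.sqrt (a + r ^ 2), ?_, ?_⟩
      · exact Real.sqrt_lt_sqrt ha (by nlinarith)
      · simp only
        rw [Real.sq_sqrt (by positivity), add_sub_cancel_left, Real.sqrt_sq hr'.le]
  rw [← himg, lintegral_image_eq_lintegral_abs_deriv_mul measurableSet_Ioi
    (f' := fun τ => τ / Real.sqrt (τ ^ 2 - a))]
  · apply setLIntegral_congr_fun measurableSet_Ioi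
    intro τ hτ
    obtain ⟨h0, h1⟩ := hpos τ hτ
    simp only
    have hs := Real.sqrt_pos.mpr h1
    rw [Real.sq_sqrt h1.le, add_sub_cancel, ← mul_assoc, ← ENNReal.ofReal_mul (abs_nonneg _)]
    congr 2
    rw [abs_of_pos (by positivity)]
    have h2 : (τ ^ 2 - a) ^ (((k:ℝ) - 2) / 2) = Real.sqrt (τ ^ 2 - a) ^ (k - 1) / Real.sqrt (τ ^ 2 - a) := by
      have h3 : τ ^ 2 - a = Real.sqrt (τ ^ 2 - a) ^ (2:ℝ) := by
        rw [Real.rpow_two, Real.sq_sqrt h1.le]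
      nth_rewrite 1 [h3]
      generalize Real.sqrt (τ ^ 2 - a) = S at hs
      rw [← Real.rpow_mul hs.le, ← Real.rpow_natCast, ← Real.rpow_sub_one hs.ne']
      congr 1
      rw [Nat.cast_sub hk]; push_cast; ring
    rw [h2]; ring
  · intro τ hτ
    obtain ⟨h0, h1⟩ := hpos τ hτ
    have h2 : HasDerivAt (fun τ : ℝ => τ ^ 2 - a) (2 * τ) τ := by
      simpa using (hasDerivAt_pow 2 τ).sub_const a
    refine ((h2.sqrt h1.ne').congr_deriv ?_).hasDerivWithinAt
    rw [mul_div_mul_left _ _ two_ne_zero]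
  · intro s hs t ht h
    obtain ⟨h0, h1⟩ := hpos s hs
    obtain ⟨h0', h1'⟩ := hpos t ht
    simp only at h
    rw [Real.sqrt_inj h1.le h1'.le] at h
    have : s ^ 2 = t ^ 2 := by linarith
    exact (pow_left_inj₀ h0.le h0'.le two_ne_zero).mp this

lemma lintegral_dilate {Z : Type*} [NormedAddCommGroup Z] [NormedSpace ℝ Z] [MeasurableSpace Z]
    [BorelSpace Z] [FiniteDimensional ℝ Z] (μ : Measure Z) [μ.IsAddHaarMeasure]
    (τ : ℝ) (hτ : 0 < τ) (F : Z → ENNReal) :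
    ∫⁻ z, F z ∂μ = ENNReal.ofReal (τ ^ (Module.finrank ℝ Z)) * ∫⁻ z, F (τ • z) ∂μ := by
  have h1 := Measure.map_addHaar_smul μ hτ.ne'
  have h2 : ∫⁻ z, F (τ • z) ∂μ = ∫⁻ z, F z ∂(Measure.map (τ • ·) μ) := by
    exact ((Homeomorph.smulOfNeZero τ hτ.ne').measurableEmbedding.lintegral_map F).symm
  rw [h2, h1, lintegral_smul_measure, smul_eq_mul, ← mul_assoc, ← ENNReal.ofReal_mul (by positivity),
    abs_of_pos (by positivity), mul_inv_cancel₀ (by positivity)]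
  simp

lemma proj_formula {Z : Type*} [NormedAddCommGroup Z] [NormedSpace ℝ Z] [MeasurableSpace Z]
    [BorelSpace Z] [FiniteDimensional ℝ Z] (μ : Measure Z) [μ.IsAddHaarMeasure]
    {k : ℕ} (hk : 0 < k) (q : Z → ℝ) (hq : Measurable q) (hq0 : ∀ z, 0 ≤ q z)
    (hqs : ∀ (τ : ℝ) z, q (τ • z) = τ ^ 2 * q z) (G : Z → ℝ → ENNReal)
    (hG : Measurable (Function.uncurry G)) :
    ∫⁻ z, (∫⁻ w : EuclideanSpace ℝ (Fin k), G z (q z + ‖w‖ ^ 2)) ∂μ =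
      ((k : ENNReal) * volume (Metric.ball (0 : EuclideanSpace ℝ (Fin k)) 1)) *
        ∫⁻ τ in Set.Ioi (0:ℝ), ENNReal.ofReal (τ ^ (Module.finrank ℝ Z + k - 1)) *
          ∫⁻ z in {z | q z < 1}, ENNReal.ofReal ((1 - q z) ^ (((k:ℝ) - 2) / 2)) * G (τ • z) (τ ^ 2) ∂μ := by
  have hms : MeasurableSet {z | q z < 1} := hq measurableSet_Iio
  have hGz : ∀ z, Measurable (G z) := fun z => hG.comp (measurable_const.prodMk measurable_id)
  have step1 : ∀ z, ∫⁻ w : EuclideanSpace ℝ (Fin k), G z (q z + ‖w‖ ^ 2) =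
      ((k : ENNReal) * volume (Metric.ball (0 : EuclideanSpace ℝ (Fin k)) 1)) *
      ∫⁻ τ in Set.Ioi (0:ℝ), (if q z < τ ^ 2 then 
        ENNReal.ofReal (τ * (τ ^ 2 - q z) ^ (((k:ℝ) - 2) / 2)) * G z (τ ^ 2) else 0) := by
    intro z
    rw [lintegral_norm_polar hk (fun r => G z (q z + r ^ 2)) ((hGz z).comp (by fun_prop)),
      radial_subst hk (q z) (hq0 z)]
    congr 1
    rw [← lintegral_indicator measurableSet_Ioi, ← lintegral_indicator measurableSet_Ioi]
    congr 1
    ext τ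
    have hiff : Real.sqrt (q z) < τ ↔ (0 < τ ∧ q z < τ ^ 2) := by
      constructor
      · intro h
        have h0 := lt_of_le_of_lt (Real.sqrt_nonneg _) h
        exact ⟨h0, (Real.sqrt_lt' h0).mp h⟩
      · rintro ⟨h0, h⟩
        exact (Real.sqrt_lt' h0).mpr h
    simp only [Set.indicator_apply, Set.mem_Ioi, hiff]
    by_cases h0 : 0 < τ <;> by_cases h1 : q z < τ ^ 2 <;> simp [h0, h1]
  have hmeas : Measurable (Function.uncurry fun (z : Z) (τ : ℝ) => (if q z < τ ^ 2 then 
        ENNReal.ofReal (τ * (τ ^ 2 - q z) ^ (((k:ℝ) - 2) / 2)) * G z (τ ^ 2) else 0)) := by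
    apply Measurable.ite
    · exact measurableSet_lt (hq.comp measurable_fst) (measurable_snd.pow_const 2)
    · apply Measurable.mul
      · have : Measurable (fun p : Z × ℝ => q p.1) := hq.comp measurable_fst
        apply ENNReal.measurable_ofReal.comp
        apply measurable_snd.mul
        apply Measurable.pow_const
        exact (measurable_snd.pow_const 2).sub this
      · exact hG.comp (measurable_fst.prodMk (measurable_snd.pow_const 2))
    · exact measurable_const
  simp_rw [step1]
  rw [lintegral_const_mul' _ _ (ENNReal.mul_ne_top (ENNReal.natCast_ne_top _) measure_ball_lt_top.ne)]
  congr 1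
  rw [lintegral_lintegral_swap hmeas.aemeasurable]
  apply setLIntegral_congr_fun measurableSet_Ioi
  intro τ hτ
  have hτ0 : 0 < τ := hτ
  simp only
  rw [lintegral_dilate μ τ hτ0]
  have e1 : ∀ z, (if q (τ • z) < τ ^ 2 then 
        ENNReal.ofReal (τ * (τ ^ 2 - q (τ • z)) ^ (((k:ℝ) - 2) / 2)) * G (τ • z) (τ ^ 2) else 0) = 
        ENNReal.ofReal (τ ^ (k - 1)) * Set.indicator {z | q z < 1} (fun z => ENNReal.ofReal ((1 - q z) ^ (((k:ℝ) - 2) / 2)) * G (τ • z) (τ ^ 2)) z := by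
    intro z
    rw [hqs]
    have hiff : τ ^ 2 * q z < τ ^ 2 ↔ q z < 1 := by
      have : 0 < τ ^ 2 := by positivity
      constructor <;> intro h <;> nlinarith
    simp only [hiff, Set.indicator_apply, Set.mem_ofPred_eq]
    by_cases h : q z < 1
    · simp only [h, if_true]
      rw [← mul_assoc, ← ENNReal.ofReal_mul (by positivity)]
      congr 2
      have : τ ^ 2 - τ ^ 2 * q z = τ ^ 2 * (1 - q z) := by ring
      rw [this, Real.mul_rpow (by positivity) (by linarith), ← mul_assoc]
      congr 1
      rw [← Real.rpow_natCast, ← Real.rpow_natCast, ← Real.rpow_mul hτ0.le]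
      nth_rewrite 1 [← Real.rpow_one τ]
      rw [← Real.rpow_add hτ0]
      congr 1
      rw [Nat.cast_sub hk]; push_cast; ring
    · simp [h]
  simp_rw [e1]
  rw [lintegral_const_mul' _ _ ENNReal.ofReal_ne_top, lintegral_indicator hms, ← mul_assoc, ← ENNReal.ofReal_mul (by positivity), ← pow_add]
  congr 4
  omega

lemma decomp_pi {d k n : ℕ} (hn : n = d + k) (v : Fin d → EuclideanSpace ℝ (Fin n))
    (hv : Orthonormal ℝ v) (G : (Fin d → ℝ) → ℝ → ENNReal) (hG : Measurable (Function.uncurry G)) :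
    ∫⁻ y, G (fun i => inner ℝ (v i) y) (‖y‖ ^ 2) =
      ∫⁻ z : Fin d → ℝ, ∫⁻ w : EuclideanSpace ℝ (Fin k), G z (∑ i, z i ^ 2 + ‖w‖ ^ 2) := by
  have hcard : Module.finrank ℝ (EuclideanSpace ℝ (Fin n)) = Fintype.card (Fin d ⊕ Fin k) := by
    simp [hn]
  let v' : Fin d ⊕ Fin k → EuclideanSpace ℝ (Fin n) := Sum.elim v 0
  have hv' : Orthonormal ℝ ((Set.range (Sum.inl : Fin d → Fin d ⊕ Fin k)).domRestrict v') := by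
    have : (Set.range (Sum.inl : Fin d → Fin d ⊕ Fin k)).domRestrict v' = 
       v ∘ (Equiv.ofInjective (Sum.inl : Fin d → Fin d ⊕ Fin k) Sum.inl_injective).symm := by
      ext1 ⟨j, i, hi⟩
      subst hi
      simp [v', Set.domRestrict]
    rw [this]
    exact hv.comp _ (Equiv.injective _)
  obtain ⟨b, hb⟩ := hv'.exists_orthonormalBasis_extension_of_card_eq hcard
  have hb1 : ∀ i, b (Sum.inl i) = v i := fun i => hb (Sum.inl i) ⟨i, rfl⟩
  have hT := ((volume_measurePreserving_sumPiEquivProdPi (fun _ : Fin d ⊕ Fin k => ℝ)).comp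
    (PiLp.volume_preserving_ofLp (Fin d ⊕ Fin k))).comp b.measurePreserving_repr
  have hHm : Measurable (fun q : (Fin d → ℝ) × (Fin k → ℝ) => G q.1 (∑ i, q.1 i ^ 2 + ∑ j, q.2 j ^ 2)) := by
    have : Measurable (fun q : (Fin d → ℝ) × (Fin k → ℝ) => (q.1, ∑ i, q.1 i ^ 2 + ∑ j, q.2 j ^ 2)) := by
      fun_prop
    exact hG.comp this
  have h1 := hT.lintegral_comp hHm
  have h2 : ∀ y, G (fun i => inner ℝ (v i) y) (‖y‖ ^ 2) = 
     (fun q : (Fin d → ℝ) × (Fin k → ℝ) => G q.1 (∑ i, q.1 i ^ 2 + ∑ j, q.2 j ^ 2)) 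
      (((MeasurableEquiv.sumPiEquivProdPi fun _ : Fin d ⊕ Fin k => ℝ) ∘ WithLp.ofLp) ∘ ⇑b.repr <| y) := by
    intro y
    have e1 : ‖y‖ ^ 2 = ∑ i, (b.repr y (Sum.inl i)) ^ 2 + ∑ j, (b.repr y (Sum.inr j)) ^ 2 := by
      rw [← b.repr.norm_map y, EuclideanSpace.norm_sq_eq, Fintype.sum_sum_type]
      simp
    have e2 : (fun i => inner ℝ (v i) y) = fun i => b.repr y (Sum.inl i) := by
      ext i
      rw [b.repr_apply_apply, hb1]
    rw [e1, e2]
    rfl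
  simp_rw [h2]
  rw [h1, Measure.volume_eq_prod, lintegral_prod _ hHm.aemeasurable]
  congr 1
  ext z
  have h3 := (PiLp.volume_preserving_ofLp (Fin k)).lintegral_comp 
    (f := fun w => G z (∑ i, z i ^ 2 + ∑ j, w j ^ 2)) (hHm.comp (measurable_const.prodMk measurable_id))
  rw [← h3]
  congr 1
  ext w
  rw [EuclideanSpace.norm_sq_eq]
  simp

lemma decomp_one {k n : ℕ} (hn : n = 1 + k) (e : EuclideanSpace ℝ (Fin n))
    (he : ‖e‖ = 1) (G : ℝ → ℝ → ENNReal) (hG : Measurable (Function.uncurry G)) :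
    ∫⁻ y, G (inner ℝ e y) (‖y‖ ^ 2) =
      ∫⁻ z : ℝ, ∫⁻ w : EuclideanSpace ℝ (Fin k), G z (z ^ 2 + ‖w‖ ^ 2) := by
  have hv : Orthonormal ℝ (fun _ : Fin 1 => e) := by
    constructor
    · intro i; exact he
    · intro i j hij; exact absurd (Subsingleton.elim i j) hij
  have h1 := decomp_pi hn (fun _ : Fin 1 => e) hv (fun z s => G (z 0) s) (by
    have : Measurable (fun q : (Fin 1 → ℝ) × ℝ => (q.1 0, q.2)) := by fun_prop
    exact hG.comp this)
  rw [h1]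
  have h2 := (volume_preserving_funUnique (Fin 1) ℝ).lintegral_comp_emb (MeasurableEquiv.measurableEmbedding _)
    (fun z => ∫⁻ w : EuclideanSpace ℝ (Fin k), G z (z ^ 2 + ‖w‖ ^ 2))
  rw [← h2]
  congr 1
  ext z
  simp [MeasurableEquiv.funUnique]

lemma decomp_two {k n : ℕ} (hn : n = 2 + k) (e m : EuclideanSpace ℝ (Fin n))
    (he : ‖e‖ = 1) (hm : ‖m‖ = 1) (hem : inner ℝ e m = 0) (G : ℝ × ℝ → ℝ → ENNReal) (hG : Measurable (Function.uncurry G)) :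
    ∫⁻ y, G (inner ℝ e y, inner ℝ m y) (‖y‖ ^ 2) =
      ∫⁻ z : ℝ × ℝ, ∫⁻ w : EuclideanSpace ℝ (Fin k), G z ((z.1 ^ 2 + z.2 ^ 2) + ‖w‖ ^ 2) := by
  have hv : Orthonormal ℝ (![e, m]) := by
    constructor
    · intro i; fin_cases i <;> simp [he, hm]
    · intro i j hij
      fin_cases i <;> fin_cases j <;> simp_all [real_inner_comm]
  have h1 := decomp_pi hn (![e, m]) hv (fun z s => G (z 0, z 1) s) (by
    have : Measurable (fun q : (Fin 2 → ℝ) × ℝ => ((q.1 0, q.1 1), q.2)) := by fun_prop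
    exact hG.comp this)
  simp only [Matrix.cons_val_zero, Matrix.cons_val_one] at h1
  rw [h1]
  have h2 := (volume_preserving_finTwoArrow ℝ).lintegral_comp_emb (MeasurableEquiv.measurableEmbedding _)
    (fun z => ∫⁻ w : EuclideanSpace ℝ (Fin k), G z ((z.1 ^ 2 + z.2 ^ 2) + ‖w‖ ^ 2))
  rw [← h2]
  congr 1
  ext z
  simp [MeasurableEquiv.finTwoArrow]

noncomputable def AI {n : ℕ} (ϑ : ℝ → ℝ) (x ℓ : EuclideanSpace ℝ (Fin n)) : ENNReal :=
  ∫⁻ y, ENNReal.ofReal (ϑ (‖y‖ ^ 2) * |n * inner ℝ y ℓ - ((n:ℝ) - 2) * inner ℝ x ℓ * ‖y‖ ^ 2| *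
    (1 - 2 * inner ℝ x y + ‖x‖ ^ 2 * ‖y‖ ^ 2) ^ ((2 - (n:ℝ)) / 2))

lemma AI_two {k n : ℕ} (hk : 0 < k) (hn : n = 2 + k) (ϑ : ℝ → ℝ) (hϑ : Continuous ϑ) (hϑ0 : ∀ s, 0 ≤ ϑ s)
    (ρ : ℝ) (hρ : 0 ≤ ρ) (e m : EuclideanSpace ℝ (Fin n)) (he : ‖e‖ = 1) (hm : ‖m‖ = 1)
    (hem : inner ℝ e m = 0) (s s' : ℝ) :
    AI ϑ (ρ • e) (s • e + s' • m) =
      ((k : ENNReal) * volume (Metric.ball (0 : EuclideanSpace ℝ (Fin k)) 1)) *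
        ∫⁻ τ in Set.Ioi (0:ℝ), ENNReal.ofReal (τ ^ (2 + k - 1)) *
          (ENNReal.ofReal (ϑ (τ ^ 2) * n * τ) * discI n (((n:ℝ) - 2) / n) (ρ * τ) s s') := by
  have hn0 : (n:ℝ) ≠ 0 := by
    have : n ≠ 0 := by omega
    exact_mod_cast this
  have hnpos : (0:ℝ) ≤ n := by positivity
  let G : ℝ × ℝ → ℝ → ENNReal := fun z σ => ENNReal.ofReal
    (ϑ σ * |n * (s * z.1 + s' * z.2) - ((n:ℝ) - 2) * (ρ * s) * σ| * (1 - 2 * (ρ * z.1) + ρ ^ 2 * σ) ^ ((2 - (n:ℝ)) / 2))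
  have hG : Measurable (Function.uncurry G) := by
    have := hϑ.measurable
    simp only [G, Function.uncurry_def]
    fun_prop
  have hee : inner ℝ e e = (1:ℝ) := by rw [real_inner_self_eq_norm_sq, he]; norm_num
  have h1 : AI ϑ (ρ • e) (s • e + s' • m) = ∫⁻ y, G (inner ℝ e y, inner ℝ m y) (‖y‖ ^ 2) := by
    unfold AI
    congr 1
    ext y
    simp only [G, inner_add_right, inner_smul_left, inner_smul_right, hee, hem, norm_smul, he,
      real_inner_comm y]
    simp [abs_of_nonneg hρ, real_inner_comm, mul_comm s ρ]
  have hfr : Module.finrank ℝ (ℝ × ℝ) = 2 := by simp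
  rw [h1, decomp_two hn e m he hm hem G hG,
    proj_formula volume hk (fun z : ℝ × ℝ => z.1 ^ 2 + z.2 ^ 2) (by fun_prop) (fun z => by positivity)
    (fun τ z => by simp; ring) G hG, hfr]
  congr 1
  apply setLIntegral_congr_fun measurableSet_Ioi
  intro τ hτ
  have hτ0 : 0 < τ := hτ
  simp only
  congr 1
  unfold discI
  rw [← lintegral_const_mul' _ _ ENNReal.ofReal_ne_top]
  apply setLIntegral_congr_fun
  · exact measurableSet_lt (by fun_prop) (by fun_prop)
  intro z hz
  have hz' : z.1 ^ 2 + z.2 ^ 2 < 1 := hz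
  simp only [G, Prod.smul_fst, Prod.smul_snd, smul_eq_mul]
  have h0 := hϑ0 (τ ^ 2)
  rw [← ENNReal.ofReal_mul (by apply Real.rpow_nonneg; linarith), ← ENNReal.ofReal_mul (by positivity)]
  congr 1
  have e1 : n * (s * (τ * z.1) + s' * (τ * z.2)) - ((n:ℝ) - 2) * (ρ * s) * τ ^ 2 = 
    (n * τ) * (s * z.1 + s' * z.2 - ((n:ℝ) - 2) / n * (ρ * τ) * s) := by field_simp
  have e2 : 1 - 2 * (ρ * (τ * z.1)) + ρ ^ 2 * τ ^ 2 = 1 + (ρ * τ) ^ 2 - 2 * (ρ * τ) * z.1 := by ring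
  have e3 : ((k:ℝ) - 2) / 2 = ((n:ℝ) - 4) / 2 := by rw [hn]; push_cast; ring
  rw [e1, e2, e3, abs_mul, abs_of_nonneg (by positivity : (0:ℝ) ≤ n * τ)]
  ring

lemma AI_le {n : ℕ} (hn : 3 ≤ n) (ϑ : ℝ → ℝ) (hϑ : Continuous ϑ) (hϑ0 : ∀ s, 0 ≤ ϑ s)
    (hϑ1 : ∀ s, 1 ≤ s → ϑ s = 0)
    (ρ : ℝ) (hρ : 0 ≤ ρ) (hρ1 : ρ < 1) (e ℓ : EuclideanSpace ℝ (Fin n)) (he : ‖e‖ = 1) (hl : ‖ℓ‖ = 1) :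
    AI ϑ (ρ • e) ℓ ≤ AI ϑ (ρ • e) e := by
  obtain ⟨s, hs⟩ : ∃ s : ℝ, s = inner ℝ e ℓ := ⟨_, rfl⟩
  obtain ⟨r, hr⟩ : ∃ r, r = ℓ - s • e := ⟨_, rfl⟩
  have hee : inner ℝ e e = (1:ℝ) := by rw [real_inner_self_eq_norm_sq, he]; norm_num
  have her : inner ℝ e r = 0 := by
    rw [hr, inner_sub_right, inner_smul_right, hee, ← hs]; ring
  have hsum : ℓ = s • e + r := by rw [hr]; abel
  have hpy : s ^ 2 + ‖r‖ ^ 2 = 1 := by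
    have h1 : ‖ℓ‖ ^ 2 = 1 := by rw [hl]; norm_num
    rw [hsum, norm_add_sq_real, inner_smul_left, her, norm_smul, he] at h1
    simp at h1
    linarith
  by_cases hr0 : r = 0
  · have hs1 : |s| = 1 := by
      rw [hr0] at hpy
      simp at hpy
      rcases hpy with h | h <;> simp [h]
    rw [hsum, hr0, add_zero]
    apply le_of_eq
    unfold AI
    congr 1
    ext y
    congr 3
    rw [inner_smul_right, inner_smul_right]
    have : (n:ℝ) * (s * inner ℝ y e) - ((n:ℝ) - 2) * (s * inner ℝ (ρ • e) e) * ‖y‖ ^ 2 = 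
      s * ((n:ℝ) * inner ℝ y e - ((n:ℝ) - 2) * inner ℝ (ρ • e) e * ‖y‖ ^ 2) := by ring
    rw [this, abs_mul, hs1, one_mul]
  · have hrn : 0 < ‖r‖ := norm_pos_iff.mpr hr0
    obtain ⟨m, hm⟩ : ∃ m, m = ‖r‖⁻¹ • r := ⟨_, rfl⟩
    have hm1 : ‖m‖ = 1 := by rw [hm, norm_smul, norm_inv, norm_norm, inv_mul_cancel₀ hrn.ne']
    have hem : inner ℝ e m = 0 := by rw [hm, inner_smul_right, her, mul_zero]
    have hrm : r = ‖r‖ • m := by rw [hm, smul_smul, mul_inv_cancel₀ hrn.ne', one_smul]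
    have hn2 : n = 2 + (n - 2) := by omega
    have hk : 0 < n - 2 := by omega
    have hE : AI ϑ (ρ • e) e = AI ϑ (ρ • e) ((1:ℝ) • e + (0:ℝ) • m) := by simp
    have hL : AI ϑ (ρ • e) ℓ = AI ϑ (ρ • e) (s • e + ‖r‖ • m) := by rw [← hrm, ← hsum]
    rw [hE, hL, AI_two hk hn2 ϑ hϑ hϑ0 ρ hρ e m he hm1 hem, AI_two hk hn2 ϑ hϑ hϑ0 ρ hρ e m he hm1 hem]
    refine mul_le_mul' le_rfl ?_
    apply setLIntegral_mono' measurableSet_Ioi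
    intro τ hτ
    have hτ0 : 0 < τ := hτ
    refine mul_le_mul' le_rfl ?_
    by_cases hτ1 : τ < 1
    · refine mul_le_mul' le_rfl (discI_le _ _ _ _ _ (by positivity) (by nlinarith) hpy)
    · rw [hϑ1 (τ ^ 2) (by nlinarith)]
      simp

/-- One-dimensional integral. -/
noncomputable def JI (N κ ρ : ℝ) : ENNReal :=
  ∫⁻ t in Set.Ioo (-1:ℝ) 1, ENNReal.ofReal
    (|t - κ * ρ| * (1 - t ^ 2) ^ ((N - 3) / 2) * (1 + ρ ^ 2 - 2 * ρ * t) ^ ((2 - N) / 2))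

lemma AI_one {k n : ℕ} (hk : 0 < k) (hn : n = 1 + k) (ϑ : ℝ → ℝ) (hϑ : Continuous ϑ) (hϑ0 : ∀ s, 0 ≤ ϑ s)
    (ρ : ℝ) (hρ : 0 ≤ ρ) (e : EuclideanSpace ℝ (Fin n)) (he : ‖e‖ = 1) :
    AI ϑ (ρ • e) e =
      ((k : ENNReal) * volume (Metric.ball (0 : EuclideanSpace ℝ (Fin k)) 1)) *
        ∫⁻ τ in Set.Ioi (0:ℝ), ENNReal.ofReal (τ ^ k) *
          (ENNReal.ofReal (ϑ (τ ^ 2) * n * τ) * JI n (((n:ℝ) - 2) / n) (ρ * τ)) := by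
  have hn0 : (n:ℝ) ≠ 0 := by
    have : n ≠ 0 := by omega
    exact_mod_cast this
  have hnpos : (0:ℝ) ≤ n := by positivity
  let G : ℝ → ℝ → ENNReal := fun z σ => ENNReal.ofReal
    (ϑ σ * |n * z - ((n:ℝ) - 2) * ρ * σ| * (1 - 2 * (ρ * z) + ρ ^ 2 * σ) ^ ((2 - (n:ℝ)) / 2))
  have hG : Measurable (Function.uncurry G) := by
    have := hϑ.measurable
    simp only [G, Function.uncurry_def]
    fun_prop
  have hee : inner ℝ e e = (1:ℝ) := by rw [real_inner_self_eq_norm_sq, he]; norm_num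
  have h1 : AI ϑ (ρ • e) e = ∫⁻ y, G (inner ℝ e y) (‖y‖ ^ 2) := by
    unfold AI
    congr 1
    ext y
    have hc : inner ℝ y e = inner ℝ e y := real_inner_comm _ _
    simp only [G, inner_smul_left, hee, norm_smul, he, hc]
    simp [abs_of_nonneg hρ]
  have hfr : Module.finrank ℝ ℝ = 1 := by simp
  rw [h1, decomp_one hn e he G hG,
    proj_formula volume hk (fun z : ℝ => z ^ 2) (by fun_prop) (fun z => by positivity)
    (fun τ z => by simp; ring) G hG, hfr]
  congr 1
  apply setLIntegral_congr_fun measurableSet_Ioi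
  intro τ hτ
  have hτ0 : 0 < τ := hτ
  simp only
  rw [Nat.add_sub_cancel_left]
  congr 1
  unfold JI
  rw [← lintegral_const_mul' _ _ ENNReal.ofReal_ne_top]
  have hset : {z : ℝ | z ^ 2 < 1} = Set.Ioo (-1) 1 := by
    ext z
    simp [abs_lt]
  rw [hset]
  apply setLIntegral_congr_fun measurableSet_Ioo
  intro z hz
  have hz' : z ^ 2 < 1 := by rw [← hset] at hz; exact hz
  simp only [G, smul_eq_mul]
  have h0 := hϑ0 (τ ^ 2)
  rw [← ENNReal.ofReal_mul (by apply Real.rpow_nonneg; linarith), ← ENNReal.ofReal_mul (by positivity)]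
  congr 1
  have e1 : n * (τ * z) - ((n:ℝ) - 2) * ρ * τ ^ 2 = 
    (n * τ) * (z - ((n:ℝ) - 2) / n * (ρ * τ)) := by field_simp
  have e2 : 1 - 2 * (ρ * (τ * z)) + ρ ^ 2 * τ ^ 2 = 1 + (ρ * τ) ^ 2 - 2 * (ρ * τ) * z := by ring
  have e3 : ((k:ℝ) - 2) / 2 = ((n:ℝ) - 3) / 2 := by rw [hn]; push_cast; ring
  rw [e1, e2, e3, abs_mul, abs_of_nonneg (by positivity : (0:ℝ) ≤ n * τ)]
  ring

noncomputable def Jr (n : ℕ) (ρ : ℝ) : ℝ :=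
  ∫ t in (-1 : ℝ)..1, |t - (((n : ℝ) - 2) / n) * ρ| * (1 - t ^ 2) ^ (((n : ℝ) - 3) / 2) /
            (1 - 2 * t * ρ + ρ ^ 2) ^ (((n : ℝ) - 2) / 2)

lemma Jden_lb (t ρ : ℝ) (ht : t ∈ Set.Icc (-1:ℝ) 1) (hρ : 0 ≤ ρ) : (1 - ρ) ^ 2 ≤ 1 - 2 * t * ρ + ρ ^ 2 := by
  nlinarith [ht.2]

lemma JI_eq (n : ℕ) (hn : 3 ≤ n) (ρ : ℝ) (hρ : 0 ≤ ρ) (hρ1 : ρ < 1) :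
    JI n (((n:ℝ) - 2) / n) ρ = ENNReal.ofReal (Jr n ρ) := by
  have hn3 : (3:ℝ) ≤ n := by exact_mod_cast hn
  have hd : ∀ t ∈ Set.Icc (-1:ℝ) 1, 0 < 1 - 2 * t * ρ + ρ ^ 2 := fun t ht => 
    lt_of_lt_of_le (by apply pow_pos; linarith) (Jden_lb t ρ ht hρ)
  unfold Jr JI
  rw [intervalIntegral.integral_of_le (by norm_num), integral_Ioc_eq_integral_Ioo]
  rw [ofReal_integral_eq_lintegral_ofReal]
  · apply setLIntegral_congr_fun measurableSet_Ioo
    intro t ht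
    have h0 := hd t ⟨ht.1.le, ht.2.le⟩
    simp only
    congr 1
    have e1 : 1 + ρ ^ 2 - 2 * ρ * t = 1 - 2 * t * ρ + ρ ^ 2 := by ring
    have e2 : (2 - (n:ℝ)) / 2 = -(((n:ℝ) - 2) / 2) := by ring
    rw [e1, e2, Real.rpow_neg h0.le, ← div_eq_mul_inv]
  · have : ContinuousOn (fun t : ℝ => |t - (((n : ℝ) - 2) / n) * ρ| * (1 - t ^ 2) ^ (((n : ℝ) - 3) / 2) /
            (1 - 2 * t * ρ + ρ ^ 2) ^ (((n : ℝ) - 2) / 2)) (Set.Icc (-1) 1) := by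
      apply ContinuousOn.div
      · apply ContinuousOn.mul
        · fun_prop
        · apply ContinuousOn.rpow_const (by fun_prop)
          intro t ht; right; linarith
      · apply ContinuousOn.rpow_const (by fun_prop)
        intro t ht; right; linarith
      · intro t ht
        exact (Real.rpow_pos_of_pos (hd t ht) _).ne'
    exact (this.integrableOn_compact isCompact_Icc).mono_set Set.Ioo_subset_Icc_self
  · filter_upwards [ae_restrict_mem measurableSet_Ioo] with t ht
    have h0 := hd t ⟨ht.1.le, ht.2.le⟩
    have h1 : 0 ≤ 1 - t ^ 2 := by nlinarith [ht.1, ht.2]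
    simp only [Pi.zero_apply]
    positivity

lemma Jr_nonneg (n : ℕ) (ρ : ℝ) (hρ : 0 ≤ ρ) : 0 ≤ Jr n ρ := by
  unfold Jr
  apply intervalIntegral.integral_nonneg (by norm_num)
  intro t ht
  have h0 := (sq_nonneg (1 - ρ)).trans (Jden_lb t ρ ht hρ)
  have h1 : 0 ≤ 1 - t ^ 2 := by nlinarith [ht.1, ht.2]
  positivity

lemma Jr_cont (n : ℕ) (hn : 3 ≤ n) (r : ℝ) (hr : r < 1) :
    ∃ Jc : ℝ → ℝ, Continuous Jc ∧ ∀ ρ, 0 ≤ ρ → ρ ≤ r → Jr n ρ = Jc ρ := by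
  have hn3 : (3:ℝ) ≤ n := by exact_mod_cast hn
  refine ⟨fun ρ => ∫ t in (-1 : ℝ)..1, |t - (((n : ℝ) - 2) / n) * ρ| * (1 - t ^ 2) ^ (((n : ℝ) - 3) / 2) /
            (max (1 - 2 * t * ρ + ρ ^ 2) ((1 - r) ^ 2)) ^ (((n : ℝ) - 2) / 2), ?_, ?_⟩
  · apply intervalIntegral.continuous_parametric_intervalIntegral_of_continuous'
    have hpos : ∀ p : ℝ × ℝ, 0 < max (1 - 2 * p.2 * p.1 + p.1 ^ 2) ((1 - r) ^ 2) := fun p =>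
      lt_of_lt_of_le (by apply pow_pos; linarith) (le_max_right _ _)
    simp only [Function.uncurry_def]
    apply Continuous.div
    · apply Continuous.mul (by fun_prop)
      apply Continuous.rpow_const (by fun_prop)
      intro p; right; linarith
    · apply Continuous.rpow_const (by fun_prop)
      intro p; right; linarith
    · intro p
      exact (Real.rpow_pos_of_pos (hpos p) _).ne'
  · intro ρ h0 h1
    unfold Jr
    apply intervalIntegral.integral_congr
    intro t ht
    rw [Set.uIcc_of_le (by norm_num)] at ht
    simp only
    rw [max_eq_left]
    refine le_trans ?_ (Jden_lb t ρ ht h0)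
    nlinarith

noncomputable def cN (n : ℕ) : ℝ :=
  2 * Real.Gamma (((n : ℝ) + 2) / 2) / (Real.Gamma (1 / 2) * Real.Gamma (((n : ℝ) - 1) / 2))

noncomputable def vB (k : ℕ) : ℝ := √Real.pi ^ k / Real.Gamma ((k:ℝ) / 2 + 1)

lemma vB_pos (k : ℕ) : 0 < vB k := by
  unfold vB
  have := Real.Gamma_pos_of_pos (by positivity : 0 < (k:ℝ) / 2 + 1)
  positivity

lemma vol_ball {k : ℕ} (hk : 0 < k) : volume (Metric.ball (0 : EuclideanSpace ℝ (Fin k)) 1) = ENNReal.ofReal (vB k) := by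
  have : Nonempty (Fin k) := ⟨⟨0, hk⟩⟩
  rw [EuclideanSpace.volume_ball]
  simp [vB]

lemma const_id {n : ℕ} (hn : 3 ≤ n) : cN n * vB n = ((n:ℝ) - 1) * vB (n - 1) := by
  have hn3 : (3:ℝ) ≤ n := by exact_mod_cast hn
  have hcast : ((n - 1 : ℕ) : ℝ) = n - 1 := by rw [Nat.cast_sub (by omega)]; simp
  unfold cN vB
  rw [hcast, Real.Gamma_add_one (by linarith : ((n:ℝ) - 1) / 2 ≠ 0) , Real.Gamma_one_half_eq]
  have h1 : ((n:ℝ) + 2) / 2 = n / 2 + 1 := by ring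
  rw [h1]
  have g1 := Real.Gamma_pos_of_pos (by positivity : 0 < (n:ℝ) / 2 + 1)
  have g2 := Real.Gamma_pos_of_pos (by linarith : 0 < ((n:ℝ) - 1) / 2)
  have hpi : 0 < √Real.pi := by positivity
  have h2 : √Real.pi ^ n = √Real.pi ^ (n - 1) * √Real.pi := by
    rw [← pow_succ]; congr 1; omega
  have h3 : (n:ℝ) - 1 ≠ 0 := by linarith
  rw [h2]
  field_simp

lemma X_mul_le {n : ℕ} (hn : 3 ≤ n) (g : EuclideanSpace ℝ (Fin n) → ℝ)
    (hg : ContDiffOn ℝ 2 g (Metric.ball 0 1)) (hlap : ∀ y, ‖y‖ < 1 → lapl g y = 0)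
    (x ℓ : EuclideanSpace ℝ (Fin n))
    (hb : ∀ y, ‖y‖ < 1 → |g y| ≤ (1 - 2 * inner ℝ x y + ‖x‖ ^ 2 * ‖y‖ ^ 2) ^ ((2 - (n:ℝ)) / 2))
    (ϑ : ℝ → ℝ) (hϑ : Continuous ϑ) (hϑ0 : ∀ s, 0 ≤ ϑ s) (β : ℝ) (hβ : β < 1) (hz : ∀ s, β ≤ s → ϑ s = 0) :
    ENNReal.ofReal (|fderiv ℝ g 0 ℓ - (((n:ℝ) - 2) * inner ℝ x ℓ) * g 0| *
      ∫ y : EuclideanSpace ℝ (Fin n), ϑ (‖y‖ ^ 2) * ‖y‖ ^ 2) ≤ AI ϑ x ℓ := by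
  have h := grad_formula_local (by omega) g hg hlap ϑ hϑ β hβ hz ℓ (((n:ℝ) - 2) * inner ℝ x ℓ)
  have hM : 0 ≤ ∫ y : EuclideanSpace ℝ (Fin n), ϑ (‖y‖ ^ 2) * ‖y‖ ^ 2 := by
    apply integral_nonneg
    intro y
    have := hϑ0 (‖y‖ ^ 2)
    simp only [Pi.zero_apply]
    positivity
  rw [← abs_of_nonneg hM, ← abs_mul, h, ← Real.norm_eq_abs, ofReal_norm]
  refine (enorm_integral_le_lintegral_enorm _).trans ?_
  unfold AI
  apply lintegral_mono
  intro y
  simp only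
  rw [← ofReal_norm, Real.norm_eq_abs]
  apply ENNReal.ofReal_le_ofReal
  rw [abs_mul, abs_mul, abs_of_nonneg (hϑ0 _)]
  by_cases hy : ‖y‖ < 1
  · have := hϑ0 (‖y‖ ^ 2)
    apply mul_le_mul_of_nonneg_left (hb y hy) (by positivity)
  · rw [hz (‖y‖ ^ 2) (by nlinarith)]
    simp

lemma M_eq {n : ℕ} (hn : 0 < n) (ϑ : ℝ → ℝ) (hϑ : Continuous ϑ) (hϑ0 : ∀ s, 0 ≤ ϑ s)
    (hz : ∀ s, 1 ≤ s → ϑ s = 0) :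
    ENNReal.ofReal (∫ y : EuclideanSpace ℝ (Fin n), ϑ (‖y‖ ^ 2) * ‖y‖ ^ 2) = 
     ((n : ENNReal) * ENNReal.ofReal (vB n)) *
        ∫⁻ τ in Set.Ioi (0:ℝ), ENNReal.ofReal (τ ^ (n + 1) * ϑ (τ ^ 2)) := by
  have hInt : Integrable (fun y : EuclideanSpace ℝ (Fin n) => ϑ (‖y‖ ^ 2) * ‖y‖ ^ 2) := by
    apply Continuous.integrable_of_hasCompactSupport (by fun_prop)
    apply HasCompactSupport.intro (isCompact_closedBall (0 : EuclideanSpace ℝ (Fin n)) 1)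
    intro y hy
    simp only [Metric.mem_closedBall, dist_zero_right, not_le] at hy
    rw [hz _ (by nlinarith)]; simp
  rw [ofReal_integral_eq_lintegral_ofReal hInt]
  · have := lintegral_norm_polar hn (fun r => ENNReal.ofReal (ϑ (r ^ 2) * r ^ 2)) (by
      have := hϑ.measurable
      fun_prop)
    rw [this, vol_ball hn]
    congr 1
    apply setLIntegral_congr_fun measurableSet_Ioi
    intro τ hτ
    have hτ0 : 0 < τ := hτ
    simp only
    rw [← ENNReal.ofReal_mul (by positivity)]
    congr 1
    have : n + 1 = (n - 1) + 2 := by omega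
    rw [this, pow_add]
    ring
  · filter_upwards with y
    have := hϑ0 (‖y‖ ^ 2)
    simp only [Pi.zero_apply]
    positivity

lemma M_pos {n : ℕ} (hn : 0 < n) (ϑ : ℝ → ℝ) (hϑ : Continuous ϑ) (hϑ0 : ∀ s, 0 ≤ ϑ s)
    (hz : ∀ s, 1 ≤ s → ϑ s = 0) (s₀ : ℝ) (hs₀ : 0 < s₀) (hs : ϑ s₀ ≠ 0) :
    0 < ∫ y : EuclideanSpace ℝ (Fin n), ϑ (‖y‖ ^ 2) * ‖y‖ ^ 2 := by
  apply Continuous.integral_pos_of_hasCompactSupport_nonneg_nonzero (by fun_prop)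
  · apply HasCompactSupport.intro (isCompact_closedBall (0 : EuclideanSpace ℝ (Fin n)) 1)
    intro y hy
    simp only [Metric.mem_closedBall, dist_zero_right, not_le] at hy
    rw [hz _ (by nlinarith)]; simp
  · intro y
    have := hϑ0 (‖y‖ ^ 2)
    simp only [Pi.zero_apply]
    positivity
  · show ϑ (‖EuclideanSpace.single (⟨0, hn⟩ : Fin n) (√s₀)‖ ^ 2) * ‖EuclideanSpace.single (⟨0, hn⟩ : Fin n) (√s₀)‖ ^ 2 ≠ 0
    rw [EuclideanSpace.norm_single, Real.norm_eq_abs, sq_abs, Real.sq_sqrt hs₀.le]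
    exact mul_ne_zero hs hs₀.ne'

lemma X_le_aux {n : ℕ} (hn : 3 ≤ n) (g : EuclideanSpace ℝ (Fin n) → ℝ)
    (hg : ContDiffOn ℝ 2 g (Metric.ball 0 1)) (hlap : ∀ y, ‖y‖ < 1 → lapl g y = 0)
    (ρ : ℝ) (hρ : 0 ≤ ρ) (hρ1 : ρ < 1)
    (e ℓ : EuclideanSpace ℝ (Fin n)) (he : ‖e‖ = 1) (hl : ‖ℓ‖ = 1)
    (hb : ∀ y, ‖y‖ < 1 → |g y| ≤ (1 - 2 * inner ℝ (ρ • e) y + ‖ρ • e‖ ^ 2 * ‖y‖ ^ 2) ^ ((2 - (n:ℝ)) / 2))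
    (K : ℝ) (hK : Jr n ρ < K) :
    |fderiv ℝ g 0 ℓ - (((n:ℝ) - 2) * inner ℝ (ρ • e) ℓ) * g 0| * vB n ≤ K * ((n:ℝ) - 1) * vB (n - 1) := by
  have hK0 : 0 < K := lt_of_le_of_lt (Jr_nonneg n ρ hρ) hK
  obtain ⟨X, hX⟩ : ∃ X, X = |fderiv ℝ g 0 ℓ - (((n:ℝ) - 2) * inner ℝ (ρ • e) ℓ) * g 0| := ⟨_, rfl⟩
  have hX0 : 0 ≤ X := by rw [hX]; positivity
  -- choose δ
  obtain ⟨a, ha0, ha1, ha⟩ : ∃ a : ℝ, 0 < a ∧ a < 1 ∧ ∀ τ, a < τ → τ < 1 → Jr n (ρ * τ) ≤ K * τ := by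
    obtain ⟨Jc, hJc, hJ⟩ := Jr_cont n hn ρ hρ1
    have hc : Continuous (fun τ : ℝ => K * τ - Jc (ρ * τ)) := by fun_prop
    have h1 : 0 < K * 1 - Jc (ρ * 1) := by
      rw [mul_one, mul_one, ← hJ ρ hρ le_rfl]; linarith
    have h2 : ∀ᶠ τ in 𝓝 (1:ℝ), 0 < K * τ - Jc (ρ * τ) := hc.continuousAt.eventually_const_lt h1
    rw [Metric.eventually_nhds_iff] at h2
    obtain ⟨δ, hδ, h2⟩ := h2
    refine ⟨max (1 - δ) (1/2), by positivity, max_lt (by linarith) (by norm_num), ?_⟩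
    intro τ h3 h4
    have h5 : 1 - δ < τ := lt_of_le_of_lt (le_max_left _ _) h3
    have h6 : 1/2 < τ := lt_of_le_of_lt (le_max_right _ _) h3
    have := h2 (y := τ) (by rw [Real.dist_eq, abs_lt]; constructor <;> linarith)
    rw [hJ (ρ * τ) (by positivity) (by nlinarith)]
    linarith
  obtain ⟨b, hab, hb1⟩ : ∃ b, a ^ 2 < b ∧ b < 1 := exists_between (by nlinarith)
  let ϑ : ℝ → ℝ := fun s => max 0 ((s - a ^ 2) * (b - s))
  have hϑ : Continuous ϑ := by fun_prop
  have hϑ0 : ∀ s, 0 ≤ ϑ s := fun s => le_max_left _ _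
  have hϑb : ∀ s, b ≤ s → ϑ s = 0 := fun s hs => max_eq_left (by nlinarith)
  have hϑ1 : ∀ s, 1 ≤ s → ϑ s = 0 := fun s hs => hϑb s (by linarith)
  have hϑa : ∀ s, s ≤ a ^ 2 → ϑ s = 0 := fun s hs => max_eq_left (by nlinarith)
  have hM := M_pos (n := n) (by omega) ϑ hϑ hϑ0 hϑ1 ((a ^ 2 + b) / 2) (by have := sq_nonneg a; linarith) (by
    have : 0 < ((a ^ 2 + b) / 2 - a ^ 2) * (b - (a ^ 2 + b) / 2) := by
      apply mul_pos <;> linarith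
    simp only [ϑ]
    rw [max_eq_right this.le]
    exact this.ne')
  have hMe := M_eq (n := n) (by omega) ϑ hϑ hϑ0 hϑ1
  have hXM := X_mul_le hn g hg hlap (ρ • e) ℓ hb ϑ hϑ hϑ0 b hb1 hϑb
  have hA := hXM.trans (AI_le hn ϑ hϑ hϑ0 hϑ1 ρ hρ hρ1 e ℓ he hl)
  rw [AI_one (k := n - 1) (by omega) (by omega) ϑ hϑ hϑ0 ρ hρ e he, vol_ball (by omega)] at hA
  rw [← hX, ENNReal.ofReal_mul hX0, hMe] at hA
  have hpos : 0 < ENNReal.ofReal (∫ y : EuclideanSpace ℝ (Fin n), ϑ (‖y‖ ^ 2) * ‖y‖ ^ 2) := by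
    rwa [ENNReal.ofReal_pos]
  have hfin : ENNReal.ofReal (∫ y : EuclideanSpace ℝ (Fin n), ϑ (‖y‖ ^ 2) * ‖y‖ ^ 2) ≠ ⊤ := ENNReal.ofReal_ne_top
  rw [hMe] at hpos hfin
  obtain ⟨I, hI⟩ : ∃ I, I = ∫⁻ τ in Set.Ioi (0:ℝ), ENNReal.ofReal (τ ^ (n + 1) * ϑ (τ ^ 2)) := ⟨_, rfl⟩
  have hle : ∫⁻ τ in Set.Ioi (0:ℝ), ENNReal.ofReal (τ ^ (n - 1)) *
          (ENNReal.ofReal (ϑ (τ ^ 2) * n * τ) * JI n (((n:ℝ) - 2) / n) (ρ * τ)) ≤ 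
          ENNReal.ofReal (n * K) * I := by
    rw [hI, ← lintegral_const_mul' _ _ ENNReal.ofReal_ne_top]
    apply setLIntegral_mono' measurableSet_Ioi
    intro τ hτ
    have hτ0 : 0 < τ := hτ
    by_cases h1 : τ ≤ a
    · rw [hϑa (τ ^ 2) (by nlinarith)]; simp
    by_cases h2 : 1 ≤ τ
    · rw [hϑ1 (τ ^ 2) (by nlinarith)]; simp
    push Not at h1 h2
    have h3 := hϑ0 (τ ^ 2)
    rw [JI_eq n hn (ρ * τ) (by positivity) (by nlinarith), ← ENNReal.ofReal_mul (by positivity),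
      ← ENNReal.ofReal_mul (by positivity), ← ENNReal.ofReal_mul (by positivity)]
    apply ENNReal.ofReal_le_ofReal
    have h4 := ha τ h1 h2
    have e1 : n + 1 = (n - 1) + 2 := by omega
    rw [e1, pow_add]
    have : 0 ≤ τ ^ (n - 1) * ϑ (τ ^ 2) * n * τ := by positivity
    calc τ ^ (n - 1) * (ϑ (τ ^ 2) * n * τ * Jr n (ρ * τ)) = (τ ^ (n - 1) * ϑ (τ ^ 2) * n * τ) * Jr n (ρ * τ) := by ring
      _ ≤ (τ ^ (n - 1) * ϑ (τ ^ 2) * n * τ) * (K * τ) := mul_le_mul_of_nonneg_left h4 this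
      _ = _ := by ring
  rw [← hI] at hA hpos hfin
  have hI0 : I ≠ 0 := by
    intro h; rw [h] at hpos; simp at hpos
  have hvn := vB_pos n
  have hvn1 := vB_pos (n - 1)
  have hnR : (3:ℝ) ≤ n := by exact_mod_cast hn
  have hnv : (n:ENNReal) * ENNReal.ofReal (vB n) = ENNReal.ofReal (n * vB n) := by
    rw [ENNReal.ofReal_mul (by positivity), ENNReal.ofReal_natCast]
  have hnv1 : ((n - 1 : ℕ):ENNReal) * ENNReal.ofReal (vB (n - 1)) = ENNReal.ofReal (((n:ℝ) - 1) * vB (n - 1)) := by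
    rw [ENNReal.ofReal_mul (by linarith), ← ENNReal.ofReal_natCast, Nat.cast_sub (by omega)]
    simp
  rw [hnv] at hA hfin
  rw [hnv1] at hA
  have hIt : I ≠ ⊤ := by
    intro h
    rw [h, ENNReal.mul_top] at hfin
    · exact hfin rfl
    · exact (ENNReal.ofReal_pos.mpr (by positivity)).ne'
  have hfinal := hA.trans (mul_le_mul' le_rfl hle)
  rw [← mul_assoc, ← mul_assoc, ENNReal.mul_le_mul_iff_left hI0 hIt, ← ENNReal.ofReal_mul hX0, 
    ← ENNReal.ofReal_mul (by nlinarith), ENNReal.ofReal_le_ofReal_iff (by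
      have : 0 ≤ (n:ℝ) - 1 := by linarith
      positivity)] at hfinal
  rw [← hX]
  have hn0 : (0:ℝ) < n := by linarith
  have : n * (X * vB n) ≤ n * (K * ((n:ℝ) - 1) * vB (n - 1)) := by linarith
  exact le_of_mul_le_mul_left this hn0

lemma X_le {n : ℕ} (hn : 3 ≤ n) (g : EuclideanSpace ℝ (Fin n) → ℝ)
    (hg : ContDiffOn ℝ 2 g (Metric.ball 0 1)) (hlap : ∀ y, ‖y‖ < 1 → lapl g y = 0)
    (ρ : ℝ) (hρ : 0 ≤ ρ) (hρ1 : ρ < 1)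
    (e ℓ : EuclideanSpace ℝ (Fin n)) (he : ‖e‖ = 1) (hl : ‖ℓ‖ = 1)
    (hb : ∀ y, ‖y‖ < 1 → |g y| ≤ (1 - 2 * inner ℝ (ρ • e) y + ‖ρ • e‖ ^ 2 * ‖y‖ ^ 2) ^ ((2 - (n:ℝ)) / 2)) :
    |fderiv ℝ g 0 ℓ - (((n:ℝ) - 2) * inner ℝ (ρ • e) ℓ) * g 0| ≤ cN n * Jr n ρ := by
  have hvn := vB_pos n
  have hvn1 := vB_pos (n - 1)
  have hnR : (3:ℝ) ≤ n := by exact_mod_cast hn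
  have hpos : 0 < ((n:ℝ) - 1) * vB (n - 1) := mul_pos (by linarith) hvn1
  have h1 : |fderiv ℝ g 0 ℓ - (((n:ℝ) - 2) * inner ℝ (ρ • e) ℓ) * g 0| * vB n / (((n:ℝ) - 1) * vB (n - 1)) ≤ Jr n ρ := by
    apply le_of_forall_gt_imp_ge_of_dense
    intro K hK
    rw [div_le_iff₀ hpos]
    have := X_le_aux hn g hg hlap ρ hρ hρ1 e ℓ he hl hb K hK
    linarith
  rw [div_le_iff₀ hpos, ← const_id hn] at h1
  have h2 : |fderiv ℝ g 0 ℓ - (((n:ℝ) - 2) * inner ℝ (ρ • e) ℓ) * g 0| * vB n ≤ (cN n * Jr n ρ) * vB n := by linarith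
  exact le_of_mul_le_mul_right h2 hvn

lemma scalar_bound {n : ℕ} (hn : 3 ≤ n) (v : EuclideanSpace ℝ (Fin n) → ℝ)
    (hv : ContDiffOn ℝ 2 v (Metric.ball 0 1)) (hlap : ∀ y, ‖y‖ < 1 → lapl v y = 0)
    (hb : ∀ y, ‖y‖ < 1 → |v y| ≤ 1) (x ℓ : EuclideanSpace ℝ (Fin n)) (hx : ‖x‖ < 1) (hl : ‖ℓ‖ = 1) :
    |fderiv ℝ v x ℓ| ≤ cN n / (1 - ‖x‖ ^ 2) * Jr n ‖x‖ := by
  by_cases hx0 : x = 0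
  · subst hx0
    have := X_le hn v hv hlap 0 le_rfl (by norm_num) ℓ ℓ hl hl (by intro y hy; simpa using hb y hy)
    simpa using this
  · have hxn : 0 < ‖x‖ := norm_pos_iff.mpr hx0
    obtain ⟨g, hg, hgl, hgb, hgd⟩ := kelvin_exists x hx0 hx v hv hlap hb
    obtain ⟨e, he⟩ : ∃ e, e = ‖x‖⁻¹ • x := ⟨_, rfl⟩
    have he1 : ‖e‖ = 1 := by rw [he, norm_smul, norm_inv, norm_norm, inv_mul_cancel₀ hxn.ne']
    have hxe : ‖x‖ • e = x := by rw [he, smul_smul, mul_inv_cancel₀ hxn.ne', one_smul]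
    obtain ⟨l', hl'⟩ : ∃ l', l' = ℓ - (2 * inner ℝ x ℓ * (‖x‖ ^ 2)⁻¹) • x := ⟨_, rfl⟩
    have hin : inner ℝ x l' = - inner ℝ x ℓ := by
      rw [hl', inner_sub_right, inner_smul_right, real_inner_self_eq_norm_sq]
      field_simp
      ring
    have hl1 : ‖l'‖ = 1 := by
      have h1 : ‖l'‖ ^ 2 = 1 := by
        rw [hl', norm_sub_sq_real, inner_smul_right, norm_smul, Real.norm_eq_abs, mul_pow, sq_abs, hl, real_inner_comm]
        field_simp
        ring
      exact (pow_eq_one_iff_of_nonneg (norm_nonneg _) two_ne_zero).mp h1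
    have hback : l' - (2 * inner ℝ x l' * (‖x‖ ^ 2)⁻¹) • x = ℓ := by
      rw [hin, hl']
      module
    have h2 := hgd l'
    rw [hback] at h2
    have h3 := X_le hn g hg hgl ‖x‖ hxn.le hx e l' he1 hl1 (by rw [hxe]; exact hgb)
    rw [hxe, ← h2, abs_mul, abs_of_pos (by nlinarith)] at h3
    have hp : 0 < 1 - ‖x‖ ^ 2 := by nlinarith
    rw [div_mul_eq_mul_div, le_div_iff₀ hp]
    linarith

lemma lin_comb {n ν : ℕ} (a : Fin ν → ℝ) (w : Fin ν → EuclideanSpace ℝ (Fin n) → ℝ)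
    (hw : ∀ j, ContDiffOn ℝ 2 (w j) (Metric.ball 0 1)) (hl : ∀ j y, ‖y‖ < 1 → lapl (w j) y = 0) :
    ContDiffOn ℝ 2 (fun y => ∑ j, a j * w j y) (Metric.ball 0 1) ∧
      ∀ y, ‖y‖ < 1 → lapl (fun y => ∑ j, a j * w j y) y = 0 := by
  have hopen : IsOpen (Metric.ball (0 : EuclideanSpace ℝ (Fin n)) 1) := Metric.isOpen_ball
  have hat : ∀ j y, ‖y‖ < 1 → ContDiffAt ℝ 2 (w j) y := fun j y hy =>
    (hw j).contDiffAt (hopen.mem_nhds (by simpa using hy))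
  have hd : ∀ j y, ‖y‖ < 1 → DifferentiableAt ℝ (w j) y := fun j y hy =>
    (hat j y hy).differentiableAt (by norm_num)
  have hd2 : ∀ j y, ‖y‖ < 1 → ∀ e, DifferentiableAt ℝ (fun y => fderiv ℝ (w j) y e) y := by
    intro j y hy e
    have h1 : DifferentiableAt ℝ (fderiv ℝ (w j)) y :=
      ((hat j y hy).fderiv_right (m := 1) (by norm_num)).differentiableAt (by norm_num)
    exact h1.clm_apply (differentiableAt_const e)
  refine ⟨?_, ?_⟩
  · apply ContDiffOn.sum
    intro j _
    exact contDiffOn_const.mul (hw j)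
  · intro x hx
    have h1 : ∀ y, ‖y‖ < 1 → ∀ e, fderiv ℝ (fun y => ∑ j, a j * w j y) y e = ∑ j, a j * fderiv ℝ (w j) y e := by
      intro y hy e
      have : HasFDerivAt (fun y => ∑ j, a j * w j y) (∑ j, a j • fderiv ℝ (w j) y) y := by
        apply HasFDerivAt.fun_sum
        intro j _
        exact (hd j y hy).hasFDerivAt.const_mul (a j)
      rw [this.fderiv]
      simp
    have h2 : ∀ e, fderiv ℝ (fun y => fderiv ℝ (fun y => ∑ j, a j * w j y) y e) x e =
        ∑ j, a j * fderiv ℝ (fun y => fderiv ℝ (w j) y e) x e := by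
      intro e
      have hev : (fun y => fderiv ℝ (fun y => ∑ j, a j * w j y) y e) =ᶠ[𝓝 x] 
          fun y => ∑ j, a j * fderiv ℝ (w j) y e := by
        filter_upwards [hopen.mem_nhds (show x ∈ Metric.ball 0 1 by simpa using hx)] with y hy
        exact h1 y (by simpa using hy) e
      rw [hev.fderiv_eq]
      have : HasFDerivAt (fun y => ∑ j, a j * fderiv ℝ (w j) y e) (∑ j, a j • fderiv ℝ (fun y => fderiv ℝ (w j) y e) x) x := by
        apply HasFDerivAt.fun_sum
        intro j _
        exact (hd2 j x hx e).hasFDerivAt.const_mul (a j)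
      rw [this.fderiv]
      simp
    unfold lapl
    simp_rw [h2]
    rw [Finset.sum_comm]
    apply Finset.sum_eq_zero
    intro j _
    rw [← Finset.mul_sum]
    have := hl j x hx
    unfold lapl at this
    rw [this, mul_zero]

lemma pnormR_eq {ν : ℕ} (p : ℝ) (hp : 1 < p) (w : Fin ν → ℝ) :
    pnormR p w = ‖(WithLp.toLp (ENNReal.ofReal p) w : PiLp (ENNReal.ofReal p) (fun _ : Fin ν => ℝ))‖ := by
  have h : (ENNReal.ofReal p).toReal = p := ENNReal.toReal_ofReal (by linarith)
  rw [PiLp.norm_eq_sum (by rw [h]; linarith), h]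
  simp [pnormR]

lemma norm_fderiv_bound {n : ℕ} (hn : 3 ≤ n) (v : EuclideanSpace ℝ (Fin n) → ℝ)
    (hv : ContDiffOn ℝ 2 v (Metric.ball 0 1)) (hlap : ∀ y, ‖y‖ < 1 → lapl v y = 0)
    (hb : ∀ y, ‖y‖ < 1 → |v y| ≤ 1) (x : EuclideanSpace ℝ (Fin n)) (hx : ‖x‖ < 1) :
    ‖fderiv ℝ v x‖ ≤ cN n / (1 - ‖x‖ ^ 2) * Jr n ‖x‖ := by
  have hunit := scalar_bound hn v hv hlap hb x
  have hC : 0 ≤ cN n / (1 - ‖x‖ ^ 2) * Jr n ‖x‖ := by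
    refine (abs_nonneg _).trans (hunit (EuclideanSpace.single (⟨0, by omega⟩ : Fin n) 1) hx (by simp))
  apply ContinuousLinearMap.opNorm_le_bound _ hC
  intro y
  by_cases hy : y = 0
  · simp [hy]
  have hyn : 0 < ‖y‖ := norm_pos_iff.mpr hy
  have h1 := hunit (‖y‖⁻¹ • y) hx (by rw [norm_smul, norm_inv, norm_norm, inv_mul_cancel₀ hyn.ne'])
  rw [map_smul, smul_eq_mul, abs_mul, abs_of_pos (by positivity), inv_mul_le_iff₀ hyn] at h1
  rw [Real.norm_eq_abs]
  linarith

lemma main_eventually (p : ℝ) (hp : 1 < p) (n : ℕ) (hn : 3 ≤ n) (ν : ℕ)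
    (u : EuclideanSpace ℝ (Fin n) → (Fin ν → ℝ))
    (hharm : ∀ j, HarmonicOnUnitBall (fun x => u x j))
    (hmap : ∀ x : EuclideanSpace ℝ (Fin n), ‖x‖ < 1 → pnormR p (u x) < 1)
    (x : EuclideanSpace ℝ (Fin n)) (hx : ‖x‖ < 1) (ε : ℝ) (hε : 0 < ε) :
    ∀ᶠ y in 𝓝[≠] x, |pnormR p (u y) - pnormR p (u x)| / ‖y - x‖ ≤ cN n / (1 - ‖x‖ ^ 2) * Jr n ‖x‖ + ε := by
  have hfact : Fact (1 ≤ ENNReal.ofReal p) := ⟨by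
    rw [← ENNReal.ofReal_one]; exact ENNReal.ofReal_le_ofReal hp.le⟩
  obtain ⟨C, hC⟩ : ∃ C, C = cN n / (1 - ‖x‖ ^ 2) * Jr n ‖x‖ := ⟨_, rfl⟩
  obtain ⟨r, hxr, hr1⟩ := exists_between hx
  obtain ⟨Jc, hJc, hJ⟩ := Jr_cont n hn r hr1
  have hcont : ContinuousAt (fun z : EuclideanSpace ℝ (Fin n) => cN n / (1 - ‖z‖ ^ 2) * Jc ‖z‖) x := by
    apply ContinuousAt.mul
    · apply ContinuousAt.div (by fun_prop) (by fun_prop)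
      nlinarith [norm_nonneg x]
    · fun_prop
  have hev : ∀ᶠ z in 𝓝 x, cN n / (1 - ‖z‖ ^ 2) * Jc ‖z‖ < C + ε ∧ ‖z‖ < r := by
    apply Filter.Eventually.and
    · apply hcont.eventually_lt_const
      show cN n / (1 - ‖x‖ ^ 2) * Jc ‖x‖ < C + ε
      rw [← hJ _ (norm_nonneg x) hxr.le, ← hC]
      linarith
    · exact continuous_norm.continuousAt.eventually_lt_const hxr
  rw [Metric.eventually_nhds_iff_ball] at hev
  obtain ⟨δ, hδ, hev⟩ := hev
  rw [← hC]
  filter_upwards [self_mem_nhdsWithin, mem_nhdsWithin_of_mem_nhds (Metric.ball_mem_nhds x hδ)] with y hyx hy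
  have hpos : 0 < ‖y - x‖ := norm_pos_iff.mpr (sub_ne_zero.mpr hyx)
  rw [div_le_iff₀ hpos, pnormR_eq p hp, pnormR_eq p hp]
  refine (abs_norm_sub_norm_le _ _).trans ?_
  obtain ⟨f, hf1, hf2⟩ := exists_dual_vector'' ℝ 
    ((WithLp.toLp (ENNReal.ofReal p) (u y) : PiLp (ENNReal.ofReal p) (fun _ : Fin ν => ℝ)) - WithLp.toLp (ENNReal.ofReal p) (u x))
  obtain ⟨a, ha⟩ : ∃ a : Fin ν → ℝ, ∀ w : Fin ν → ℝ, f (WithLp.toLp (ENNReal.ofReal p) w) = ∑ j, a j * w j := by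
    refine ⟨fun j => f (WithLp.toLp (ENNReal.ofReal p) (Pi.single j 1)), ?_⟩
    intro w
    have h1 : WithLp.toLp (ENNReal.ofReal p) w = ∑ j, w j • (WithLp.toLp (ENNReal.ofReal p) (Pi.single j (1:ℝ)) : PiLp (ENNReal.ofReal p) (fun _ : Fin ν => ℝ)) := by
      ext i
      simp [Pi.single_apply]
    rw [h1, map_sum]
    apply Finset.sum_congr rfl
    intro j _
    rw [map_smul, smul_eq_mul, mul_comm]
  obtain ⟨hv, hvl⟩ := lin_comb a (fun j z => u z j) (fun j => (hharm j).1) 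
    (fun j z hz => (hharm j).2 z (by simpa using hz))
  have hvb : ∀ z, ‖z‖ < 1 → |∑ j, a j * u z j| ≤ 1 := by
    intro z hz
    rw [← ha, ← Real.norm_eq_abs]
    refine (f.le_opNorm _).trans ?_
    have h3 := (hmap z hz).le
    rw [pnormR_eq p hp] at h3
    exact mul_le_one₀ hf1 (norm_nonneg _) h3
  have hmv := Convex.norm_image_sub_le_of_norm_fderiv_le (𝕜 := ℝ) (f := fun z => ∑ j, a j * u z j)
    (s := Metric.ball x δ) (C := C + ε) (x := x) (y := y) ?_ ?_ (convex_ball x δ) (Metric.mem_ball_self hδ) hy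
  · rw [← ha, ← ha, ← map_sub, hf2] at hmv
    simpa using hmv
  · intro z hz
    have hz1 : ‖z‖ < 1 := (hev z hz).2.trans hr1
    exact (hv.contDiffAt (Metric.isOpen_ball.mem_nhds (by simpa using hz1))).differentiableAt (by norm_num)
  · intro z hz
    have hz1 : ‖z‖ < 1 := (hev z hz).2.trans hr1
    have := norm_fderiv_bound hn _ hv hvl hvb z hz1
    rw [hJ _ (norm_nonneg z) (hev z hz).2.le] at this
    exact this.trans (hev z hz).1.le

theorem stmt0 (p : ℝ) (hp : 1 < p) (n : ℕ) (hn : 3 ≤ n) (ν : ℕ) (hν : 1 ≤ ν)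
    (u : EuclideanSpace ℝ (Fin n) → (Fin ν → ℝ))
    (hharm : ∀ j, HarmonicOnUnitBall (fun x => u x j))
    (hmap : ∀ x : EuclideanSpace ℝ (Fin n), ‖x‖ < 1 → pnormR p (u x) < 1)
    (x : EuclideanSpace ℝ (Fin n)) (hx : ‖x‖ < 1) :
    gradPnormR p u x ≤
      (2 * Real.Gamma (((n : ℝ) + 2) / 2) /
          (Real.Gamma (1 / 2) * Real.Gamma (((n : ℝ) - 1) / 2))) / (1 - ‖x‖ ^ 2) *
        ∫ t in (-1 : ℝ)..1,
          |t - (((n : ℝ) - 2) / n) * ‖x‖| * (1 - t ^ 2) ^ (((n : ℝ) - 3) / 2) /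
            (1 - 2 * t * ‖x‖ + ‖x‖ ^ 2) ^ (((n : ℝ) - 2) / 2) := by
  have h0 : gradPnormR p u x ≤ cN n / (1 - ‖x‖ ^ 2) * Jr n ‖x‖ := by
    have hne : Nonempty (Fin n) := ⟨⟨0, by omega⟩⟩
    have hnb : (𝓝[≠] x).NeBot := Module.punctured_nhds_neBot ℝ (EuclideanSpace ℝ (Fin n)) x
    apply le_of_forall_pos_le_add
    intro ε hε
    unfold gradPnormR
    apply Filter.limsup_le_of_le
    · apply Filter.IsBoundedUnder.isCoboundedUnder_le
      exact isBoundedUnder_of ⟨0, fun y => by positivity⟩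
    · exact main_eventually p hp n hn ν u hharm hmap x hx ε hε
  exact h0
end

section
/- Let n ≥ 1, p ∈ (1,∞), and let ν be a positive integer. If u : 𝔹_{ℓ₂ⁿ} → 𝐁_{ℓ_p^ν} is a pluriharmonic function taking real-vector values in the real unit p-ball, then for every z ∈ 𝔹_{ℓ₂ⁿ}, |∇‖u(z)‖_p| ≤ (4/π) · (1 − ‖u(z)‖_p²)/(1 − ‖z‖₂²). -/
open scoped BigOperators Topology
open Filter

/-- `|∇‖u(z)‖_p| = limsup_{w → z} |‖u(w)‖_p - ‖u(z)‖_p| / ‖w - z‖₂`. -/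
noncomputable def gradPnormCR {n ν : ℕ} (p : ℝ)
    (u : EuclideanSpace ℂ (Fin n) → (Fin ν → ℝ)) (z : EuclideanSpace ℂ (Fin n)) : ℝ :=
  Filter.limsup (fun w => |pnormR p (u w) - pnormR p (u z)| / ‖w - z‖) (𝓝[≠] z)

lemma cos_aux (x : ℝ) (hx : |x| ≤ 1) : Real.cos (Real.pi / 2 * x) ≤ 1 - x ^ 2 := by
  have h1 : Real.cos (Real.pi / 2 * x) = 1 - 2 * Real.sin (Real.pi / 4 * |x|) ^ 2 := by
    have : Real.cos (Real.pi / 2 * x) = Real.cos (2 * (Real.pi / 4 * |x|)) := by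
      rw [← Real.cos_abs, abs_mul, abs_of_pos (by positivity)]; congr 1; ring
    rw [this, Real.cos_two_mul, Real.cos_sq']; ring
  have h2 : |x| * (√2 / 2) ≤ Real.sin (Real.pi / 4 * |x|) := by
    have := strictConcaveOn_sin_Icc.concaveOn.2 (x := Real.pi/4) (y := 0)
      ⟨by positivity, by linarith [Real.pi_pos]⟩ ⟨le_refl _, Real.pi_pos.le⟩ (abs_nonneg x)
      (sub_nonneg.2 hx) (by ring)
    simp [Real.sin_pi_div_four] at this
    rwa [mul_comm (Real.pi/4)]
  have h3 : (|x| * (√2 / 2))^2 = x^2/2 := by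
    rw [mul_pow, sq_abs, div_pow, Real.sq_sqrt (by norm_num)]; ring
  have h4 : (|x| * (√2 / 2))^2 ≤ Real.sin (Real.pi / 4 * |x|) ^ 2 := by
    gcongr
  rw [h1]; linarith

lemma slice_aux {E : Type*} [NormedAddCommGroup E] [InnerProductSpace ℂ E] (z ξ : E) (hz : ‖z‖ < 1)
    (hξ : ‖ξ‖ = 1) (μ : ℂ) (hμ : ‖μ‖ < 1) :
    1 + inner ℂ z ξ * μ ≠ 0 ∧ 
    ‖z + (((1 - ‖z‖^2 : ℝ) : ℂ) * μ / (1 + inner ℂ z ξ * μ)) • ξ‖ < 1 := by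
  have hc : ‖inner ℂ z ξ‖ ≤ ‖z‖ := by simpa [hξ] using norm_inner_le_norm (𝕜 := ℂ) z ξ
  set c := inner ℂ z ξ with hcdef
  have h0 : 1 + c * μ ≠ 0 := by
    intro h
    have : ‖c * μ‖ = 1 := by
      rw [show c * μ = -1 by linear_combination h]; simp
    rw [norm_mul] at this
    nlinarith [norm_nonneg c, norm_nonneg μ, norm_nonneg z]
  refine ⟨h0, ?_⟩
  have hs : 0 < 1 - ‖z‖^2 := by nlinarith [norm_nonneg z]
  set s := 1 - ‖z‖^2 with hsdef
  set D := 1 + c * μ with hD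
  have hDp : 0 < ‖D‖^2 := by positivity
  set l := (s:ℂ) * μ / D with hl
  have key : ‖z + l • ξ‖^2 = ‖z‖^2 + 2 * (l * c).re + ‖l‖^2 := by
    rw [@norm_add_sq ℂ, inner_smul_right, norm_smul, hξ]
    simp [← hcdef]
  have hl1 : ‖l‖^2 = s^2 * ‖μ‖^2 / ‖D‖^2 := by
    rw [hl, norm_div, norm_mul, Complex.norm_real, Real.norm_eq_abs, div_pow, mul_pow, sq_abs]
  have hl2 : (l * c).re = s * ((c*μ).re + ‖c‖^2*‖μ‖^2) / ‖D‖^2 := by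
    have : l * c = ((s / ‖D‖^2 : ℝ) : ℂ) * ((c * μ) * (starRingEnd ℂ) D) := by
      have h5 : D * (starRingEnd ℂ) D = ((‖D‖^2 : ℝ):ℂ) := by
        rw [Complex.mul_conj, Complex.normSq_eq_norm_sq]
      have h6 : ((‖D‖^2 : ℝ):ℂ) ≠ 0 := by exact_mod_cast hDp.ne'
      rw [hl, Complex.ofReal_div, ← h5]
      have : (starRingEnd ℂ) D ≠ 0 := by simpa using h0
      field_simp
    rw [this, Complex.re_ofReal_mul]
    have h7 : ((c * μ) * (starRingEnd ℂ) D).re = (c*μ).re + ‖c‖^2*‖μ‖^2 := by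
      rw [hD, map_add, map_one, mul_add, mul_one, Complex.mul_conj, Complex.add_re, Complex.ofReal_re, Complex.normSq_eq_norm_sq, norm_mul]; ring
    rw [h7]; ring
  have hD2 : ‖D‖^2 = 1 + 2 * (c*μ).re + ‖c‖^2*‖μ‖^2 := by
    rw [hD, @norm_add_sq ℂ, norm_mul]; simp; ring
  have fin : 2 * (l * c).re + ‖l‖^2 < s := by
    rw [hl1, hl2, ← mul_div_assoc, ← add_div, div_lt_iff₀ hDp, hD2]
    have : ‖c‖^2 ≤ ‖z‖^2 := by gcongr
    have h8 : ‖μ‖^2 < 1 := by nlinarith [norm_nonneg μ]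
    have h9 : ‖μ‖^2 * (s + ‖c‖^2) < 1 := by nlinarith [sq_nonneg ‖μ‖, sq_nonneg ‖c‖]
    nlinarith
  have : ‖z + l • ξ‖^2 < 1 := by rw [key]; linarith
  nlinarith [norm_nonneg (z + l • ξ)]

lemma norming {ν : ℕ} (p : ℝ) (hp : 1 < p) (y : Fin ν → ℝ) : ∃ a : Fin ν → ℝ,
    ∑ j, a j * y j = (∑ j, |y j| ^ p) ^ (1 / p) ∧
    ∀ x : Fin ν → ℝ, |∑ j, a j * x j| ≤ (∑ j, |x j| ^ p) ^ (1 / p) := by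
  have : Fact (1 ≤ ENNReal.ofReal p) := ⟨by simpa using hp.le⟩
  have hpt : (ENNReal.ofReal p).toReal = p := ENNReal.toReal_ofReal (by linarith)
  have hN : ∀ x : Fin ν → ℝ, ‖(WithLp.toLp (ENNReal.ofReal p) x)‖ = (∑ j, |x j| ^ p) ^ (1 / p) := by
    intro x
    rw [PiLp.norm_eq_sum (by rw [hpt]; linarith), hpt]
    simp
  obtain ⟨g, hg1, hg2⟩ := exists_dual_vector'' ℝ (WithLp.toLp (ENNReal.ofReal p) y)
  have hgs : ∀ x : Fin ν → ℝ, ∑ j, g (WithLp.toLp _ (Pi.single j 1)) * x j = g (WithLp.toLp _ x) := by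
    intro x
    have : WithLp.toLp (ENNReal.ofReal p) x = ∑ j, x j • WithLp.toLp _ (Pi.single j (1:ℝ)) := by
      ext i
      simp [Pi.single_apply]
    rw [this, map_sum]
    simp [mul_comm]
  refine ⟨fun j => g (WithLp.toLp _ (Pi.single j 1)), ?_, ?_⟩
  · rw [hgs, hg2, ← hN]; simp
  · intro x
    rw [hgs, ← hN, ← Real.norm_eq_abs]
    exact (g.le_opNorm _).trans (mul_le_of_le_one_left (norm_nonneg _) hg1)

lemma schwarz_half (H : ℂ → ℂ) (hH : DifferentiableOn ℂ H (Metric.ball 0 1))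
    (hpos : ∀ μ ∈ Metric.ball (0 : ℂ) 1, 0 < (H μ).re) :
    ‖deriv H 0‖ ≤ 2 * (H 0).re := by
  have h00 : (0 : ℂ) ∈ Metric.ball (0 : ℂ) 1 := by simp
  have hne : ∀ μ ∈ Metric.ball (0 : ℂ) 1, H μ + (starRingEnd ℂ) (H 0) ≠ 0 := by
    intro μ hμ h0
    have := congrArg Complex.re h0
    simp at this
    linarith [hpos μ hμ, hpos 0 h00]
  have hd : DifferentiableAt ℂ H 0 := hH.differentiableAt (Metric.ball_mem_nhds _ one_pos)
  have hder : HasDerivAt (fun μ => (H μ - H 0) / (H μ + (starRingEnd ℂ) (H 0)))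
      (deriv H 0 / (2 * (H 0).re : ℝ)) 0 := by
    have h1 := (hd.hasDerivAt.sub_const (H 0)).div
      (hd.hasDerivAt.add_const ((starRingEnd ℂ) (H 0))) (hne 0 h00)
    refine h1.congr_deriv ?_
    have h2 := hne 0 h00
    rw [Complex.add_conj] at h2 ⊢
    field_simp
    simp
  have := Complex.norm_deriv_le_div_of_mapsTo_ball
    (f := fun μ => (H μ - H 0) / (H μ + (starRingEnd ℂ) (H 0))) (c := 0) (R₁ := 1) (R₂ := 1)
    ((hH.sub_const _).div (hH.add_const _) hne) ?_ one_pos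
  · rw [hder.deriv, norm_div, Complex.norm_real, Real.norm_eq_abs,
      abs_of_pos (by linarith [hpos 0 h00]), div_one,
      div_le_one (by linarith [hpos 0 h00])] at this
    exact this
  · intro μ hμ
    simp only [sub_self, zero_div, Metric.mem_closedBall, dist_zero_right]
    rw [norm_div, div_le_one (norm_pos_iff.2 (hne μ hμ))]
    rw [← sq_le_sq₀ (norm_nonneg _) (norm_nonneg _), ← Complex.normSq_eq_norm_sq,
      ← Complex.normSq_eq_norm_sq, Complex.normSq_apply, Complex.normSq_apply]
    simp
    nlinarith [hpos μ hμ, hpos 0 h00, mul_pos (hpos μ hμ) (hpos 0 h00)]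

lemma grad_unit {E : Type*} [NormedAddCommGroup E] [InnerProductSpace ℂ E] (g : E → ℂ)
    (hg : DifferentiableOn ℂ g (Metric.ball 0 1))
    (hb : ∀ x ∈ Metric.ball (0 : E) 1, |(g x).re| < 1) (z ξ : E) (hz : ‖z‖ < 1) (hξ : ‖ξ‖ = 1) :
    ‖fderiv ℂ g z ξ‖ ≤ 4 / Real.pi * ((1 - (g z).re ^ 2) / (1 - ‖z‖ ^ 2)) := by
  have hs : 0 < 1 - ‖z‖^2 := by nlinarith [norm_nonneg z]
  set γ : ℂ → E := fun μ =>
    z + (((1 - ‖z‖^2 : ℝ) : ℂ) * μ / (1 + inner ℂ z ξ * μ)) • ξ with hγ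
  have hγ0 : γ 0 = z := by simp [hγ]
  have hγm : ∀ μ ∈ Metric.ball (0 : ℂ) 1, γ μ ∈ Metric.ball (0 : E) 1 := by
    intro μ hμ
    have := (slice_aux z ξ hz hξ μ (by simpa using hμ)).2
    simpa [hγ] using this
  have hγd : DifferentiableOn ℂ γ (Metric.ball 0 1) := by
    intro μ hμ
    have h0 := (slice_aux z ξ hz hξ μ (by simpa using hμ)).1
    apply DifferentiableAt.differentiableWithinAt
    refine DifferentiableAt.const_add _ (DifferentiableAt.smul_const ?_ _)
    exact DifferentiableAt.div (by fun_prop) (by fun_prop) h0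
  have hγ' : HasDerivAt γ ((((1 - ‖z‖^2 : ℝ) : ℂ)) • ξ) 0 := by
    have h1 : HasDerivAt (fun μ : ℂ => ((1 - ‖z‖^2 : ℝ) : ℂ) * μ) ((1 - ‖z‖^2 : ℝ) : ℂ) 0 := by
      have h := (hasDerivAt_id (0 : ℂ)).const_mul ((1 - ‖z‖^2 : ℝ) : ℂ)
      rw [mul_one] at h
      exact h
    have h2 : HasDerivAt (fun μ : ℂ => 1 + inner ℂ z ξ * μ) (inner ℂ z ξ) 0 := by
      simpa using ((hasDerivAt_id (0 : ℂ)).const_mul (inner ℂ z ξ)).const_add 1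
    have h3 := ((h1.div h2 (by simp)).smul_const ξ).const_add z
    refine h3.congr_deriv ?_
    simp
  have hgz : DifferentiableAt ℂ g z := hg.differentiableAt
    (Metric.isOpen_ball.mem_nhds (by simpa using hz))
  set H : ℂ → ℂ := fun μ => Complex.exp (((Real.pi / 2 : ℝ) : ℂ) * Complex.I * g (γ μ)) with hH
  have hHd : DifferentiableOn ℂ H (Metric.ball 0 1) :=
    (((hg.comp hγd hγm)).const_mul _).cexp
  have hHre : ∀ μ, (H μ).re = ‖H μ‖ * Real.cos (Real.pi / 2 * (g (γ μ)).re) := by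
    intro μ
    rw [hH]
    simp only [Complex.exp_re, Complex.norm_exp]
    congr 2
    rw [mul_assoc, Complex.im_ofReal_mul, Complex.I_mul_im]
  have hHpos : ∀ μ ∈ Metric.ball (0 : ℂ) 1, 0 < (H μ).re := by
    intro μ hμ
    rw [hHre]
    have hb' := abs_lt.1 (hb _ (hγm μ hμ))
    have := Real.pi_pos
    refine mul_pos (norm_pos_iff.2 (Complex.exp_ne_zero _))
      (Real.cos_pos_of_mem_Ioo ⟨by nlinarith, by nlinarith⟩)
  have hH' : HasDerivAt H (H 0 * (((Real.pi / 2 : ℝ) : ℂ) * Complex.I *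
      (((1 - ‖z‖^2 : ℝ) : ℂ) * fderiv ℂ g z ξ))) 0 := by
    have h1 : HasFDerivAt g (fderiv ℂ g z) (γ 0) := by rw [hγ0]; exact hgz.hasFDerivAt
    have h2 := ((h1.comp_hasDerivAt (0 : ℂ) hγ').const_mul
      (((Real.pi / 2 : ℝ) : ℂ) * Complex.I)).cexp
    refine h2.congr_deriv ?_
    simp [hH]
  have hfin := schwarz_half H hHd hHpos
  rw [hH'.deriv, hHre, hγ0] at hfin
  simp only [norm_mul, Complex.norm_real, Complex.norm_I, Real.norm_eq_abs] at hfin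
  rw [abs_of_pos hs, abs_of_pos (by positivity : 0 < Real.pi / 2)] at hfin
  have hHn : 0 < ‖H 0‖ := norm_pos_iff.2 (Complex.exp_ne_zero _)
  have hcos := cos_aux (g z).re (hb z (by simpa using hz)).le
  have h5 : Real.pi / 2 * ((1 - ‖z‖^2) * ‖fderiv ℂ g z ξ‖) ≤ 2 * (1 - (g z).re ^ 2) := by
    have : ‖H 0‖ * (Real.pi / 2 * ((1 - ‖z‖^2) * ‖fderiv ℂ g z ξ‖)) ≤
      ‖H 0‖ * (2 * Real.cos (Real.pi / 2 * (g z).re)) := by nlinarith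
    have := le_of_mul_le_mul_left this hHn
    linarith
  rw [div_mul_div_comm, le_div_iff₀ (mul_pos Real.pi_pos hs)]
  nlinarith

lemma grad_bound {E : Type*} [NormedAddCommGroup E] [InnerProductSpace ℂ E] (g : E → ℂ)
    (hg : DifferentiableOn ℂ g (Metric.ball 0 1))
    (hb : ∀ x ∈ Metric.ball (0 : E) 1, |(g x).re| < 1) (z ξ : E) (hz : ‖z‖ < 1) :
    ‖fderiv ℂ g z ξ‖ ≤ 4 / Real.pi * ((1 - (g z).re ^ 2) / (1 - ‖z‖ ^ 2)) * ‖ξ‖ := by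
  by_cases h0 : ξ = 0
  · simp [h0]
  have hn : ‖ξ‖ ≠ 0 := norm_ne_zero_iff.2 h0
  have h1 := grad_unit g hg hb z (((‖ξ‖⁻¹ : ℝ) : ℂ) • ξ) hz (by
    rw [norm_smul, Complex.norm_real, norm_inv, norm_norm, inv_mul_cancel₀ hn])
  rw [map_smul, norm_smul, Complex.norm_real, norm_inv, norm_norm,
    inv_mul_le_iff₀ (by positivity)] at h1
  linarith

/-- Mean value form along the segment. -/
lemma mvt_aux {E : Type*} [NormedAddCommGroup E] [InnerProductSpace ℂ E] (g : E → ℂ)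
    (hg : DifferentiableOn ℂ g (Metric.ball 0 1))
    (z x y : E) (r : ℝ) (hr : ‖z‖ + r ≤ 1) (hx : ‖x - z‖ < r) (hy : ‖y - z‖ < r) :
    ∃ ζ : E, ‖ζ - z‖ < r ∧ (g y).re - (g x).re = (fderiv ℂ g ζ (y - x)).re := by
  set γ : ℝ → E := fun t => x + (t : ℂ) • (y - x) with hγ
  have hball : ∀ t ∈ Set.Icc (0 : ℝ) 1, ‖γ t - z‖ < r := by
    intro t ht
    have h1 : γ t - z = ((1 - t : ℝ) : ℂ) • (x - z) + (t : ℂ) • (y - z) := by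
      simp only [hγ, Complex.ofReal_sub, Complex.ofReal_one]; module
    rw [h1]
    refine (norm_add_le _ _).trans_lt ?_
    rw [norm_smul, norm_smul, Complex.norm_real, Complex.norm_real, Real.norm_eq_abs,
      Real.norm_eq_abs, abs_of_nonneg ht.1, abs_of_nonneg (sub_nonneg.2 ht.2)]
    rcases ht.1.eq_or_lt with h | h
    · subst h; simpa using hx
    · nlinarith [ht.2]
  have hin : ∀ t ∈ Set.Icc (0 : ℝ) 1, ‖γ t‖ < 1 := by
    intro t ht
    have := norm_add_le (γ t - z) z
    rw [sub_add_cancel] at this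
    linarith [hball t ht]
  have hder : ∀ t ∈ Set.Icc (0 : ℝ) 1,
      HasDerivAt (fun t => (g (γ t)).re) (fderiv ℂ g (γ t) (y - x)).re t := by
    intro t ht
    have h1 : HasFDerivAt g (fderiv ℂ g (γ t)) (x + (t : ℂ) • (y - x)) :=
      (hg.differentiableAt (Metric.isOpen_ball.mem_nhds (by simpa using hin t ht))).hasFDerivAt
    have h2 : HasDerivAt (fun s : ℂ => x + s • (y - x)) (y - x) (t : ℂ) := by
      simpa using ((hasDerivAt_id (t : ℂ)).smul_const (y - x)).const_add x
    exact (h1.comp_hasDerivAt (t : ℂ) h2).real_of_complex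
  obtain ⟨c, hc, hc'⟩ := exists_hasDerivAt_eq_slope (fun t => (g (γ t)).re)
    (fun t => (fderiv ℂ g (γ t) (y - x)).re) zero_lt_one
    (fun t ht => (hder t ht).continuousAt.continuousWithinAt)
    (fun t ht => hder t ⟨ht.1.le, ht.2.le⟩)
  refine ⟨γ c, hball c ⟨hc.1.le, hc.2.le⟩, ?_⟩
  rw [hc']
  simp [hγ]

lemma two_point {n ν : ℕ} (p : ℝ) (hp : 1 < p)
    (u : EuclideanSpace ℂ (Fin n) → (Fin ν → ℝ))
    (h : EuclideanSpace ℂ (Fin n) → (Fin ν → ℂ))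
    (hh : DifferentiableOn ℂ h (Metric.ball 0 1))
    (hre : ∀ z ∈ Metric.ball (0 : EuclideanSpace ℂ (Fin n)) 1, ∀ j, u z j = (h z j).re)
    (hmap : ∀ z ∈ Metric.ball (0 : EuclideanSpace ℂ (Fin n)) 1, pnormR p (u z) < 1)
    (z : EuclideanSpace ℂ (Fin n)) (ε r : ℝ) (hε : 0 < ε) (hrε : r ≤ ε) (hzε : ‖z‖ + ε < 1)
    (hr : ∀ w, ‖w - z‖ < r → pnormR p (u w - u z) ≤ ε)
    (x y : EuclideanSpace ℂ (Fin n)) (hx : ‖x - z‖ < r) (hy : ‖y - z‖ < r) :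
    pnormR p (u y) - pnormR p (u x) ≤
      4 / Real.pi * ((1 - pnormR p (u z) ^ 2 + 6 * ε) / (1 - (‖z‖ + ε) ^ 2)) * ‖y - x‖ := by
  have hin : ∀ w, ‖w - z‖ < r → ‖w‖ < ‖z‖ + ε := by
    intro w hw
    have := norm_add_le (w - z) z
    rw [sub_add_cancel] at this
    linarith
  have hin1 : ∀ w, ‖w - z‖ < r → w ∈ Metric.ball (0 : EuclideanSpace ℂ (Fin n)) 1 := by
    intro w hw
    have := hin w hw
    rw [mem_ball_zero_iff]; linarith
  obtain ⟨a, ha1, ha2⟩ := norming p hp (u y)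
  obtain ⟨b, hb1, hb2⟩ := norming p hp (u z)
  change _ = pnormR p (u y) at ha1
  change _ = pnormR p (u z) at hb1
  change ∀ x, _ ≤ pnormR p x at ha2
  change ∀ x, _ ≤ pnormR p x at hb2
  set g : EuclideanSpace ℂ (Fin n) → ℂ := fun w => ∑ j, (a j : ℂ) * h w j with hg
  have hgre : ∀ w ∈ Metric.ball (0 : EuclideanSpace ℂ (Fin n)) 1,
      (g w).re = ∑ j, a j * u w j := by
    intro w hw
    simp [hg, hre w hw]
  have hgd : DifferentiableOn ℂ g (Metric.ball 0 1) := by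
    apply DifferentiableOn.fun_sum
    intro j _
    exact (differentiableOn_pi.1 hh j).const_mul _
  have hgb : ∀ w ∈ Metric.ball (0 : EuclideanSpace ℂ (Fin n)) 1, |(g w).re| < 1 := by
    intro w hw
    rw [hgre w hw]
    exact (ha2 _).trans_lt (hmap w hw)
  obtain ⟨ζ, hζ, hmv⟩ := mvt_aux g hgd z x y r (by linarith) hx hy
  have hgrad := grad_bound g hgd hgb ζ (y - x) (by simpa using hin1 ζ hζ)
  have hdiff : ∀ (c v w : Fin ν → ℝ), ∑ j, c j * (v - w) j =
      ∑ j, c j * v j - ∑ j, c j * w j := by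
    intro c v w
    rw [← Finset.sum_sub_distrib]
    simp [mul_sub]
  -- value at ζ
  have hv : pnormR p (u z) - 3 * ε ≤ (g ζ).re := by
    rw [hgre ζ (hin1 ζ hζ)]
    have e1 := abs_le.1 ((ha2 (u ζ - u z)).trans (hr ζ hζ))
    have e2 := abs_le.1 ((ha2 (u y - u z)).trans (hr y hy))
    have e3 := abs_le.1 ((hb2 (u y - u z)).trans (hr y hy))
    have e4 := (le_abs_self _).trans (hb2 (u y))
    rw [hdiff] at e1 e2 e3
    linarith [e1.1, e1.2, e2.1, e2.2, e3.1, e3.2]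
  have hz1 : ‖z‖ < 1 := by linarith
  have ha0 : 0 ≤ pnormR p (u z) := (abs_nonneg _).trans (hb2 (u z))
  have haz := hmap z (by simpa using hz1)
  have hgζ := abs_lt.1 (hgb ζ (hin1 ζ hζ))
  have hsq : 1 - (g ζ).re ^ 2 ≤ 1 - pnormR p (u z) ^ 2 + 6 * ε := by
    by_cases hc : 0 ≤ pnormR p (u z) + (g ζ).re
    · nlinarith
    · nlinarith
  have hden : 0 < 1 - (‖z‖ + ε) ^ 2 := by nlinarith [norm_nonneg z]
  have hden2 : 1 - (‖z‖ + ε) ^ 2 ≤ 1 - ‖ζ‖ ^ 2 := by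
    have := hin ζ hζ
    nlinarith [norm_nonneg ζ]
  have hsq0 : 0 ≤ 1 - (g ζ).re ^ 2 := by nlinarith
  calc pnormR p (u y) - pnormR p (u x) ≤ (g y).re - (g x).re := by
        rw [hgre y (hin1 y hy), hgre x (hin1 x hx), ha1]
        linarith [(le_abs_self _).trans (ha2 (u x))]
    _ = (fderiv ℂ g ζ (y - x)).re := hmv
    _ ≤ ‖fderiv ℂ g ζ (y - x)‖ := Complex.re_le_norm _
    _ ≤ _ := hgrad
    _ ≤ _ := by
      gcongr
      linarith

theorem stmt2 (n ν : ℕ) (hn : 1 ≤ n) (hν : 1 ≤ ν) (p : ℝ) (hp : 1 < p)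
    (u : EuclideanSpace ℂ (Fin n) → (Fin ν → ℝ))
    (h : EuclideanSpace ℂ (Fin n) → (Fin ν → ℂ))
    (hh : DifferentiableOn ℂ h (Metric.ball 0 1))
    (hre : ∀ z ∈ Metric.ball (0 : EuclideanSpace ℂ (Fin n)) 1, ∀ j, u z j = (h z j).re)
    (hmap : ∀ z ∈ Metric.ball (0 : EuclideanSpace ℂ (Fin n)) 1, pnormR p (u z) < 1)
    (z : EuclideanSpace ℂ (Fin n)) (hz : ‖z‖ < 1) :
    gradPnormCR p u z ≤ (4 / Real.pi) * ((1 - pnormR p (u z) ^ 2) / (1 - ‖z‖ ^ 2)) := by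
  have : Nonempty (Fin n) := ⟨⟨0, hn⟩⟩
  have : Nontrivial (EuclideanSpace ℂ (Fin n)) := inferInstance
  have : (𝓝[≠] z).NeBot := Module.punctured_nhds_neBot ℂ _ z
  have hzb : z ∈ Metric.ball (0 : EuclideanSpace ℂ (Fin n)) 1 := by simpa using hz
  have hnb : Metric.ball (0 : EuclideanSpace ℂ (Fin n)) 1 ∈ 𝓝 z :=
    Metric.isOpen_ball.mem_nhds hzb
  have hp0 : 0 < p := by linarith
  -- continuity
  have hcont : Tendsto (fun w => pnormR p (u w - u z)) (𝓝 z) (𝓝 0) := by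
    have huc : ∀ j, ContinuousAt (fun w => u w j) z := by
      intro j
      have h1 : ContinuousAt (fun w => (h w j).re) z := Complex.continuous_re.continuousAt.comp
        ((differentiableOn_pi.1 hh j).differentiableAt hnb).continuousAt
      refine h1.congr ?_
      filter_upwards [hnb] with w hw using (hre w hw j).symm
    have h2 : ContinuousAt (fun w => pnormR p (u w - u z)) z := by
      unfold pnormR
      refine ContinuousAt.rpow_const ?_ (Or.inr (by positivity))
      refine tendsto_finsetSum _ fun j _ => ?_
      refine ContinuousAt.rpow_const ?_ (Or.inr hp0.le)
      exact ((huc j).sub continuousAt_const).abs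
    have h3 : pnormR p (u z - u z) = 0 := by
      simp [pnormR, hp0.ne']
    have h4 := h2.tendsto
    rwa [h3] at h4
  have key : ∀ ε : ℝ, 0 < ε → ‖z‖ + ε < 1 → gradPnormCR p u z ≤
      4 / Real.pi * ((1 - pnormR p (u z) ^ 2 + 6 * ε) / (1 - (‖z‖ + ε) ^ 2)) := by
    intro ε hε hzε
    obtain ⟨r0, hr0, hr0'⟩ := Metric.eventually_nhds_iff.1 (hcont.eventually (Iic_mem_nhds hε))
    set r := min r0 ε with hrdef
    have hrpos : 0 < r := lt_min hr0 hε
    have hr : ∀ w, ‖w - z‖ < r → pnormR p (u w - u z) ≤ ε := by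
      intro w hw
      exact hr0' (by rw [dist_eq_norm]; exact hw.trans_le (min_le_left _ _))
    unfold gradPnormCR
    refine Filter.limsup_le_of_le
      (Filter.isCoboundedUnder_le_of_le _ (x := 0) (fun w => by positivity)) ?_
    filter_upwards [self_mem_nhdsWithin, mem_nhdsWithin_of_mem_nhds (Metric.ball_mem_nhds z hrpos)]
      with w hw hwr
    have hwr' : ‖w - z‖ < r := by simpa [dist_eq_norm] using hwr
    have hwz : 0 < ‖w - z‖ := norm_pos_iff.2 (sub_ne_zero.2 hw)
    have hzz : ‖z - z‖ < r := by simpa using hrpos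
    rw [div_le_iff₀ hwz, abs_le]
    have t1 := two_point p hp u h hh hre hmap z ε r hε (min_le_right _ _) hzε hr z w hzz hwr'
    have t2 := two_point p hp u h hh hre hmap z ε r hε (min_le_right _ _) hzε hr w z hwr' hzz
    rw [norm_sub_rev z w] at t2
    exact ⟨by linarith, t1⟩
  have hs : 1 - ‖z‖ ^ 2 ≠ 0 := by nlinarith [norm_nonneg z]
  have hlim : Tendsto (fun ε : ℝ =>
      4 / Real.pi * ((1 - pnormR p (u z) ^ 2 + 6 * ε) / (1 - (‖z‖ + ε) ^ 2))) (𝓝[>] 0)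
      (𝓝 ((4 / Real.pi) * ((1 - pnormR p (u z) ^ 2) / (1 - ‖z‖ ^ 2)))) := by
    have hc : ContinuousAt (fun ε : ℝ =>
      4 / Real.pi * ((1 - pnormR p (u z) ^ 2 + 6 * ε) / (1 - (‖z‖ + ε) ^ 2))) 0 := by
      refine ContinuousAt.mul continuousAt_const (ContinuousAt.div ?_ ?_ (by simpa using hs))
      · fun_prop
      · fun_prop
    have := hc.tendsto
    simp only [mul_zero, add_zero] at this
    exact this.mono_left nhdsWithin_le_nhds
  refine ge_of_tendsto hlim ?_
  have : Set.Ioo (0 : ℝ) (1 - ‖z‖) ∈ 𝓝[>] (0 : ℝ) := Ioo_mem_nhdsGT (by linarith)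
  filter_upwards [this] with ε hε
  exact key ε hε.1 (by linarith [hε.2])
end

section
/- Let n ≥ 1 and let ν be a positive integer. If f = (f₁,…,f_ν) : 𝔹_{ℓ_∞ⁿ} → 𝔹_{ℓ₂^ν} is a pluriharmonic function on the unit polydisc, then for every z ∈ 𝔹_{ℓ_∞ⁿ}, Σ_{j=1}^{ν} Σ_{k=1}^{n} ( |∂f_j(z)/∂z_k|² + |∂f_j(z)/∂z̄_k|² ) (1 − |z_k|²)² ≤ 1 − ‖f(z)‖₂². -/
open scoped BigOperators

/-- The Euclidean (ℓ²) norm on `ℂ^ν`. -/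
noncomputable def eNorm2 {ν : ℕ} (w : Fin ν → ℂ) : ℝ :=
  Real.sqrt (∑ j, ‖w j‖ ^ 2)

lemma aux_signs {ι E : Type*} [DecidableEq ι] [NormedAddCommGroup E] [InnerProductSpace ℂ E]
    (a : ι → E) (s : Finset ι) :
    ∃ u : ι → ℂ, (∀ k, u k = 1 ∨ u k = -1) ∧
      ∑ k ∈ s, ‖a k‖ ^ 2 ≤ ‖∑ k ∈ s, u k • a k‖ ^ 2 := by
  induction s using Finset.induction_on with
  | empty => exact ⟨fun _ => 1, fun _ => Or.inl rfl, by simp⟩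
  | insert i s hi ih =>
    obtain ⟨u, hu, hle⟩ := ih
    have key : ∀ c : ℂ, ∑ k ∈ insert i s, (Function.update u i c) k • a k
        = c • a i + ∑ k ∈ s, u k • a k := by
      intro c
      rw [Finset.sum_insert hi, Function.update_self]
      congr 1
      refine Finset.sum_congr rfl fun k hk => ?_
      rw [Function.update_of_ne (by rintro rfl; exact hi hk)]
    have par := parallelogram_law_with_norm ℂ (∑ k ∈ s, u k • a k) (a i)
    rw [Finset.sum_insert hi]
    have hup : ∀ c : ℂ, (c = 1 ∨ c = -1) →
        ∀ k, Function.update u i c k = 1 ∨ Function.update u i c k = -1 := by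
      intro c hc k
      by_cases hk : k = i
      · subst hk; simpa using hc
      · rw [Function.update_of_ne hk]; exact hu k
    by_cases hc : ‖a i‖ ^ 2 + ∑ k ∈ s, ‖a k‖ ^ 2 ≤ ‖∑ k ∈ s, u k • a k + a i‖ ^ 2
    · refine ⟨Function.update u i 1, hup 1 (Or.inl rfl), ?_⟩
      rw [key, one_smul, add_comm (a i)]; exact hc
    · refine ⟨Function.update u i (-1), hup (-1) (Or.inr rfl), ?_⟩
      rw [key, neg_one_smul, neg_add_eq_sub]
      nlinarith

/-- maximum principle for the real part -/
lemma aux_max (Φ : ℂ → ℂ) (r M : ℝ) (hr : 0 < r)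
    (hd : DifferentiableOn ℂ Φ (Metric.closedBall 0 r))
    (hb : ∀ ζ : ℂ, ‖ζ‖ = r → (Φ ζ).re ≤ M) : (Φ 0).re ≤ M := by
  have h1 : DiffContOnCl ℂ (fun ζ => Complex.exp (Φ ζ)) (Metric.ball 0 r) := by
    apply DifferentiableOn.diffContOnCl
    rw [closure_ball _ hr.ne']
    exact hd.cexp
  have h2 := Complex.norm_le_of_forall_mem_frontier_norm_le (f := fun ζ => Complex.exp (Φ ζ))
    (C := Real.exp M) Metric.isBounded_ball h1 (by
      intro ζ hζ
      rw [frontier_ball _ hr.ne', mem_sphere_zero_iff_norm] at hζ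
      rw [Complex.norm_exp]
      exact Real.exp_le_exp.mpr (hb ζ hζ)) (z := 0) (subset_closure (Metric.mem_ball_self hr))
  rw [Complex.norm_exp] at h2
  exact Real.exp_le_exp.mp h2

/-- the auxiliary holomorphic function -/
noncomputable def auxPhi (H0 G0 b c : ℂ) (r : ℝ) (K L : ℂ → ℂ) (ζ : ℂ) : ℂ :=
  2 * ((H0 + ζ * K ζ) * (starRingEnd ℂ (H0 + starRingEnd ℂ G0) + starRingEnd ℂ c * ζ)
    + starRingEnd ℂ b * (r : ℂ) ^ 2 * K ζ + starRingEnd ℂ H0 * b * ζ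
    + (G0 + ζ * L ζ) * ((H0 + starRingEnd ℂ G0) + b * ζ)
    + c * (r : ℂ) ^ 2 * L ζ + starRingEnd ℂ G0 * starRingEnd ℂ c * ζ)
  - (((‖H0 + starRingEnd ℂ G0‖ ^ 2 + r ^ 2 * (‖b‖ ^ 2 + ‖c‖ ^ 2) : ℝ) : ℂ)
    + 2 * starRingEnd ℂ (H0 + starRingEnd ℂ G0) * b * ζ
    + 2 * (H0 + starRingEnd ℂ G0) * starRingEnd ℂ c * ζ
    + 2 * b * starRingEnd ℂ c * ζ ^ 2)

lemma auxPhi_zero (H0 G0 b c : ℂ) (r : ℝ) (K L : ℂ → ℂ) (hK : K 0 = b)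
    (hL : L 0 = starRingEnd ℂ c) :
    (auxPhi H0 G0 b c r K L 0).re
      = ‖H0 + starRingEnd ℂ G0‖ ^ 2 + r ^ 2 * (‖b‖ ^ 2 + ‖c‖ ^ 2) := by
  unfold auxPhi
  rw [hK, hL]
  simp only [← Complex.normSq_eq_norm_sq, Complex.normSq_apply, ← Complex.ofReal_pow]
  simp [pow_two]
  ring

lemma auxPhi_le (H0 G0 b c : ℂ) (r : ℝ) (K L : ℂ → ℂ) (ζ : ℂ) (hζ : ‖ζ‖ = r) :
    (auxPhi H0 G0 b c r K L ζ).re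
      ≤ ‖(H0 + ζ * K ζ) + starRingEnd ℂ (G0 + ζ * L ζ)‖ ^ 2 := by
  have hr : r ^ 2 = ζ.re * ζ.re + ζ.im * ζ.im := by
    rw [← hζ, ← Complex.normSq_eq_norm_sq, Complex.normSq_apply]
  have key : ‖(H0 + ζ * K ζ) + starRingEnd ℂ (G0 + ζ * L ζ)‖ ^ 2
      - (auxPhi H0 G0 b c r K L ζ).re
      = ‖(H0 + ζ * K ζ) + starRingEnd ℂ (G0 + ζ * L ζ)
          - ((H0 + starRingEnd ℂ G0) + b * ζ + c * starRingEnd ℂ ζ)‖ ^ 2 := by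
    unfold auxPhi
    generalize K ζ = k
    generalize L ζ = l
    simp only [← Complex.normSq_eq_norm_sq, Complex.normSq_apply, ← Complex.ofReal_pow, hr]
    simp [pow_two]
    ring
  have := sq_nonneg ‖(H0 + ζ * K ζ) + starRingEnd ℂ (G0 + ζ * L ζ)
          - ((H0 + starRingEnd ℂ G0) + b * ζ + c * starRingEnd ℂ ζ)‖
  linarith

lemma aux_disc {ν : ℕ} (H G : Fin ν → ℂ → ℂ)
    (hH : ∀ j, DifferentiableOn ℂ (H j) (Metric.ball 0 1))
    (hG : ∀ j, DifferentiableOn ℂ (G j) (Metric.ball 0 1))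
    (hb : ∀ ζ ∈ Metric.ball (0 : ℂ) 1, ∑ j, ‖H j ζ + starRingEnd ℂ (G j ζ)‖ ^ 2 ≤ 1) :
    ∑ j, ‖H j 0 + starRingEnd ℂ (G j 0)‖ ^ 2
      + ∑ j, (‖deriv (H j) 0‖ ^ 2 + ‖deriv (G j) 0‖ ^ 2) ≤ 1 := by
  have hds : ∀ (F : ℂ → ℂ) (ζ : ℂ), F ζ = F 0 + ζ * dslope F 0 ζ := by
    intro F ζ
    have := sub_smul_dslope F 0 ζ
    simp only [sub_zero, smul_eq_mul] at this
    rw [this]; ring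
  have hr : ∀ r ∈ Set.Ioo (0 : ℝ) 1, ∑ j, ‖H j 0 + starRingEnd ℂ (G j 0)‖ ^ 2
      + r ^ 2 * ∑ j, (‖deriv (H j) 0‖ ^ 2 + ‖deriv (G j) 0‖ ^ 2) ≤ 1 := by
    rintro r ⟨hr0, hr1⟩
    have hsub : Metric.closedBall (0 : ℂ) r ⊆ Metric.ball 0 1 :=
      Metric.closedBall_subset_ball hr1
    have hdd : ∀ F : ℂ → ℂ, DifferentiableOn ℂ F (Metric.ball 0 1) →
        DifferentiableOn ℂ (dslope F 0) (Metric.closedBall 0 r) := fun F hF =>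
      ((Complex.differentiableOn_dslope (Metric.ball_mem_nhds 0 one_pos)).mpr hF).mono hsub
    have := aux_max (fun ζ => ∑ j, auxPhi (H j 0) (G j 0) (deriv (H j) 0)
      (starRingEnd ℂ (deriv (G j) 0)) r (dslope (H j) 0) (dslope (G j) 0) ζ) r 1 hr0 (by
        refine DifferentiableOn.fun_sum fun j _ => ?_
        have h1 := hdd _ (hH j)
        have h2 := hdd _ (hG j)
        unfold auxPhi
        fun_prop) (by
        intro ζ hζ
        rw [Complex.re_sum]
        refine le_trans (Finset.sum_le_sum fun j _ => auxPhi_le _ _ _ _ _ _ _ ζ hζ) ?_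
        simp only [← hds]
        exact hb ζ (hsub (by simp [hζ])))
    rw [Complex.re_sum] at this
    simp only [auxPhi_zero _ _ _ _ _ _ _ (dslope_same _ _)
      ((dslope_same _ _).trans (Complex.conj_conj _).symm), RCLike.norm_conj] at this
    rwa [Finset.sum_add_distrib, ← Finset.mul_sum] at this
  have ht : Filter.Tendsto (fun r : ℝ => ∑ j, ‖H j 0 + starRingEnd ℂ (G j 0)‖ ^ 2
      + r ^ 2 * ∑ j, (‖deriv (H j) 0‖ ^ 2 + ‖deriv (G j) 0‖ ^ 2)) (nhdsWithin 1 (Set.Iio 1))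
      (nhds (∑ j, ‖H j 0 + starRingEnd ℂ (G j 0)‖ ^ 2
      + 1 ^ 2 * ∑ j, (‖deriv (H j) 0‖ ^ 2 + ‖deriv (G j) 0‖ ^ 2))) := by
    apply Filter.Tendsto.mono_left _ nhdsWithin_le_nhds
    apply Continuous.tendsto
    fun_prop
  rw [one_pow, one_mul] at ht
  refine le_of_tendsto ht ?_
  filter_upwards [Ioo_mem_nhdsLT (zero_lt_one (α := ℝ))] with r h using hr r h

lemma aux_den (a ζ u : ℂ) (ha : ‖a‖ < 1) (hζ : ‖ζ‖ < 1) (hu : u = 1 ∨ u = -1) :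
    1 + starRingEnd ℂ a * (u * ζ) ≠ 0 := by
  intro h
  have h1 : starRingEnd ℂ a * (u * ζ) = -1 := by linear_combination h
  have h2 := congrArg norm h1
  have hun : ‖u‖ = 1 := by rcases hu with rfl | rfl <;> simp
  rw [norm_mul, norm_mul, RCLike.norm_conj, hun, norm_neg, norm_one] at h2
  nlinarith [norm_nonneg a, norm_nonneg ζ]

lemma aux_mob (a ζ u : ℂ) (ha : ‖a‖ < 1) (hζ : ‖ζ‖ < 1) (hu : u = 1 ∨ u = -1) :
    ‖(u * ζ + a) / (1 + starRingEnd ℂ a * (u * ζ))‖ < 1 := by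
  have hd := aux_den a ζ u ha hζ hu
  rw [norm_div, div_lt_one (norm_pos_iff.mpr hd)]
  have hun : ‖u * ζ‖ = ‖ζ‖ := by rcases hu with rfl | rfl <;> simp
  rw [← hun] at hζ
  generalize u * ζ = w at *
  refine lt_of_pow_lt_pow_left₀ 2 (norm_nonneg _) ?_
  have e : ‖1 + starRingEnd ℂ a * w‖ ^ 2 - ‖w + a‖ ^ 2 = (1 - ‖a‖ ^ 2) * (1 - ‖w‖ ^ 2) := by
    simp only [← Complex.normSq_eq_norm_sq, Complex.normSq_apply]
    simp
    ring
  have : 0 < (1 - ‖a‖ ^ 2) * (1 - ‖w‖ ^ 2) := by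
    apply mul_pos <;> nlinarith [norm_nonneg a, norm_nonneg w]
  linarith

lemma aux_deriv (a u : ℂ) :
    HasDerivAt (fun ζ : ℂ => (u * ζ + a) / (1 + starRingEnd ℂ a * (u * ζ)))
      (u * ((1 - ‖a‖ ^ 2 : ℝ) : ℂ)) 0 := by
  have h1 : HasDerivAt (fun ζ : ℂ => u * ζ + a) u 0 := by
    simpa using ((hasDerivAt_id (0 : ℂ)).const_mul u).add_const a
  have h2 : HasDerivAt (fun ζ : ℂ => 1 + starRingEnd ℂ a * (u * ζ)) (starRingEnd ℂ a * u) 0 := by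
    simpa using (((hasDerivAt_id (0 : ℂ)).const_mul u).const_mul (starRingEnd ℂ a)).const_add 1
  have h3 := h1.div h2 (by simp)
  refine HasDerivAt.congr_deriv h3 ?_
  have := Complex.mul_conj' a
  simp
  linear_combination (-u) * this

theorem stmt3 (n ν : ℕ) (hn : 1 ≤ n) (hν : 1 ≤ ν)
    (f h g : (Fin n → ℂ) → (Fin ν → ℂ))
    -- the sup (ℓ^∞) norm on `Fin n → ℂ` is the Pi norm, so `Metric.ball 0 1` is the polydisc
    (hh : DifferentiableOn ℂ h (Metric.ball 0 1))
    (hg : DifferentiableOn ℂ g (Metric.ball 0 1))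
    (hg0 : g 0 = 0)
    (hfd : ∀ z ∈ Metric.ball (0 : Fin n → ℂ) 1,
      ∀ j, f z j = h z j + (starRingEnd ℂ) (g z j))
    (hmap : ∀ z ∈ Metric.ball (0 : Fin n → ℂ) 1, eNorm2 (f z) < 1)
    (z : Fin n → ℂ) (hz : z ∈ Metric.ball (0 : Fin n → ℂ) 1) :
    ∑ j, ∑ k,
        (‖fderiv ℂ h z (Pi.single k 1) j‖ ^ 2 + ‖fderiv ℂ g z (Pi.single k 1) j‖ ^ 2) *
          (1 - ‖z k‖ ^ 2) ^ 2
      ≤ 1 - eNorm2 (f z) ^ 2 := by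
  have hzk : ∀ k, ‖z k‖ < 1 := by
    intro k
    exact lt_of_le_of_lt (norm_le_pi_norm z k) (by simpa using hz)
  have hball : Metric.ball (0 : Fin n → ℂ) 1 ∈ nhds z := Metric.isOpen_ball.mem_nhds hz
  have hhz := (hh.differentiableAt hball).hasFDerivAt
  have hgz := (hg.differentiableAt hball).hasFDerivAt
  have hsum : ∀ w ∈ Metric.ball (0 : Fin n → ℂ) 1, eNorm2 (f w) ^ 2
      = ∑ j, ‖h w j + starRingEnd ℂ (g w j)‖ ^ 2 := by
    intro w hw
    unfold eNorm2
    rw [Real.sq_sqrt (by positivity)]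
    simp only [hfd w hw]
  let A : Fin n → EuclideanSpace ℂ (Fin ν ⊕ Fin ν) := fun k => WithLp.toLp 2
    (Sum.elim (fun j => ((1 - ‖z k‖ ^ 2 : ℝ) : ℂ) * fderiv ℂ h z (Pi.single k 1) j)
      (fun j => ((1 - ‖z k‖ ^ 2 : ℝ) : ℂ) * fderiv ℂ g z (Pi.single k 1) j))
  obtain ⟨u, hu, hle⟩ := aux_signs A Finset.univ
  let γ : ℂ → Fin n → ℂ := fun ζ k => (u k * ζ + z k) / (1 + starRingEnd ℂ (z k) * (u k * ζ))
  have hγ0 : γ 0 = z := by funext k; simp [γ]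
  have hγm : ∀ ζ ∈ Metric.ball (0 : ℂ) 1, γ ζ ∈ Metric.ball (0 : Fin n → ℂ) 1 := by
    intro ζ hζ
    rw [mem_ball_zero_iff] at hζ ⊢
    rw [pi_norm_lt_iff one_pos]
    exact fun k => aux_mob _ _ _ (hzk k) hζ (hu k)
  have hγd : DifferentiableOn ℂ γ (Metric.ball 0 1) := by
    rw [differentiableOn_pi]
    intro k
    refine DifferentiableOn.fun_div (by fun_prop) (by fun_prop) ?_
    intro ζ hζ
    rw [mem_ball_zero_iff] at hζ
    exact aux_den _ _ _ (hzk k) hζ (hu k)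
  have hγ' : HasDerivAt γ (fun k => u k * ((1 - ‖z k‖ ^ 2 : ℝ) : ℂ)) 0 := by
    rw [hasDerivAt_pi]
    exact fun k => aux_deriv (z k) (u k)
  have hcd : ∀ F : (Fin n → ℂ) → (Fin ν → ℂ), HasFDerivAt F (fderiv ℂ F z) z → ∀ j,
      deriv (fun ζ => F (γ ζ) j) 0
        = ∑ k, u k * (((1 - ‖z k‖ ^ 2 : ℝ) : ℂ) * fderiv ℂ F z (Pi.single k 1) j) := by
    intro F hF j
    rw [← hγ0] at hF
    have h1 := hF.comp_hasDerivAt (0 : ℂ) hγ'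
    rw [hγ0] at h1
    have h2 := (hasDerivAt_pi.mp h1 j).deriv
    refine Eq.trans h2 ?_
    rw [pi_eq_sum_univ' (fun k => u k * ((1 - ‖z k‖ ^ 2 : ℝ) : ℂ)), map_sum, Finset.sum_apply]
    refine Finset.sum_congr rfl fun k _ => ?_
    rw [map_smul, Pi.smul_apply, smul_eq_mul, mul_assoc]
  have main := aux_disc (fun j ζ => h (γ ζ) j) (fun j ζ => g (γ ζ) j)
    (fun j => (differentiableOn_pi.mp (hh.comp hγd hγm)) j)
    (fun j => (differentiableOn_pi.mp (hg.comp hγd hγm)) j)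
    (by
      intro ζ hζ
      rw [← hsum _ (hγm ζ hζ)]
      have h0 : 0 ≤ eNorm2 (f (γ ζ)) := Real.sqrt_nonneg _
      nlinarith [hmap _ (hγm ζ hζ)])
  simp only [hγ0] at main
  rw [← hsum z hz] at main
  simp only [hcd h hhz, hcd g hgz] at main
  have e1 : ∑ k, ‖A k‖ ^ 2 = ∑ j, ∑ k,
        (‖fderiv ℂ h z (Pi.single k 1) j‖ ^ 2 + ‖fderiv ℂ g z (Pi.single k 1) j‖ ^ 2) *
          (1 - ‖z k‖ ^ 2) ^ 2 := by
    rw [Finset.sum_comm]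
    refine Finset.sum_congr rfl fun k _ => ?_
    rw [EuclideanSpace.norm_sq_eq, Fintype.sum_sum_type, ← Finset.sum_add_distrib]
    refine Finset.sum_congr rfl fun j _ => ?_
    simp only [A, Sum.elim_inl, Sum.elim_inr, norm_mul, mul_pow, Complex.norm_real,
      Real.norm_eq_abs, sq_abs]
    ring
  have e2 : ‖∑ k, u k • A k‖ ^ 2 = ∑ j,
      (‖∑ k, u k * (((1 - ‖z k‖ ^ 2 : ℝ) : ℂ) * fderiv ℂ h z (Pi.single k 1) j)‖ ^ 2
      + ‖∑ k, u k * (((1 - ‖z k‖ ^ 2 : ℝ) : ℂ) * fderiv ℂ g z (Pi.single k 1) j)‖ ^ 2) := by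
    rw [EuclideanSpace.norm_sq_eq, Fintype.sum_sum_type, ← Finset.sum_add_distrib]
    simp [A]
  rw [e1, e2] at hle
  linarith
end
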